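/- There exists an absolute constant c > 0 such that for every d > 0, every graph G with average degree at least d contains a balanced subdivision of the complete graph K_k for some integer k ≥ c·√d. -/

import Mathlib

open scoped BigOperators

/-- The average degree of a graph `G`: `(1/|G|) * sum of degrees`. -/
noncomputable def avgDeg {V : Type*} (G : SimpleGraph V) : Real :=
  (finsum fun v : V => ((G.neighborSet v).ncard : Real)) / (Nat.card V : Real)

/-- `S` is the vertex set of a copy of `TK_t^(l)` in `G`: a balanced subdivision of the
complete graph `K_t` in which each edge is replaced by a path with `l` internal vertices
(i.e. of length `l + 1`); the paths are pairwise internally vertex disjoint. -/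
def IsTK {V : Type*} (G : SimpleGraph V) (t l : Nat) (S : Set V) : Prop :=
  ∃ b : Fin t → V, Function.Injective b ∧
    ∃ P : ∀ i j : Fin t, i < j → G.Walk (b i) (b j),
      (∀ i j (h : i < j), (P i j h).IsPath) ∧
      (∀ i j (h : i < j), (P i j h).length = l + 1) ∧
      (∀ i j (h : i < j), ∀ i' j' (h' : i' < j'), (i, j) ≠ (i', j') →
        ∀ v : V, v ∈ (P i j h).support → v ∈ (P i' j' h').support →
          (v = b i ∨ v = b j) ∧ (v = b i' ∨ v = b j')) ∧
      S = {v : V | ∃ (i j : Fin t) (h : i < j), v ∈ (P i j h).support}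

/-- `G` contains a copy of `TK_t^(l)`. -/
def HasTK {V : Type*} (G : SimpleGraph V) (t l : Nat) : Prop :=
  ∃ S : Set V, IsTK G t l S

noncomputable section Part1
open Finset
namespace BTK
open Classical

section LLL
variable {E Ω : Type} [Fintype E] [Fintype Ω]

/-- product weight -/
def pw (μ : E → Ω → ℝ) (f : E → Ω) : ℝ := ∏ e, μ e (f e)

lemma pw_update (μ : E → Ω → ℝ) (f : E → Ω) (e : E) (x : Ω) :
    pw μ (Function.update f e x) * μ e (f e) = pw μ f * μ e x := by
  unfold pw
  rw [← Finset.mul_prod_erase univ _ (Finset.mem_univ e),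
    ← Finset.mul_prod_erase univ (fun e => μ e (f e)) (Finset.mem_univ e)]
  have : ∏ e' ∈ univ.erase e, μ e' (Function.update f e x e') =
      ∏ e' ∈ univ.erase e, μ e' (f e') := by
    apply Finset.prod_congr rfl
    intro e' he'
    rw [Function.update_of_ne (Finset.ne_of_mem_erase he')]
  rw [this]
  simp
  ring

lemma resample (μ : E → Ω → ℝ) (h1 : ∀ e, ∑ x, μ e x = 1) (e : E) (g : (E → Ω) → ℝ) :
    ∑ f, pw μ f * g f = ∑ f, pw μ f * ∑ x, μ e x * g (Function.update f e x) := by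
  have hL : ∑ f, pw μ f * g f = ∑ p : (E → Ω) × Ω, pw μ p.1 * μ e p.2 * g p.1 := by
    rw [Fintype.sum_prod_type]
    apply Finset.sum_congr rfl
    intro f _
    simp only
    rw [← Finset.sum_mul, ← Finset.mul_sum, h1, mul_one]
  have hR : ∑ f, pw μ f * ∑ x, μ e x * g (Function.update f e x) =
      ∑ p : (E → Ω) × Ω, pw μ p.1 * μ e p.2 * g (Function.update p.1 e p.2) := by
    rw [Fintype.sum_prod_type]
    apply Finset.sum_congr rfl
    intro f _
    rw [Finset.mul_sum]
    apply Finset.sum_congr rfl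
    intro x _
    ring
  rw [hL, hR]
  let σ : (E → Ω) × Ω → (E → Ω) × Ω := fun p => (Function.update p.1 e p.2, p.1 e)
  have hσ : Function.Involutive σ := by
    intro p
    simp [σ]
  apply Fintype.sum_equiv (hσ.toPerm)
  intro p
  have h2 := pw_update μ p.1 e p.2
  simp only [Function.Involutive.coe_toPerm, σ, Function.update_idem, Function.update_eq_self]
  rw [h2]

/-- no conflicts inside `S` -/
def good (conf : Ω → Ω → Prop) (S : Finset E) (f : E → Ω) : Prop :=
  ∀ e ∈ S, ∀ e' ∈ S, e ≠ e' → ¬ conf (f e) (f e')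

def ZZ (μ : E → Ω → ℝ) (conf : Ω → Ω → Prop) (S : Finset E) : ℝ :=
  ∑ f, pw μ f * (if good conf S f then 1 else 0)

lemma good_update (conf : Ω → Ω → Prop) (S : Finset E) (f : E → Ω) (e : E) (he : e ∉ S) (x : Ω) :
    good conf S (Function.update f e x) ↔ good conf S f := by
  unfold good
  apply forall₂_congr; intro a ha
  apply forall₂_congr; intro b hb
  rw [Function.update_of_ne (by rintro rfl; exact he ha),
    Function.update_of_ne (by rintro rfl; exact he hb)]

lemma indep2 (μ : E → Ω → ℝ) (h1 : ∀ e, ∑ x, μ e x = 1) (conf : Ω → Ω → Prop)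
    (S : Finset E) (e e' : E) (hne : e ≠ e') (he : e ∉ S) (he' : e' ∉ S) :
    ∑ f, pw μ f * ((if good conf S f then 1 else 0) * (if conf (f e) (f e') then 1 else 0)) =
      ZZ μ conf S * ∑ x, μ e x * ∑ x', μ e' x' * (if conf x x' then 1 else 0) := by
  rw [resample μ h1 e']
  simp only [good_update conf S _ e' he', Function.update_of_ne hne, Function.update_self]
  rw [resample μ h1 e]
  simp only [good_update conf S _ e he, Function.update_self]
  unfold ZZ
  rw [Finset.sum_mul]
  apply Finset.sum_congr rfl
  intro f _
  rw [mul_assoc]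
  congr 1
  rw [Finset.mul_sum]
  apply Finset.sum_congr rfl
  intro x _
  rw [Finset.mul_sum, Finset.mul_sum, Finset.mul_sum]
  apply Finset.sum_congr rfl
  intro x' _
  ring

lemma pw_nonneg (μ : E → Ω → ℝ) (h0 : ∀ e x, 0 ≤ μ e x) (f : E → Ω) : 0 ≤ pw μ f :=
  Finset.prod_nonneg (fun e _ => h0 e _)

lemma ZZ_step (μ : E → Ω → ℝ) (h0 : ∀ e x, 0 ≤ μ e x) (h1 : ∀ e, ∑ x, μ e x = 1)
    (conf : Ω → Ω → Prop) (hsymm : ∀ x y, conf x y → conf y x)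
    (hyp : ∀ e x, 0 < μ e x →
      ∑ e' ∈ univ.erase e, ∑ x', μ e' x' * (if conf x x' then 1 else 0) ≤ 1 / 4) :
    ∀ n : ℕ, ∀ S : Finset E, #S = n → 0 < ZZ μ conf S ∧
      ∀ e ∉ S, ZZ μ conf S ≤ 2 * ZZ μ conf (insert e S) := by
  intro n
  induction n using Nat.strong_induction_on with
  | _ n ih =>
  intro S hS
  have hpos : 0 < ZZ μ conf S := by
    rcases S.eq_empty_or_nonempty with rfl | ⟨e, he⟩
    · have : ZZ μ conf (∅ : Finset E) = 1 := by
        unfold ZZ good pw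
        simp
        rw [← Fintype.prod_sum]
        simp [h1]
      rw [this]; norm_num
    · have hc : #(S.erase e) < n := by
        rw [Finset.card_erase_of_mem he]
        have := Finset.card_pos.mpr ⟨e, he⟩
        omega
      obtain ⟨p1, p2⟩ := ih _ hc _ rfl
      have := p2 e (Finset.notMem_erase e S)
      rw [Finset.insert_erase he] at this
      linarith
  refine ⟨hpos, ?_⟩
  intro e he
  -- main inequality
  have key : ∀ f : E → Ω, (if good conf S f then (1:ℝ) else 0) ≤
      (if good conf (insert e S) f then 1 else 0) +
        ∑ e' ∈ S, (if good conf (S.erase e') f then 1 else 0) *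
          (if conf (f e) (f e') then 1 else 0) := by
    intro f
    have hnn : ∀ e' ∈ S, (0:ℝ) ≤ (if good conf (S.erase e') f then 1 else 0) *
          (if conf (f e) (f e') then 1 else 0) := by
      intro e' _
      split_ifs <;> norm_num
    by_cases hg : good conf S f
    · rw [if_pos hg]
      by_cases hg2 : good conf (insert e S) f
      · rw [if_pos hg2]
        have := Finset.sum_nonneg hnn
        linarith
      · rw [if_neg hg2, zero_add]
        have : ∃ e' ∈ S, conf (f e) (f e') := by
          by_contra hcon
          push Not at hcon
          apply hg2
          intro a ha b hb hab
          rw [Finset.mem_insert] at ha hb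
          rcases ha with rfl | ha <;> rcases hb with rfl | hb
          · exact absurd rfl hab
          · exact hcon b hb
          · exact fun h => hcon a ha (hsymm _ _ h)
          · exact hg a ha b hb hab
        obtain ⟨e', he', hcf⟩ := this
        refine le_trans ?_ (Finset.single_le_sum hnn he')
        rw [if_pos hcf, if_pos]
        · norm_num
        · intro a ha b hb
          exact hg a (Finset.mem_of_mem_erase ha) b (Finset.mem_of_mem_erase hb)
    · rw [if_neg hg]
      have := Finset.sum_nonneg hnn
      split_ifs <;> linarith
  have h2 : ZZ μ conf S ≤ ZZ μ conf (insert e S) +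
      ∑ e' ∈ S, ZZ μ conf (S.erase e') *
        ∑ x, μ e x * ∑ x', μ e' x' * (if conf x x' then 1 else 0) := by
    calc ZZ μ conf S ≤ ∑ f, pw μ f * ((if good conf (insert e S) f then 1 else 0) +
        ∑ e' ∈ S, (if good conf (S.erase e') f then 1 else 0) *
          (if conf (f e) (f e') then 1 else 0)) :=
          Finset.sum_le_sum (fun f _ => mul_le_mul_of_nonneg_left (key f) (pw_nonneg μ h0 f))
      _ = _ := by
        simp only [mul_add, Finset.sum_add_distrib]
        congr 1
        simp only [Finset.mul_sum]
        rw [Finset.sum_comm]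
        apply Finset.sum_congr rfl
        intro e' he'
        rw [indep2 μ h1 conf (S.erase e') e e' (by rintro rfl; exact he he')
          (fun h => he (Finset.mem_of_mem_erase h)) (Finset.notMem_erase _ _)]
        simp only [Finset.mul_sum]
  have h3 : ∑ e' ∈ S, ZZ μ conf (S.erase e') *
        ∑ x, μ e x * ∑ x', μ e' x' * (if conf x x' then 1 else 0) ≤
      2 * ZZ μ conf S * (1 / 4) := by
    calc _ ≤ ∑ e' ∈ S, 2 * ZZ μ conf S *
        ∑ x, μ e x * ∑ x', μ e' x' * (if conf x x' then 1 else 0) := by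
          apply Finset.sum_le_sum
          intro e' he'
          apply mul_le_mul_of_nonneg_right
          · have hc : #(S.erase e') < n := by
              rw [Finset.card_erase_of_mem he']
              have := Finset.card_pos.mpr ⟨e', he'⟩
              omega
            have := (ih _ hc _ rfl).2 e' (Finset.notMem_erase e' S)
            rwa [Finset.insert_erase he'] at this
          · apply Finset.sum_nonneg
            intro x _
            apply mul_nonneg (h0 _ _)
            apply Finset.sum_nonneg
            intro x' _
            apply mul_nonneg (h0 _ _)
            split_ifs <;> norm_num
      _ = 2 * ZZ μ conf S * ∑ x, μ e x *
            ∑ e' ∈ S, ∑ x', μ e' x' * (if conf x x' then 1 else 0) := by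
          rw [← Finset.mul_sum]
          congr 1
          rw [Finset.sum_comm]
          apply Finset.sum_congr rfl
          intro x _
          rw [Finset.mul_sum]
      _ ≤ 2 * ZZ μ conf S * ∑ x, μ e x * (1 / 4) := by
          apply mul_le_mul_of_nonneg_left _ (by linarith)
          apply Finset.sum_le_sum
          intro x _
          rcases (h0 e x).eq_or_lt with h | h
          · rw [← h]; simp
          · apply mul_le_mul_of_nonneg_left _ h.le
            refine le_trans ?_ (hyp e x h)
            apply Finset.sum_le_sum_of_subset_of_nonneg
            · intro a ha
              rw [Finset.mem_erase]
              exact ⟨by rintro rfl; exact he ha, Finset.mem_univ _⟩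
            · intro a _ _
              apply Finset.sum_nonneg
              intro x' _
              apply mul_nonneg (h0 _ _)
              split_ifs <;> norm_num
      _ = 2 * ZZ μ conf S * (1 / 4) := by
          rw [← Finset.sum_mul, h1, one_mul]
  linarith

theorem lll (μ : E → Ω → ℝ) (h0 : ∀ e x, 0 ≤ μ e x) (h1 : ∀ e, ∑ x, μ e x = 1)
    (conf : Ω → Ω → Prop) (hsymm : ∀ x y, conf x y → conf y x)
    (hyp : ∀ e x, 0 < μ e x →
      ∑ e' ∈ univ.erase e, ∑ x', μ e' x' * (if conf x x' then 1 else 0) ≤ 1 / 4) :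
    ∃ f : E → Ω, (∀ e, 0 < μ e (f e)) ∧ ∀ e e', e ≠ e' → ¬ conf (f e) (f e') := by
  have hpos := (ZZ_step μ h0 h1 conf hsymm hyp _ univ rfl).1
  unfold ZZ at hpos
  obtain ⟨f, _, hf⟩ := Finset.exists_lt_of_sum_lt (s := univ) (f := fun _ : E → Ω => (0:ℝ))
    (g := fun f => pw μ f * (if good conf univ f then 1 else 0)) (by simpa using hpos)
  refine ⟨f, ?_, ?_⟩
  · intro e
    rcases (h0 e (f e)).eq_or_lt with h | h
    · exfalso
      have : pw μ f = 0 := Finset.prod_eq_zero (Finset.mem_univ e) h.symm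
      rw [this] at hf; simp at hf
    · exact h
  · by_cases hg : good conf univ f
    · intro e e' h
      exact hg e (Finset.mem_univ _) e' (Finset.mem_univ _) h
    · rw [if_neg hg] at hf; simp at hf

end LLL
end BTK
end Part1

noncomputable section Part2
open Finset
namespace BTK
open Classical

section SEL
variable {E V : Type} [Fintype E] [Fintype V]

/-- load of a fractional selection -/
def load (μ : E → Finset V → ℝ) (v : V) : ℝ := ∑ e, ∑ I, μ e I * (if v ∈ I then 1 else 0)

/-- feasible fractional selections -/
def feas (F : E → Finset (Finset V)) : Set (E → Finset V → ℝ) :=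
  {μ | (∀ e I, 0 ≤ μ e I) ∧ (∀ e, ∑ I, μ e I = 1) ∧ ∀ e I, I ∉ F e → μ e I = 0}

lemma feas_compact (F : E → Finset (Finset V)) : IsCompact (feas F) := by
  have h1 : IsCompact (Set.Icc (0 : E → Finset V → ℝ) 1) := isCompact_Icc
  apply h1.of_isClosed_subset
  · unfold feas
    simp only [Set.ofPred_and, Set.ofPred_forall]
    refine IsClosed.inter ?_ (IsClosed.inter ?_ ?_)
    · refine isClosed_iInter fun e => isClosed_iInter fun I => isClosed_le (by fun_prop) (by fun_prop)
    · refine isClosed_iInter fun e => isClosed_eq (by fun_prop) (by fun_prop)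
    · refine isClosed_iInter fun e => isClosed_iInter fun I => isClosed_iInter fun _ =>
        isClosed_eq (by fun_prop) (by fun_prop)
  · rintro μ ⟨h0, h1, -⟩
    refine ⟨fun e I => h0 e I, fun e I => ?_⟩
    have := Finset.single_le_sum (f := μ e) (fun I _ => h0 e I) (Finset.mem_univ I)
    rw [h1] at this
    exact this

lemma load_nonneg {μ : E → Finset V → ℝ} (h : ∀ e I, 0 ≤ μ e I) (v : V) : 0 ≤ load μ v := by
  unfold load
  refine Finset.sum_nonneg fun e _ => Finset.sum_nonneg fun I _ => mul_nonneg (h e I) ?_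
  split_ifs <;> norm_num

lemma sum_load (μ : E → Finset V → ℝ) (g : V → ℝ) :
    ∑ v, load μ v * g v = ∑ e, ∑ I, μ e I * ∑ v ∈ I, g v := by
  unfold load
  simp only [Finset.sum_mul]
  rw [Finset.sum_comm]
  refine Finset.sum_congr rfl fun e _ => ?_
  rw [Finset.sum_comm]
  refine Finset.sum_congr rfl fun I _ => ?_
  rw [Finset.mul_sum, ← Finset.sum_filter_add_sum_filter_not univ (fun v => v ∈ I)]
  have h1 : ∑ x with x ∉ I, μ e I * (if x ∈ I then 1 else 0) * g x = 0 := by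
    refine Finset.sum_eq_zero fun x hx => ?_
    rw [Finset.mem_filter] at hx
    simp [hx.2]
  rw [h1, add_zero]
  have : (univ.filter fun v => v ∈ I) = I := by ext; simp
  rw [this]
  refine Finset.sum_congr rfl fun x hx => ?_
  simp [hx]

lemma first_order (F : E → Finset (Finset V)) (μ : E → Finset V → ℝ) (hμ : μ ∈ feas F)
    (hmin : ∀ ν ∈ feas F, ∑ v, load μ v ^ 2 ≤ ∑ v, load ν v ^ 2)
    (e : E) (I0 I : Finset V) (hI0 : 0 < μ e I0) (hI : I ∈ F e) :
    ∑ v ∈ I0, load μ v ≤ ∑ v ∈ I, load μ v := by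
  obtain ⟨h0, h1, h2⟩ := hμ
  by_cases hne : I = I0
  · rw [hne]
  set d : V → ℝ := fun v => (if v ∈ I then 1 else 0) - (if v ∈ I0 then 1 else 0) with hd
  have hI0F : I0 ∈ F e := by
    by_contra h; have := h2 e I0 h; linarith
  have key : ∀ δ : ℝ, 0 < δ → δ ≤ μ e I0 →
      0 ≤ 2 * (∑ v, load μ v * d v) + δ * ∑ v, d v ^ 2 := by
    intro δ hδ hδ1
    set ν : E → Finset V → ℝ := fun e' J => μ e' J +
      if e' = e then ((if J = I then δ else 0) - (if J = I0 then δ else 0)) else 0 with hν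
    have hνf : ν ∈ feas F := by
      refine ⟨?_, ?_, ?_⟩
      · intro e' J
        have := h0 e' J
        simp only [hν]
        split_ifs with a b c c
        · exact absurd (b.symm.trans c) hne
        · linarith
        · subst a c; linarith
        · linarith
        · linarith
      · intro e'
        simp only [hν]
        rw [Finset.sum_add_distrib, h1]
        split_ifs with a
        · rw [Finset.sum_sub_distrib]; simp
        · simp
      · intro e' J hJ
        simp only [hν]
        rw [h2 e' J hJ]
        split_ifs with a b c c
        · subst a b; exact absurd hI hJ
        · subst a b; exact absurd hI hJ
        · subst a c; exact absurd hI0F hJ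
        · simp
        · simp
    have hl : ∀ v, load ν v = load μ v + δ * d v := by
      intro v
      unfold load
      simp only [hν, add_mul, Finset.sum_add_distrib, ite_mul, zero_mul]
      congr 1
      have : ∀ x : E, (∑ x_1 : Finset V, if x = e then ((if x_1 = I then δ else 0) - if x_1 = I0 then δ else 0) * (if v ∈ x_1 then (1:ℝ) else 0) else 0) = if x = e then (∑ x_1 : Finset V, ((if x_1 = I then δ else 0) - if x_1 = I0 then δ else 0) * (if v ∈ x_1 then (1:ℝ) else 0)) else 0 := by
        intro x; split_ifs <;> simp
      simp only [this]
      rw [Finset.sum_ite_eq' univ e]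
      simp only [Finset.mem_univ, if_true, sub_mul, Finset.sum_sub_distrib, hd, mul_sub]
      simp only [ite_mul, zero_mul, Finset.sum_ite_eq', Finset.mem_univ, if_true]
    have := hmin ν hνf
    simp only [hl] at this
    have h3 : ∑ v, (load μ v + δ * d v) ^ 2 =
        ∑ v, load μ v ^ 2 + δ * (2 * (∑ v, load μ v * d v) + δ * ∑ v, d v ^ 2) := by
      rw [mul_add, ← mul_assoc, ← mul_assoc, Finset.mul_sum, Finset.mul_sum,
        ← Finset.sum_add_distrib, ← Finset.sum_add_distrib]
      refine Finset.sum_congr rfl fun v _ => ?_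
      ring
    rw [h3] at this
    have h4 : 0 ≤ δ * (2 * (∑ v, load μ v * d v) + δ * ∑ v, d v ^ 2) := by linarith
    exact nonneg_of_mul_nonneg_right h4 hδ
  have hdd : ∑ v, load μ v * d v = ∑ v ∈ I, load μ v - ∑ v ∈ I0, load μ v := by
    simp only [hd, mul_sub, Finset.sum_sub_distrib, mul_ite, mul_one, mul_zero,
      Finset.sum_ite_mem, Finset.univ_inter]
  by_contra hcon
  push Not at hcon
  set M := ∑ v, d v ^ 2
  have hM : 0 ≤ M := Finset.sum_nonneg fun v _ => sq_nonneg _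
  set g := ∑ v ∈ I0, load μ v - ∑ v ∈ I, load μ v
  have hg : 0 < g := by simp only [g]; linarith
  have hδ : 0 < min (μ e I0) (g / (M + 1)) := lt_min hI0 (by positivity)
  have := key _ hδ (min_le_left _ _)
  have h5 : min (μ e I0) (g / (M + 1)) * M ≤ g / (M + 1) * M :=
    mul_le_mul_of_nonneg_right (min_le_right _ _) hM
  have h6 : g / (M + 1) * M ≤ g := by
    rw [div_mul_eq_mul_div, div_le_iff₀ (by positivity)]
    nlinarith
  rw [hdd] at this
  simp only [g] at *
  linarith

theorem sel (F : E → Finset (Finset V)) (B C : ℝ) (hB : 0 < B) (hC : 0 ≤ C)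
    (hyp : ∀ w : V → ℝ, (∀ v, 0 ≤ w v) → ∑ v, w v ^ 2 ≤ B → ∀ e, ∃ I ∈ F e, ∑ v ∈ I, w v ≤ C)
    (hk : 4 * (Fintype.card E : ℝ) * C ^ 2 ≤ B) :
    ∃ f : E → Finset V, (∀ e, f e ∈ F e) ∧ ∀ e e', e ≠ e' → Disjoint (f e) (f e') := by
  have hne : (feas F).Nonempty := by
    choose I hI _ using hyp (fun _ => 0) (fun _ => le_refl _) (by simpa using hB.le)
    refine ⟨fun e J => if J = I e then 1 else 0, ?_, ?_, ?_⟩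
    · intro e J; dsimp only; split_ifs <;> norm_num
    · intro e; simp
    · intro e J hJ
      dsimp only
      rw [if_neg]
      rintro rfl; exact hJ (hI e)
  have hcont : ContinuousOn (fun μ : E → Finset V → ℝ => ∑ v, load μ v ^ 2) (feas F) := by
    apply Continuous.continuousOn
    unfold load
    fun_prop
  obtain ⟨μ, hμ, hmin⟩ := (feas_compact F).exists_isMinOn hne hcont
  have hmin' : ∀ ν ∈ feas F, ∑ v, load μ v ^ 2 ≤ ∑ v, load ν v ^ 2 := fun ν hν => hmin hν
  have hfo := first_order F μ hμ hmin'
  obtain ⟨h0, h1, h2⟩ := hμ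
  have hl0 := load_nonneg h0
  have hload : ∀ e I0, 0 < μ e I0 → ∑ v ∈ I0, load μ v ≤ 1 / 4 := by
    set Q := ∑ v, load μ v ^ 2 with hQ
    have hQ0 : 0 ≤ Q := Finset.sum_nonneg fun v _ => sq_nonneg _
    rcases hQ0.eq_or_lt with hz | hpos
    · intro e I0 _
      have : ∀ v, load μ v = 0 := by
        intro v
        have := (Finset.sum_eq_zero_iff_of_nonneg (fun v _ => sq_nonneg (load μ v))).1 hz.symm v
          (Finset.mem_univ _)
        exact pow_eq_zero_iff (two_ne_zero) |>.1 this
      simp [this]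
    set s := Real.sqrt (B / Q) with hs
    have hs0 : 0 < s := Real.sqrt_pos.2 (by positivity)
    have hs2 : s ^ 2 * Q = B := by
      rw [hs, Real.sq_sqrt (by positivity)]; field_simp
    have hb : ∀ e I0, 0 < μ e I0 → s * ∑ v ∈ I0, load μ v ≤ C := by
      intro e I0 hI0
      obtain ⟨I, hI, hIC⟩ := hyp (fun v => s * load μ v) (fun v => mul_nonneg hs0.le (hl0 v))
        (by simp only [mul_pow]; rw [← Finset.mul_sum, ← hQ, hs2]) e
      rw [← Finset.mul_sum] at hIC
      exact le_trans (mul_le_mul_of_nonneg_left (hfo e I0 I hI0 hI) hs0.le) hIC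
    have hQE : s * Q ≤ Fintype.card E * C := by
      have : Q = ∑ e, ∑ I, μ e I * ∑ v ∈ I, load μ v := by
        rw [← sum_load, hQ]
        exact Finset.sum_congr rfl fun v _ => sq _
      rw [this, Finset.mul_sum]
      have : ∀ e ∈ (univ : Finset E), s * ∑ I, μ e I * ∑ v ∈ I, load μ v ≤ C := by
        intro e _
        rw [Finset.mul_sum]
        calc ∑ I, s * (μ e I * ∑ v ∈ I, load μ v) ≤ ∑ I, μ e I * C := by
              refine Finset.sum_le_sum fun I _ => ?_
              rcases (h0 e I).eq_or_lt with h | h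
              · rw [← h]; simp
              · have := mul_le_mul_of_nonneg_left (hb e I h) h.le
                linarith
          _ = C := by rw [← Finset.sum_mul, h1, one_mul]
      calc _ ≤ ∑ e : E, C := Finset.sum_le_sum this
        _ = _ := by simp
    intro e I0 hI0
    have h3 := hb e I0 hI0
    have h4 : B ≤ s * (Fintype.card E * C) := by
      rw [← hs2, sq, mul_assoc]; exact mul_le_mul_of_nonneg_left hQE hs0.le
    set x := ∑ v ∈ I0, load μ v
    have hx0 : 0 ≤ x := Finset.sum_nonneg fun v _ => hl0 v
    have h5 : B * x ≤ (Fintype.card E * C) * C := by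
      calc B * x ≤ s * (Fintype.card E * C) * x := mul_le_mul_of_nonneg_right h4 hx0
        _ = (Fintype.card E * C) * (s * x) := by ring
        _ ≤ _ := mul_le_mul_of_nonneg_left h3 (by positivity)
    nlinarith
  obtain ⟨f, hf1, hf2⟩ := lll μ h0 h1 (fun I J => ¬ Disjoint I J)
    (fun I J h => fun h' => h h'.symm) (by
      intro e I hI
      refine le_trans ?_ (hload e I hI)
      have : ∑ v ∈ I, load μ v = ∑ e', ∑ J, μ e' J * ∑ v ∈ J, (if v ∈ I then 1 else 0) := by
        rw [← sum_load]
        simp [Finset.sum_ite_mem]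
      rw [this]
      refine le_trans (Finset.sum_le_sum_of_subset_of_nonneg (Finset.subset_univ (univ.erase e)) ?_) ?_
      · intro e' _ _
        refine Finset.sum_nonneg fun J _ => mul_nonneg (h0 _ _) ?_
        split_ifs <;> norm_num
      refine Finset.sum_le_sum fun e' _ => Finset.sum_le_sum fun J _ => ?_
      refine mul_le_mul_of_nonneg_left ?_ (h0 _ _)
      have hnn : ∀ v ∈ J, (0:ℝ) ≤ (if v ∈ I then 1 else 0) := by
        intro v _; split_ifs <;> norm_num
      split_ifs with h
      · exact Finset.sum_nonneg hnn
      · rw [Finset.not_disjoint_iff] at h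
        obtain ⟨v, hv1, hv2⟩ := h
        have := Finset.single_le_sum hnn hv2
        simpa [hv1] using this)
  refine ⟨f, fun e => ?_, fun e e' h => ?_⟩
  · by_contra h
    have := h2 e (f e) h
    have := hf1 e
    linarith
  · exact not_not.1 (hf2 e e' h)

end SEL
end BTK
end Part2

noncomputable section Part3
open Finset
namespace BTK
open Classical

section TK

/-- function form of a balanced subdivision -/
def TKf {V : Type} (G : SimpleGraph V) (k l : ℕ) : Prop :=
  ∃ b : Fin k → V, Function.Injective b ∧ ∃ p : Fin k → Fin k → ℕ → V,
    (∀ i j, i < j → p i j 0 = b i ∧ p i j (l + 1) = b j ∧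
      (∀ s ≤ l, G.Adj (p i j s) (p i j (s + 1))) ∧
      (∀ s ≤ l + 1, ∀ s' ≤ l + 1, p i j s = p i j s' → s = s')) ∧
    ∀ i j i' j', i < j → i' < j' → (i, j) ≠ (i', j') → ∀ s ≤ l + 1, ∀ s' ≤ l + 1,
      p i j s = p i' j' s' → (s = 0 ∨ s = l + 1) ∧ (s' = 0 ∨ s' = l + 1)

lemma walk_of {V : Type} (G : SimpleGraph V) (p : ℕ → V) (n : ℕ)
    (h : ∀ s < n, G.Adj (p s) (p (s + 1))) :
    ∃ w : G.Walk (p 0) (p n), w.length = n ∧ w.support = (List.range (n + 1)).map p := by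
  induction n with
  | zero => exact ⟨SimpleGraph.Walk.nil, by simp, by simp⟩
  | succ n ih =>
    obtain ⟨w, h1, h2⟩ := ih (fun s hs => h s (by omega))
    refine ⟨w.concat (h n (by omega)), by simp [h1], ?_⟩
    rw [SimpleGraph.Walk.support_concat, h2, List.range_succ (n := n + 1)]
    simp

lemma TKf.hasTK {V : Type} {G : SimpleGraph V} {k l : ℕ} (h : TKf G k l) : HasTK G k l := by
  obtain ⟨b, hb, p, hp, hd⟩ := h
  have key : ∀ i j, i < j → ∃ w : G.Walk (b i) (b j), w.length = l + 1 ∧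
      w.support = (List.range (l + 2)).map (p i j) := by
    intro i j hij
    obtain ⟨h0, h1, h2, h3⟩ := hp i j hij
    obtain ⟨w, hw1, hw2⟩ := walk_of G (p i j) (l + 1) (fun s hs => h2 s (by omega))
    exact ⟨w.copy h0 h1, by simpa using hw1, by simpa using hw2⟩
  choose P hP1 hP2 using key
  refine ⟨_, b, hb, P, ?_, hP1, ?_, rfl⟩
  · intro i j hij
    rw [SimpleGraph.Walk.isPath_def, hP2]
    refine List.Nodup.map_on ?_ List.nodup_range
    intro s hs s' hs' heq
    rw [List.mem_range] at hs hs'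
    exact (hp i j hij).2.2.2 s (by omega) s' (by omega) heq
  · intro i j hij i' j' hij' hne v hv hv'
    rw [hP2, List.mem_map] at hv hv'
    obtain ⟨s, hs, rfl⟩ := hv
    obtain ⟨s', hs', heq⟩ := hv'
    rw [List.mem_range] at hs hs'
    have := hd i j i' j' hij hij' hne s (by omega) s' (by omega) heq.symm
    obtain ⟨h0, h1, -, -⟩ := hp i j hij
    obtain ⟨h0', h1', -, -⟩ := hp i' j' hij'
    constructor
    · rcases this.1 with h | h <;> subst h <;> simp [h0, h1]
    · rw [← heq]
      rcases this.2 with h | h <;> subst h <;> simp [h0', h1']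

lemma TKf.map {V W : Type} {G : SimpleGraph V} {H : SimpleGraph W} {k l : ℕ} (h : TKf G k l)
    (f : V → W) (hf : Function.Injective f) (hadj : ∀ x y, G.Adj x y → H.Adj (f x) (f y)) :
    TKf H k l := by
  obtain ⟨b, hb, p, hp, hd⟩ := h
  refine ⟨f ∘ b, hf.comp hb, fun i j s => f (p i j s), ?_, ?_⟩
  · intro i j hij
    obtain ⟨h0, h1, h2, h3⟩ := hp i j hij
    exact ⟨by simp [h0], by simp [h1], fun s hs => hadj _ _ (h2 s hs),
      fun s hs s' hs' he => h3 s hs s' hs' (hf he)⟩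
  · intro i j i' j' hij hij' hne s hs s' hs' he
    exact hd i j i' j' hij hij' hne s hs s' hs' (hf he)

lemma TKf.one {V : Type} (G : SimpleGraph V) (v : V) : TKf G 1 0 := by
  refine ⟨fun _ => v, fun i j _ => Subsingleton.elim _ _, fun _ _ _ => v, ?_, ?_⟩
  · intro i j hij; exact absurd hij (by simp [Subsingleton.elim i j])
  · intro i j i' j' hij; exact absurd hij (by simp [Subsingleton.elim i j])

lemma TKf.clique {V : Type} {G : SimpleGraph V} {k : ℕ} (b : Fin k → V)
    (hb : Function.Injective b) (h : ∀ i j, i ≠ j → G.Adj (b i) (b j)) : TKf G k 0 := by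
  refine ⟨b, hb, fun i j s => if s = 0 then b i else b j, ?_, ?_⟩
  · intro i j hij
    refine ⟨by simp, by simp, ?_, ?_⟩
    · intro s hs
      obtain rfl : s = 0 := by omega
      simpa using h i j hij.ne
    · intro s hs s' hs' he
      have := hb.ne hij.ne
      interval_cases s <;> interval_cases s' <;> simp_all
  · intro i j i' j' hij hij' hne s hs s' hs' he
    omega

lemma TKf.subdiv {V W : Type} {G : SimpleGraph V} {H : SimpleGraph W} {k l : ℕ} (h : TKf H k l)
    (f : W → V) (hf : Function.Injective f) (m : W → W → V)
    (hm1 : ∀ x y, H.Adj x y → G.Adj (f x) (m x y) ∧ G.Adj (m x y) (f y))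
    (hm2 : ∀ x y z, H.Adj x y → m x y ≠ f z)
    (hm3 : ∀ x y x' y', H.Adj x y → H.Adj x' y' → m x y = m x' y' →
      (x = x' ∧ y = y') ∨ (x = y' ∧ y = x')) : TKf G k (2 * l + 1) := by
  obtain ⟨b, hb, p, hp, hd⟩ := h
  refine ⟨f ∘ b, hf.comp hb,
    fun i j s => if s % 2 = 0 then f (p i j (s / 2)) else m (p i j (s / 2)) (p i j (s / 2 + 1)),
    ?_, ?_⟩
  · intro i j hij
    obtain ⟨h0, h1, h2, h3⟩ := hp i j hij
    refine ⟨by simp [h0], ?_, ?_, ?_⟩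
    · have : (2 * l + 1 + 1) / 2 = l + 1 := by omega
      have h' : (2 * l + 1 + 1) % 2 = 0 := by omega
      dsimp only
      rw [if_pos h', this, h1]; rfl
    · intro s hs
      dsimp only
      rcases Nat.mod_two_eq_zero_or_one s with h | h
      · have e1 : (s + 1) / 2 = s / 2 := by omega
        rw [if_pos h, if_neg (by omega), e1]
        exact (hm1 _ _ (h2 _ (by omega))).1
      · have e1 : (s + 1) / 2 = s / 2 + 1 := by omega
        rw [if_neg (by omega), if_pos (by omega), e1]
        exact (hm1 _ _ (h2 _ (by omega))).2
    · intro s hs s' hs' he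
      dsimp only at he
      rcases Nat.mod_two_eq_zero_or_one s with h | h <;>
        rcases Nat.mod_two_eq_zero_or_one s' with h' | h'
      · rw [if_pos h, if_pos h'] at he
        have := h3 _ (by omega) _ (by omega) (hf he)
        omega
      · rw [if_pos h, if_neg (by omega)] at he
        exact absurd he.symm (hm2 _ _ _ (h2 _ (by omega)))
      · rw [if_neg (by omega), if_pos h'] at he
        exact absurd he (hm2 _ _ _ (h2 _ (by omega)))
      · rw [if_neg (by omega), if_neg (by omega)] at he
        rcases hm3 _ _ _ _ (h2 _ (by omega)) (h2 _ (by omega)) he with ⟨a, -⟩ | ⟨a, a'⟩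
        · have := h3 _ (by omega) _ (by omega) a
          omega
        · have := h3 _ (by omega) _ (by omega) a
          have := h3 _ (by omega) _ (by omega) a'
          omega
  · intro i j i' j' hij hij' hne s hs s' hs' he
    obtain ⟨h0, h1, h2, h3⟩ := hp i j hij
    obtain ⟨h0', h1', h2', h3'⟩ := hp i' j' hij'
    have hdd := hd i j i' j' hij hij' hne
    dsimp only at he
    rcases Nat.mod_two_eq_zero_or_one s with h | h <;>
      rcases Nat.mod_two_eq_zero_or_one s' with h' | h'
    · rw [if_pos h, if_pos h'] at he
      have := hdd _ (by omega) _ (by omega) (hf he)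
      omega
    · rw [if_pos h, if_neg (by omega)] at he
      exact absurd he.symm (hm2 _ _ _ (h2' _ (by omega)))
    · rw [if_neg (by omega), if_pos h'] at he
      exact absurd he (hm2 _ _ _ (h2 _ (by omega)))
    · exfalso
      rw [if_neg (by omega), if_neg (by omega)] at he
      rcases hm3 _ _ _ _ (h2 _ (by omega)) (h2' _ (by omega)) he with ⟨a, a'⟩ | ⟨a, a'⟩
      · have q1 := hdd _ (by omega) _ (by omega) a
        have q2 := hdd _ (by omega) _ (by omega) a'
        have e1 : s / 2 = 0 := by omega
        have e2 : l = 0 := by omega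
        have e3 : s' / 2 = 0 := by omega
        subst e2
        rw [e1, e3, h0, h0'] at a
        rw [e1, e3] at a'
        simp only [zero_add] at a' h1 h1'
        rw [h1, h1'] at a'
        exact hne (by rw [hb a, hb a'])
      · have q1 := hdd _ (by omega) _ (by omega) a
        have q2 := hdd _ (by omega) _ (by omega) a'
        have e1 : s / 2 = 0 := by omega
        have e2 : l = 0 := by omega
        have e3 : s' / 2 = 0 := by omega
        subst e2
        rw [e1, e3] at a a'
        simp only [zero_add] at a a' h1 h1'
        rw [h0, h1'] at a
        rw [h1, h0'] at a'
        have := hb a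
        have := hb a'
        subst_vars
        exact absurd hij (not_lt.2 hij'.le)

end TK
end BTK
end Part3

noncomputable section Part4
open Finset
namespace BTK
open Classical
set_option linter.unusedSectionVars false

section EE
variable {V : Type} [Fintype V] (G : SimpleGraph V)

/-- neighbours of `a` in `B` -/
def nb (B : Finset V) (a : V) : Finset V := B.filter (G.Adj a)

/-- number of ordered adjacent pairs -/
def ee (A B : Finset V) : ℕ := ∑ a ∈ A, #(nb G B a)

variable {G}

lemma mem_nb {B : Finset V} {a x : V} : x ∈ nb G B a ↔ x ∈ B ∧ G.Adj a x := by
  simp [nb]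

lemma ee_eq (A B : Finset V) : ee G A B = ∑ a ∈ A, ∑ b ∈ B, if G.Adj a b then 1 else 0 := by
  unfold ee nb
  simp only [Finset.card_filter]

lemma ee_comm (A B : Finset V) : ee G A B = ee G B A := by
  rw [ee_eq, ee_eq, Finset.sum_comm]
  simp [G.adj_comm]

lemma ee_union_left {A A' : Finset V} (B : Finset V) (h : Disjoint A A') :
    ee G (A ∪ A') B = ee G A B + ee G A' B := by
  unfold ee; exact Finset.sum_union h

lemma ee_union_right {B B' : Finset V} (A : Finset V) (h : Disjoint B B') :
    ee G A (B ∪ B') = ee G A B + ee G A B' := by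
  rw [ee_comm, ee_union_left _ h, ee_comm A, ee_comm A]

lemma ee_mono {A A' B B' : Finset V} (h : A ⊆ A') (h' : B ⊆ B') : ee G A B ≤ ee G A' B' := by
  unfold ee
  refine le_trans (Finset.sum_le_sum fun a _ => Finset.card_le_card (Finset.filter_subset_filter _ h'))
    (Finset.sum_le_sum_of_subset h)

lemma ee_union_left_le (A A' B : Finset V) : ee G (A ∪ A') B ≤ ee G A B + ee G A' B := by
  rw [← Finset.union_sdiff_self_eq_union, ee_union_left _ Finset.disjoint_sdiff]
  exact Nat.add_le_add_left (ee_mono Finset.sdiff_subset (subset_refl _)) _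

lemma ee_union_right_le (A B B' : Finset V) : ee G A (B ∪ B') ≤ ee G A B + ee G A B' := by
  rw [ee_comm, ee_comm A, ee_comm A]; exact ee_union_left_le _ _ _

lemma ee_le_mul {A B : Finset V} {D : ℝ} (h : ∀ a ∈ A, (#(nb G B a) : ℝ) ≤ D) :
    (ee G A B : ℝ) ≤ #A * D := by
  unfold ee
  push_cast
  calc _ ≤ ∑ a ∈ A, D := Finset.sum_le_sum h
    _ = _ := by simp

lemma mul_le_ee {A B : Finset V} {D : ℝ} (h : ∀ a ∈ A, D ≤ (#(nb G B a) : ℝ)) :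
    #A * D ≤ (ee G A B : ℝ) := by
  unfold ee
  push_cast
  calc _ = ∑ a ∈ A, D := by simp
    _ ≤ _ := Finset.sum_le_sum h

lemma ee_empty_left (B : Finset V) : ee G ∅ B = 0 := by simp [ee]
lemma ee_empty_right (B : Finset V) : ee G B ∅ = 0 := by rw [ee_comm, ee_empty_left]

/-- splitting `V = A ∪ Aᶜ` -/
lemma ee_univ_split (A : Finset V) :
    ee G univ univ = ee G A A + 2 * ee G A Aᶜ + ee G Aᶜ Aᶜ := by
  have h : (univ : Finset V) = A ∪ Aᶜ := by simp
  have hd : Disjoint A Aᶜ := disjoint_compl_right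
  conv_lhs => rw [h]
  rw [ee_union_left _ hd, ee_union_right _ hd, ee_union_right _ hd, ee_comm Aᶜ A]
  ring

lemma ee_induce (A : Finset V) (X Y : Finset {x // x ∈ A}) :
    ee (G.induce {x | x ∈ A}) X Y =
      ee G (X.map (Function.Embedding.subtype _)) (Y.map (Function.Embedding.subtype _)) := by
  rw [ee_eq, ee_eq]
  simp only [Finset.sum_map]
  rfl

lemma ee_induce_univ (A : Finset V) :
    ee (G.induce {x | x ∈ A}) (univ : Finset {x // x ∈ A}) univ = ee G A A := by
  rw [ee_induce]
  have : (univ : Finset {x // x ∈ A}).map (Function.Embedding.subtype _) = A := by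
    ext x; simp
  rw [this]

lemma TKf.of_induce {A : Finset V} {k l : ℕ}
    (h : TKf (V := {x // x ∈ A}) (G.induce {x | x ∈ A}) k l) : TKf G k l :=
  h.map (fun x => x.1) Subtype.val_injective (fun _ _ h => h)

lemma nb_induce_card (A : Finset V) (x : {x // x ∈ A}) :
    #(nb (G.induce {x | x ∈ A}) (univ : Finset {x // x ∈ A}) x) = #(nb G A x.1) := by
  rw [← Finset.card_map (Function.Embedding.subtype _)]
  congr 1
  ext y
  simp [mem_nb, and_comm]

/-- greedy assignment -/
lemma greedy (L U : Finset V) (k : ℕ) (hd : Disjoint L U) (hk : ∀ u ∈ U, k ≤ #(nb G L u)) :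
    ∃ H : SimpleGraph {x // x ∈ L},
      (∃ m : {x // x ∈ L} → {x // x ∈ L} → V,
        (∀ x y, H.Adj x y → G.Adj x.1 (m x y) ∧ G.Adj (m x y) y.1) ∧
        (∀ x y (z : {x // x ∈ L}), H.Adj x y → m x y ≠ z.1) ∧
        (∀ x y x' y', H.Adj x y → H.Adj x' y' → m x y = m x' y' →
          (x = x' ∧ y = y') ∨ (x = y' ∧ y = x'))) ∧
      (TKf H k 0 ∨ 2 * #U ≤ ee H univ univ) := by
  set P : Finset V → Prop := fun U' => U' ⊆ U ∧ ∃ g : V → Sym2 V,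
    (∀ u ∈ U', ¬ (g u).IsDiag ∧ ∀ x ∈ g u, x ∈ L ∧ G.Adj u x) ∧
    (∀ u ∈ U', ∀ v ∈ U', g u = g v → u = v) with hP
  have hex : ∃ U' ∈ (univ : Finset (Finset V)).filter P, ∀ U'' ∈ univ.filter P, #U'' ≤ #U' := by
    apply Finset.exists_max_image
    refine ⟨∅, ?_⟩
    rw [Finset.mem_filter]
    exact ⟨Finset.mem_univ _, by simp, fun u => s(u, u), by simp, by simp⟩
  obtain ⟨U', hU', hmax⟩ := hex
  rw [Finset.mem_filter] at hU'
  obtain ⟨-, hsub, g, hg1, hg2⟩ := hU'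
  let H : SimpleGraph {x // x ∈ L} :=
    { Adj := fun x y => ∃ u ∈ U', g u = s(x.1, y.1)
      symm := ⟨by
        rintro x y ⟨u, hu, h⟩
        exact ⟨u, hu, h.trans Sym2.eq_swap⟩⟩
      loopless := ⟨by
        rintro x ⟨u, hu, h⟩
        have := (hg1 u hu).1
        rw [h] at this
        exact this (by simp)⟩ }
  refine ⟨H, ?_, ?_⟩
  · have hm : ∀ x y : {x // x ∈ L}, ∃ u, H.Adj x y → u ∈ U' ∧ g u = s(x.1, y.1) := by
      intro x y
      by_cases h : H.Adj x y
      · obtain ⟨u, hu, hu'⟩ := h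
        exact ⟨u, fun _ => ⟨hu, hu'⟩⟩
      · exact ⟨x.1, fun h' => absurd h' h⟩
    choose m hm using hm
    refine ⟨m, ?_, ?_, ?_⟩
    · intro x y hxy
      obtain ⟨h1, h2⟩ := hm x y hxy
      have h3 := (hg1 _ h1).2
      rw [h2] at h3
      exact ⟨(h3 x.1 (by simp)).2.symm, (h3 y.1 (by simp)).2⟩
    · intro x y z hxy he
      obtain ⟨h1, h2⟩ := hm x y hxy
      exact Finset.disjoint_left.1 hd z.2 (he ▸ hsub h1)
    · intro x y x' y' hxy hxy' he
      obtain ⟨h1, h2⟩ := hm x y hxy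
      obtain ⟨h1', h2'⟩ := hm x' y' hxy'
      rw [he, h2', Sym2.eq_iff] at h2
      rcases h2 with ⟨a, a'⟩ | ⟨a, a'⟩
      · exact Or.inl ⟨Subtype.ext a.symm, Subtype.ext a'.symm⟩
      · exact Or.inr ⟨Subtype.ext a'.symm, Subtype.ext a.symm⟩
  · by_cases hUU : U' = U
    · right
      subst hUU
      have h1 : #U' ≤ #(H.edgeFinset) := by
        have : U'.image g ⊆ H.edgeFinset.image (Sym2.map Subtype.val) := by
          intro e he
          rw [Finset.mem_image] at he ⊢
          obtain ⟨u, hu, rfl⟩ := he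
          obtain ⟨hnd, hL⟩ := hg1 u hu
          induction h : g u using Sym2.ind with
          | _ x y =>
          rw [h] at hL hnd
          refine ⟨s(⟨x, (hL x (by simp)).1⟩, ⟨y, (hL y (by simp)).1⟩), ?_, by simp⟩
          rw [SimpleGraph.mem_edgeFinset, SimpleGraph.mem_edgeSet]
          exact ⟨u, hu, h⟩
        have h2 := Finset.card_le_card this
        rw [Finset.card_image_of_injOn (fun u hu v hv => hg2 u hu v hv)] at h2
        exact h2.trans Finset.card_image_le
      have h2 := H.sum_degrees_eq_twice_card_edges
      have h3 : ee H univ univ = ∑ v, H.degree v := by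
        unfold ee nb
        refine Finset.sum_congr rfl fun v _ => ?_
        rw [← SimpleGraph.card_neighborFinset_eq_degree]
        congr 1
        ext y; simp
      rw [h3, h2]; omega
    · left
      obtain ⟨u, hu, hu'⟩ := Finset.exists_of_ssubset (hsub.ssubset_of_ne hUU)
      obtain ⟨S, hS, hSk⟩ := Finset.exists_subset_card_eq (hk u hu)
      let b : Fin k → {x // x ∈ L} := fun i => ⟨(S.equivFinOfCardEq hSk).symm i,
        (mem_nb.1 (hS ((S.equivFinOfCardEq hSk).symm i).2)).1⟩
      have hb : Function.Injective b := by
        intro i j hij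
        have : ((S.equivFinOfCardEq hSk).symm i : V) = (S.equivFinOfCardEq hSk).symm j :=
          congrArg (fun z : {x // x ∈ L} => z.1) hij
        exact (S.equivFinOfCardEq hSk).symm.injective (Subtype.ext this)
      refine TKf.clique b hb ?_
      intro i j hij
      by_contra hno
      have hbu : ∀ i, G.Adj u (b i).1 := fun i =>
        (mem_nb.1 (hS ((S.equivFinOfCardEq hSk).symm i).2)).2
      have hno' : ∀ v ∈ U', g v ≠ s((b i).1, (b j).1) := fun v hv he => hno ⟨v, hv, he⟩
      have := hmax (insert u U') (by
        rw [Finset.mem_filter]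
        refine ⟨Finset.mem_univ _, Finset.insert_subset hu hsub,
          Function.update g u s((b i).1, (b j).1), ?_, ?_⟩
        · intro v hv
          by_cases hvu : v = u
          · subst hvu
            rw [Function.update_self]
            refine ⟨fun h => ?_, ?_⟩
            · rw [Sym2.mk_isDiag_iff] at h
              exact hij (hb (Subtype.ext h))
            · intro x hx
              rw [Sym2.mem_iff] at hx
              rcases hx with rfl | rfl
              · exact ⟨(b i).2, hbu i⟩
              · exact ⟨(b j).2, hbu j⟩
          · rw [Function.update_of_ne hvu]
            exact hg1 v (Finset.mem_of_mem_insert_of_ne hv hvu)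
        · intro v hv v' hv' he
          by_cases hvu : v = u <;> by_cases hvu' : v' = u
          · rw [hvu, hvu']
          · rw [hvu, Function.update_self, Function.update_of_ne hvu'] at he
            exact absurd he.symm (hno' _ (Finset.mem_of_mem_insert_of_ne hv' hvu'))
          · rw [hvu', Function.update_self, Function.update_of_ne hvu] at he
            exact absurd he (hno' _ (Finset.mem_of_mem_insert_of_ne hv hvu))
          · rw [Function.update_of_ne hvu, Function.update_of_ne hvu'] at he
            exact hg2 v (Finset.mem_of_mem_insert_of_ne hv hvu) v'
              (Finset.mem_of_mem_insert_of_ne hv' hvu') he)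
      rw [Finset.card_insert_of_notMem hu'] at this
      omega

end EE
end BTK
end Part4

noncomputable section Part5
open Finset
namespace BTK
open Classical
set_option linter.unusedSectionVars false

theorem step0 (d : ℝ) (hd : 2 ≤ d) (k : ℕ) (hk : (k : ℝ) ≤ d / 8)
    (base : ∀ (V : Type) [Fintype V] (G : SimpleGraph V), Nonempty V →
      d / 2 * Fintype.card V ≤ ee G univ univ → (∀ v, (#(nb G univ v) : ℝ) ≤ 100 * d ^ 2) →
      ∃ l, TKf G k l) :
    ∀ (n : ℕ) (V : Type) [Fintype V] (G : SimpleGraph V), Fintype.card V = n → Nonempty V →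
      d * Fintype.card V ≤ ee G univ univ → ∃ l, TKf G k l := by
  intro n
  induction n using Nat.strong_induction_on with
  | _ n ih =>
  intro V _ G hn hne he
  by_cases hA : ∃ A : Finset V, A.Nonempty ∧ #A < n ∧ d * #A ≤ ee G A A
  · obtain ⟨A, hA1, hA2, hA3⟩ := hA
    obtain ⟨l, hl⟩ := ih (#A) hA2 {x // x ∈ A} (G.induce {x | x ∈ A}) (by simp)
      (hA1.to_subtype) (by rw [ee_induce_univ]; simpa using hA3)
    exact ⟨l, hl.of_induce⟩
  push Not at hA
  have hn0 : 0 < n := hn ▸ Fintype.card_pos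
  have hn0' : (0:ℝ) < n := by exact_mod_cast hn0
  rw [hn] at he
  set Eg := ee G univ univ with hEg
  -- upper bound on edges
  have hup : (Eg : ℝ) ≤ 2 * d * n := by
    obtain ⟨v, -, hv⟩ := Finset.exists_min_image univ (fun v => #(nb G univ v)) Finset.univ_nonempty
    have h1 : (n : ℝ) * #(nb G univ v) ≤ Eg := by
      have := mul_le_ee (G := G) (A := univ) (B := univ) (D := #(nb G univ v))
        (fun a ha => by exact_mod_cast hv a ha)
      rwa [Finset.card_univ, hn] at this
    have h2 : Eg ≤ ee G {v}ᶜ {v}ᶜ + 2 * #(nb G univ v) := by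
      rw [hEg, ee_univ_split {v}]
      have e1 : ee G {v} {v} = 0 := by simp [ee, nb, Finset.filter_singleton]
      have e2 : ee G {v} {v}ᶜ ≤ #(nb G univ v) := by
        simp only [ee, Finset.sum_singleton]
        exact Finset.card_le_card (Finset.filter_subset_filter _ (Finset.subset_univ _))
      omega
    have hcard : #({v}ᶜ : Finset V) = n - 1 := by rw [Finset.card_compl, hn]; simp
    by_cases h3 : n = 1
    · have : ({v}ᶜ : Finset V) = ∅ := by rw [← Finset.card_eq_zero, hcard, h3]
      rw [this, ee_empty_left] at h2
      have h4 : (Eg : ℝ) ≤ 2 * #(nb G univ v) := by exact_mod_cast (by simpa using h2)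
      rw [h3] at he
      have : #(nb G univ v) ≤ 0 := by
        have : nb G univ v ⊆ {v}ᶜ := by
          intro x hx
          have := (mem_nb.1 hx).2.ne
          simp [this.symm]
        have := Finset.card_le_card this
        rw [hcard, h3] at this
        exact this
      have : (#(nb G univ v) : ℝ) = 0 := by exact_mod_cast (Nat.le_zero.1 this)
      rw [this] at h4
      push_cast at he
      linarith
    · have h5 := hA {v}ᶜ (by rw [← Finset.card_pos, hcard]; omega) (by rw [hcard]; omega)
      rw [hcard] at h5
      have h6 : (Eg : ℝ) ≤ ee G {v}ᶜ {v}ᶜ + 2 * #(nb G univ v) := by exact_mod_cast h2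
      have h7 : ((n - 1 : ℕ) : ℝ) = n - 1 := by
        rw [Nat.cast_sub (by omega)]; simp
      rw [h7] at h5
      set q : ℝ := (#(nb G univ v) : ℝ)
      have hq : q ≤ n - 1 := by
        have : #(nb G univ v) ≤ n - 1 := by
          rw [← hcard]
          apply Finset.card_le_card
          intro x hx
          have := (mem_nb.1 hx).2.ne
          simp [this.symm]
        have h' : (#(nb G univ v) : ℝ) ≤ ((n - 1 : ℕ) : ℝ) := by exact_mod_cast this
        rw [h7] at h'
        exact h'
      by_cases h8 : n = 2
      · have h9 : (n : ℝ) = 2 := by exact_mod_cast h8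
        rw [h9] at he h5 hq
        linarith
      · have h9 : (3:ℝ) ≤ n := by
          have : 3 ≤ n := by omega
          exact_mod_cast this
        by_contra hc
        push Not at hc
        -- Eg < d (n-1) + 2 q,  n q ≤ Eg
        have h10 : (n : ℝ) * Eg ≤ d * (n - 1) * n + 2 * Eg := by nlinarith
        nlinarith
  set L : Finset V := univ.filter (fun v => 100 * d ^ 2 < (#(nb G univ v) : ℝ)) with hL
  by_cases hLe : L = ∅
  · refine base V G hne (by rw [hn]; nlinarith) ?_
    intro v
    by_contra h
    push Not at h
    have : v ∈ L := by rw [hL, Finset.mem_filter]; exact ⟨Finset.mem_univ _, h⟩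
    rw [hLe] at this; simp at this
  have hLc : (#L : ℝ) * (50 * d) ≤ n := by
    have h1 := mul_le_ee (G := G) (A := L) (B := univ) (D := 100 * d ^ 2) (fun a ha => by
      rw [hL, Finset.mem_filter] at ha; exact ha.2.le)
    have h2 : (ee G L univ : ℝ) ≤ Eg := by
      exact_mod_cast ee_mono (Finset.subset_univ _) (subset_refl _)
    have h3 : (#L : ℝ) * (100 * d ^ 2) ≤ 2 * d * n := by linarith
    have h4 : (2 * d) * ((#L : ℝ) * (50 * d)) ≤ (2 * d) * n := by nlinarith
    exact le_of_mul_le_mul_left h4 (by linarith)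
  have hLpos : 0 < #L := Finset.card_pos.2 (Finset.nonempty_iff_ne_empty.2 hLe)
  have hLpos' : (1:ℝ) ≤ #L := by exact_mod_cast hLpos
  set U : Finset V := Lᶜ.filter (fun u => d / 8 ≤ (#(nb G L u) : ℝ)) with hU
  by_cases hUc : d * #L / 2 ≤ #U
  · obtain ⟨H, ⟨m, hm1, hm2, hm3⟩, hH⟩ := greedy (G := G) L U k
      (by
        rw [hU]
        exact Finset.disjoint_of_subset_right (Finset.filter_subset _ _) disjoint_compl_right)
      (by
        intro u hu
        rw [hU, Finset.mem_filter] at hu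
        exact_mod_cast hk.trans hu.2)
    rcases hH with hH | hH
    · exact ⟨_, hH.subdiv (fun x => x.1) Subtype.val_injective m hm1 hm2 hm3⟩
    · obtain ⟨l, hl⟩ := ih (#L) (by
          have : (#L : ℝ) < n := by nlinarith
          exact_mod_cast this) {x // x ∈ L} H (by simp)
        (Finset.nonempty_iff_ne_empty.2 hLe).to_subtype (by
          have : (2 * #U : ℝ) ≤ ee H univ univ := by exact_mod_cast hH
          simp only [Fintype.card_coe]
          linarith)
      exact ⟨_, hl.subdiv (fun x => x.1) Subtype.val_injective m hm1 hm2 hm3⟩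
  · push Not at hUc
    have hdisj : Disjoint L U := by
      rw [hU]
      exact Finset.disjoint_of_subset_right (Finset.filter_subset _ _) disjoint_compl_right
    have hUn : (#U : ℝ) ≤ n / 100 := by linarith
    have hLn : (#L : ℝ) ≤ n / 100 := by nlinarith
    have hLU : (#(L ∪ U) : ℝ) = #L + #U := by
      rw [Finset.card_union_of_disjoint hdisj]; push_cast; rfl
    have h1 := hA (L ∪ U) ⟨_, Finset.mem_union_left _ (Finset.card_pos.1 hLpos).choose_spec⟩ (by
      have : (#(L ∪ U) : ℝ) < n := by rw [hLU]; linarith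
      exact_mod_cast this)
    have h2 : ee G L L + 2 * ee G L U ≤ ee G (L ∪ U) (L ∪ U) := by
      rw [ee_union_left _ hdisj, ee_union_right _ hdisj, ee_union_right _ hdisj, ee_comm U L]
      omega
    have h3 : ee G L Lᶜ ≤ ee G L U + ee G L (Lᶜ \ U) := by
      have : Lᶜ ⊆ U ∪ (Lᶜ \ U) := by intro x hx; by_cases h : x ∈ U <;> simp_all
      exact (ee_mono (subset_refl _) this).trans (ee_union_right_le _ _ _)
    have h4 : (ee G L (Lᶜ \ U) : ℝ) ≤ n * (d / 8) := by
      rw [ee_comm]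
      refine (ee_le_mul (D := d / 8) ?_).trans ?_
      · intro a ha
        rw [Finset.mem_sdiff, hU, Finset.mem_filter, not_and, not_le] at ha
        exact (ha.2 ha.1).le
      · apply mul_le_mul_of_nonneg_right _ (by linarith)
        rw [← hn]
        exact_mod_cast Finset.card_le_univ _
    have h5 := ee_univ_split (G := G) L
    rw [← hEg] at h5
    have h5' : (Eg : ℝ) = ee G L L + 2 * ee G L Lᶜ + ee G Lᶜ Lᶜ := by exact_mod_cast h5
    have h2' : (ee G L L : ℝ) + 2 * ee G L U ≤ ee G (L ∪ U) (L ∪ U) := by exact_mod_cast h2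
    have h3' : (ee G L Lᶜ : ℝ) ≤ ee G L U + ee G L (Lᶜ \ U) := by exact_mod_cast h3
    have h6 : d / 2 * n ≤ ee G Lᶜ Lᶜ := by
      rw [hLU] at h1
      have : d * (#L + #U : ℝ) ≤ d * (n / 100 + n / 100) := by
        apply mul_le_mul_of_nonneg_left _ (by linarith); linarith
      linarith [mul_pos (show 0 < d by linarith) hn0']
    have hcn : (#Lᶜ : ℝ) ≤ n := by
      rw [← hn]; exact_mod_cast Finset.card_le_univ _
    obtain ⟨l, hl⟩ := base {x // x ∈ Lᶜ} (G.induce {x | x ∈ Lᶜ}) (by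
        have : Lᶜ.Nonempty := by
          rw [← Finset.card_pos, Finset.card_compl, hn]
          have : (#L : ℝ) < n := by linarith
          have : #L < n := by exact_mod_cast this
          omega
        exact this.to_subtype) (by
        rw [ee_induce_univ]
        refine le_trans ?_ h6
        rw [Fintype.card_coe]
        apply mul_le_mul_of_nonneg_left hcn; linarith) (by
        intro v
        rw [nb_induce_card]
        have h7 : v.1 ∉ L := Finset.mem_compl.1 v.2
        have h8 : (#(nb G univ v.1) : ℝ) ≤ 100 * d ^ 2 := by
          by_contra hc
          exact h7 (Finset.mem_filter.2 ⟨Finset.mem_univ _, not_le.1 hc⟩)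
        refine le_trans ?_ h8
        exact_mod_cast Finset.card_le_card (Finset.filter_subset_filter _ (Finset.subset_univ _)))
    exact ⟨l, hl.of_induce⟩

lemma bip {V : Type} [Fintype V] (G : SimpleGraph V) :
    ∃ c : V → Bool, ∃ H : SimpleGraph V, H ≤ G ∧ (∀ x y, H.Adj x y → c x ≠ c y) ∧
      ee G univ univ ≤ 2 * ee H univ univ := by
  set f : (V → Bool) → ℕ := fun c => ∑ x : V, ∑ y : V, if G.Adj x y ∧ c x ≠ c y then 1 else 0
  have hsum : 2 * ∑ c : V → Bool, f c = ∑ c : V → Bool, ee G univ univ := by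
    simp only [f, ee_eq]
    rw [Finset.sum_comm, Finset.sum_comm (s := (univ : Finset (V → Bool))), Finset.mul_sum]
    refine Finset.sum_congr rfl fun x _ => ?_
    rw [Finset.sum_comm, Finset.sum_comm (s := (univ : Finset (V → Bool))), Finset.mul_sum]
    refine Finset.sum_congr rfl fun y _ => ?_
    by_cases hxy : G.Adj x y
    · simp only [hxy, true_and, if_true]
      have : ∑ c : V → Bool, (if c x ≠ c y then 1 else 0) =
          ∑ c : V → Bool, (if c x = c y then 1 else 0) := by
        let e : (V → Bool) ≃ (V → Bool) := Function.Involutive.toPerm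
          (fun c => Function.update c x (!c x)) (by intro c; simp)
        rw [← Equiv.sum_comp e]
        refine Finset.sum_congr rfl fun c _ => ?_
        have e1 : e c x = !c x := by
          change Function.update c x (!c x) x = _; simp
        have e2 : e c y = c y := by
          change Function.update c x (!c x) y = _; simp [Function.update_of_ne hxy.ne']
        rw [e1, e2]
        cases c x <;> cases c y <;> simp
      rw [two_mul]
      conv_lhs => rw [this]
      nth_rewrite 2 [← this]
      rw [← Finset.sum_add_distrib]
      refine Finset.sum_congr rfl fun c _ => ?_
      by_cases h : c x = c y <;> simp [h]
    · simp [hxy]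
  have : ∃ c ∈ (univ : Finset (V → Bool)), ee G univ univ ≤ 2 * f c := by
    apply Finset.exists_le_of_sum_le ⟨fun _ => true, Finset.mem_univ _⟩
    rw [← Finset.mul_sum, hsum]
  obtain ⟨c, -, hc⟩ := this
  let H : SimpleGraph V :=
    { Adj := fun x y => G.Adj x y ∧ c x ≠ c y
      symm := ⟨fun x y h => ⟨h.1.symm, h.2.symm⟩⟩
      loopless := ⟨fun x h => h.2 rfl⟩ }
  refine ⟨c, H, fun x y h => h.1, fun x y h => h.2, ?_⟩
  rw [ee_eq (G := H)]
  refine hc.trans (le_of_eq ?_)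
  congr 1
  refine Finset.sum_congr rfl fun x _ => Finset.sum_congr rfl fun y _ => ?_
  have : H.Adj x y ↔ (G.Adj x y ∧ c x ≠ c y) := Iff.rfl
  simp only [this]

end BTK
end Part5

noncomputable section Part6
open Finset
namespace BTK
open Classical
set_option linter.unusedSectionVars false

/-- logarithmic scale -/
def Lg (t x : ℝ) : ℝ := 1 + Real.log (1 + x / t)
/-- expansion rate -/
def eps (t x : ℝ) : ℝ := 1 / (200 * Lg t x ^ 2)

lemma one_le_Lg {t x : ℝ} (ht : 0 < t) (hx : 0 ≤ x) : 1 ≤ Lg t x := by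
  unfold Lg
  have : 0 ≤ Real.log (1 + x / t) := Real.log_nonneg (by
    have : 0 ≤ x / t := by positivity
    linarith)
  linarith

lemma Lg_mono {t x y : ℝ} (ht : 0 < t) (hx : 0 ≤ x) (hxy : x ≤ y) : Lg t x ≤ Lg t y := by
  unfold Lg
  have h1 : 0 ≤ x / t := by positivity
  have : Real.log (1 + x / t) ≤ Real.log (1 + y / t) := Real.log_le_log (by positivity) (by
    have : x / t ≤ y / t := by gcongr
    linarith)
  linarith

lemma eps_pos {t x : ℝ} (ht : 0 < t) (hx : 0 ≤ x) : 0 < eps t x := by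
  have := one_le_Lg ht hx
  unfold eps; positivity

lemma eps_le {t x : ℝ} (ht : 0 < t) (hx : 0 ≤ x) : eps t x ≤ 1 / 200 := by
  have := one_le_Lg ht hx
  unfold eps
  apply one_div_le_one_div_of_le (by norm_num)
  nlinarith

lemma eps_anti {t x y : ℝ} (ht : 0 < t) (hx : 0 ≤ x) (hxy : x ≤ y) : eps t y ≤ eps t x := by
  have := one_le_Lg ht hx
  have := Lg_mono ht hx hxy
  unfold eps
  apply one_div_le_one_div_of_le (by positivity)
  gcongr

/-- density correction -/
def phi (t x : ℝ) : ℝ := 1 + 1 / Lg t x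

lemma phi_gt {t x : ℝ} (ht : 0 < t) (hx : 0 ≤ x) : 1 ≤ phi t x := by
  have := one_le_Lg ht hx
  unfold phi
  have : 0 ≤ 1 / Lg t x := by positivity
  linarith

lemma phi_le {t x : ℝ} (ht : 0 < t) (hx : 0 ≤ x) : phi t x ≤ 2 := by
  have := one_le_Lg ht hx
  unfold phi
  have : 1 / Lg t x ≤ 1 := by rw [div_le_one (by linarith)]; linarith
  linarith

lemma phi_anti {t x y : ℝ} (ht : 0 < t) (hx : 0 ≤ x) (hxy : x ≤ y) : phi t y ≤ phi t x := by
  have h1 := one_le_Lg ht hx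
  have := Lg_mono ht hx hxy
  unfold phi
  have : 1 / Lg t y ≤ 1 / Lg t x := one_div_le_one_div_of_le (by linarith) this
  linarith

lemma phi_drop {t x a n : ℝ} (ht : 0 < t) (hx : 0 ≤ x) (hxa : x ≤ a) (ha : a ≤ 1.005 * x)
    (han : a ≤ 2 / 3 * n) (hn : t / 2 ≤ n) : 17 * eps t x ≤ phi t a - phi t n := by
  have hLx := one_le_Lg ht hx
  have hLa := one_le_Lg ht (hx.trans hxa)
  have h1 : Lg t a ≤ 1.005 * Lg t x := by
    have h0 : 0 ≤ x / t := by positivity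
    have : Real.log (1 + a / t) ≤ Real.log (1.005 * (1 + x / t)) := by
      apply Real.log_le_log
      · have : 0 ≤ a / t := div_nonneg (hx.trans hxa) ht.le
        linarith
      · have : a / t ≤ 1.005 * x / t := by gcongr
        rw [mul_div_assoc] at this
        linarith
    rw [Real.log_mul (by norm_num) (by positivity)] at this
    have h2 : Real.log 1.005 ≤ 1.005 - 1 := Real.log_le_sub_one_of_pos (by norm_num)
    unfold Lg at hLx ⊢
    linarith
  have h2 : Lg t a + 0.1 ≤ Lg t n := by
    have ha0 : 0 ≤ a / t := by
      have := hx.trans hxa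
      positivity
    have hy : 1 / 2 ≤ n / t := by rw [le_div_iff₀ ht]; linarith
    have hay : a / t ≤ 2 / 3 * (n / t) := by
      rw [← mul_div_assoc]; gcongr
    have : Real.log (1.125 * (1 + a / t)) ≤ Real.log (1 + n / t) := by
      apply Real.log_le_log (by positivity)
      linarith
    rw [Real.log_mul (by norm_num) (by positivity)] at this
    have h3 : 1 - (1.125 : ℝ)⁻¹ ≤ Real.log 1.125 := Real.one_sub_inv_le_log_of_pos (by norm_num)
    norm_num at h3
    unfold Lg
    norm_num at this ⊢
    linarith
  unfold phi eps
  set l := Lg t x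
  set A := Lg t a
  set N := Lg t n
  have h3 : 1 / N ≤ 1 / (A + 0.1) := one_div_le_one_div_of_le (by linarith) h2
  have h4 : 17 * (1 / (200 * l ^ 2)) ≤ 17 * (1 / (200 * (A / 1.005) ^ 2)) := by
    have : 1 / (200 * l ^ 2) ≤ 1 / (200 * (A / 1.005) ^ 2) := by
      apply one_div_le_one_div_of_le (by positivity)
      have : A / 1.005 ≤ l := by rw [div_le_iff₀ (by norm_num)]; linarith
      gcongr
    linarith
  have h5 : 17 * (1 / (200 * (A / 1.005) ^ 2)) ≤ 1 / A - 1 / (A + 0.1) := by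
    rw [div_sub_div _ _ (by linarith) (by linarith), ← mul_div_assoc, div_le_div_iff₀ (by positivity) (by positivity)]
    field_simp
    nlinarith
  linarith

/-- robust expanders -/
structure RE {V : Type} [Fintype V] (G : SimpleGraph V) (t : ℝ) (col : V → Bool) : Prop where
  bip : ∀ x y, G.Adj x y → col x ≠ col y
  deg : ∀ v, (#(nb G univ v) : ℝ) ≤ 1600 * t ^ 2
  exp : ∀ X S : Finset V, X.Nonempty → (#X : ℝ) ≤ 3 / 5 * Fintype.card V →
    (#S : ℝ) ≤ eps t #X * #X → eps t #X * t * #X ≤ ee G X (X ∪ S)ᶜ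
  big : t / 2 ≤ Fintype.card V

lemma exp_arith {e x D t a pa pn q : ℝ} (he0 : 0 < e) (he1 : e ≤ 1 / 200) (hx0 : 0 < x)
    (hDpos : 0 < D) (hDt : t / 2 ≤ D) (hxa : x ≤ a) (hax : a ≤ x + e * x)
    (hdrop : 17 * e ≤ pa - pn) (hA : q * pa ≤ D * pn * a) (h5 : D * x ≤ q + 2 * (e * t * x))
    (hpa : pa ≤ 2) (hpa1 : 1 ≤ pa) (hpn1 : 1 ≤ pn) : False := by
  have h6 : D * x * pa ≤ D * pn * a + 2 * (e * t * x) * pa := by nlinarith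
  have h7 : D * pn * a ≤ D * (pa - 17 * e) * (x + e * x) := by
    have : pn ≤ pa - 17 * e := by linarith
    have h0 : 0 ≤ pa - 17 * e := by linarith
    gcongr
    linarith
  have h8 : 2 * (e * t * x) * pa ≤ 8 * (e * D * x) := by
    have h1 : 2 * (e * t * x) * pa ≤ 2 * (e * (2 * D) * x) * pa := by gcongr; linarith
    have h2 : 2 * (e * (2 * D) * x) * pa ≤ 2 * (e * (2 * D) * x) * 2 := by gcongr
    linarith
  have h9 : D * x * pa ≤ D * x * ((pa - 17 * e) * (1 + e) + 8 * e) := by linarith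
  have h10 := le_of_mul_le_mul_left h9 (by positivity)
  nlinarith

lemma exp_of_extremal {V : Type} [Fintype V] [Nonempty V] (G : SimpleGraph V) (t : ℝ) (ht : 0 < t)
    (hD : t / 2 * Fintype.card V ≤ ee G univ univ) (hbig : t / 2 ≤ Fintype.card V)
    (hext : ∀ X : Finset V, X.Nonempty → (ee G X X : ℝ) / #X * phi t #X ≤
      (ee G univ univ : ℝ) / Fintype.card V * phi t (Fintype.card V))
    (X S : Finset V) (hX : X.Nonempty) (hXn : (#X : ℝ) ≤ 3 / 5 * Fintype.card V)
    (hS : (#S : ℝ) ≤ eps t #X * #X) : eps t #X * t * #X ≤ ee G X (X ∪ S)ᶜ := by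
  by_contra hcon
  push Not at hcon
  have hn0 : (0:ℝ) < Fintype.card V := by exact_mod_cast Fintype.card_pos
  have hx0 : (0:ℝ) < #X := by exact_mod_cast hX.card_pos
  set n : ℝ := (Fintype.card V : ℝ) with hn
  set x : ℝ := (#X : ℝ) with hx
  set e := eps t x with he
  have he0 : 0 < e := eps_pos ht hx0.le
  have he1 : e ≤ 1 / 200 := eps_le ht hx0.le
  set D := (ee G univ univ : ℝ) / n with hDd
  have hDt : t / 2 ≤ D := by rw [hDd, le_div_iff₀ hn0]; exact hD
  have hDpos : 0 < D := by linarith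
  have ebound : ∀ Y : Finset V, Y.Nonempty → (ee G Y Y : ℝ) * phi t #Y ≤ D * phi t n * #Y := by
    intro Y hY
    have h1 := hext Y hY
    have hy0 : (0:ℝ) < #Y := by exact_mod_cast hY.card_pos
    rw [div_mul_eq_mul_div, div_le_iff₀ hy0] at h1
    exact h1
  set a : ℝ := (#(X ∪ S) : ℝ) with ha
  have hxa : x ≤ a := by rw [hx, ha]; exact_mod_cast Finset.card_le_card Finset.subset_union_left
  have hax : a ≤ x + e * x := by
    have : a ≤ x + #S := by rw [ha, hx]; exact_mod_cast Finset.card_union_le _ _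
    linarith
  have hdrop := phi_drop (t := t) (x := x) (a := a) (n := n) ht hx0.le hxa (by nlinarith)
    (by nlinarith) hbig
  rw [← he] at hdrop
  have hA := ebound (X ∪ S) (hX.mono Finset.subset_union_left)
  rw [← ha] at hA
  have hXc : #Xᶜ = Fintype.card V - #X := Finset.card_compl X
  have hXcr : (#Xᶜ : ℝ) = n - x := by
    rw [hXc, Nat.cast_sub (Finset.card_le_univ _)]
  have hB : (ee G Xᶜ Xᶜ : ℝ) ≤ D * (n - x) := by
    have hne : Xᶜ.Nonempty := by
      rw [← Finset.card_pos]
      have : (0:ℝ) < #Xᶜ := by rw [hXcr]; linarith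
      exact_mod_cast this
    have h1 := ebound Xᶜ hne
    rw [hXcr] at h1
    have h2 := phi_anti (t := t) (x := n - x) (y := n) ht (by linarith) (by linarith)
    have h3 := phi_gt (t := t) (x := n) ht hn0.le
    have h4 : (ee G Xᶜ Xᶜ : ℝ) * phi t n ≤ D * (n - x) * phi t n := by
      have : (ee G Xᶜ Xᶜ : ℝ) * phi t n ≤ (ee G Xᶜ Xᶜ : ℝ) * phi t (n - x) := by gcongr
      linarith
    exact le_of_mul_le_mul_right h4 (by linarith)
  have hsplit : (ee G univ univ : ℝ) ≤ ee G (X ∪ S) (X ∪ S) + ee G Xᶜ Xᶜ + 2 * ee G X (X ∪ S)ᶜ := by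
    have h1 := ee_univ_split (G := G) X
    have h2 : Xᶜ ⊆ (S \ X) ∪ (X ∪ S)ᶜ := by
      intro y hy; by_cases h : y ∈ S <;> simp_all
    have h3 := (ee_mono (G := G) (subset_refl X) h2).trans (ee_union_right_le _ _ _)
    have h4 : ee G X X + 2 * ee G X (S \ X) ≤ ee G (X ∪ S) (X ∪ S) := by
      rw [← Finset.union_sdiff_self_eq_union, ee_union_left _ Finset.disjoint_sdiff,
        ee_union_right _ Finset.disjoint_sdiff, ee_union_right _ Finset.disjoint_sdiff,
        ee_comm (S \ X) X]
      omega
    have : ee G univ univ ≤ ee G (X ∪ S) (X ∪ S) + ee G Xᶜ Xᶜ + 2 * ee G X (X ∪ S)ᶜ := by omega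
    exact_mod_cast this
  have hDn : (ee G univ univ : ℝ) = D * n := by rw [hDd]; field_simp
  rw [hDn] at hsplit
  have h5 : D * x ≤ ee G (X ∪ S) (X ∪ S) + 2 * (e * t * x) := by nlinarith
  have hpa := phi_le (t := t) (x := a) ht (by linarith)
  have hpa1 := phi_gt (t := t) (x := a) ht (by linarith)
  have hpn1 : 1 ≤ phi t n := phi_gt ht hn0.le
  exact exp_arith he0 he1 hx0 hDpos hDt hxa hax hdrop hA h5 hpa hpa1 hpn1

theorem propA {V : Type} [Fintype V] [Nonempty V] (G : SimpleGraph V) (t : ℝ) (ht : 0 < t)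
    (col : V → Bool) (hbip : ∀ x y, G.Adj x y → col x ≠ col y)
    (hdeg : ∀ v, (#(nb G univ v) : ℝ) ≤ 1600 * t ^ 2)
    (hE : t * Fintype.card V ≤ ee G univ univ) :
    ∃ A : Finset V, A.Nonempty ∧
      RE (V := {x // x ∈ A}) (G.induce {x | x ∈ A}) t (fun x => col x.1) := by
  obtain ⟨A, hA, hmax⟩ := Finset.exists_max_image
    ((univ : Finset (Finset V)).filter (fun A => A.Nonempty))
    (fun A => (ee G A A : ℝ) / #A * phi t #A) ⟨univ, by simp [Finset.univ_nonempty]⟩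
  rw [Finset.mem_filter] at hA
  have hAne := hA.2
  have hA0 : (0:ℝ) < #A := by exact_mod_cast hAne.card_pos
  have hn0 : (0:ℝ) < Fintype.card V := by exact_mod_cast Fintype.card_pos
  have hD : t / 2 ≤ (ee G A A : ℝ) / #A := by
    have h1 := hmax univ (by simp [Finset.univ_nonempty])
    rw [Finset.card_univ] at h1
    have h2 : t ≤ (ee G univ univ : ℝ) / Fintype.card V := by rw [le_div_iff₀ hn0]; exact hE
    have h3 := phi_gt (t := t) (x := Fintype.card V) ht hn0.le
    have h4 := phi_le (t := t) (x := #A) ht hA0.le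
    have h5 : t ≤ (ee G univ univ : ℝ) / Fintype.card V * phi t (Fintype.card V) := by
      nlinarith
    have h6 : (ee G A A : ℝ) / #A * phi t #A ≤ (ee G A A : ℝ) / #A * 2 := by gcongr
    linarith
  have hD' : t / 2 * #A ≤ ee G A A := by rwa [le_div_iff₀ hA0] at hD
  have hbig : t / 2 ≤ #A := by
    have h1 : (ee G A A : ℝ) ≤ #A * #A := ee_le_mul (fun a _ => by
      exact_mod_cast Finset.card_le_card (Finset.filter_subset _ _))
    exact le_of_mul_le_mul_right (hD'.trans h1) hA0
  have : Nonempty {x // x ∈ A} := hAne.to_subtype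
  refine ⟨A, hAne, ⟨fun x y h => hbip _ _ h, ?_, ?_, by simpa using hbig⟩⟩
  · intro v
    rw [nb_induce_card]
    refine le_trans ?_ (hdeg v.1)
    exact_mod_cast Finset.card_le_card (Finset.filter_subset_filter _ (Finset.subset_univ _))
  · refine exp_of_extremal _ t ht ?_ ?_ ?_
    · rw [ee_induce_univ]; simpa using hD'
    · simpa using hbig
    · intro X hX
      rw [ee_induce_univ, ee_induce]
      have := hmax (X.map (Function.Embedding.subtype _)) (by simpa using hX)
      simpa using this

end BTK
end Part6

noncomputable section Part7
open Finset
namespace BTK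
open Classical
set_option linter.unusedSectionVars false

section PSsec
variable {V : Type} [Fintype V]

/-- `PS G x y n S`: a path from `x` to `y` of length `n` with vertex set `S` -/
inductive PS (G : SimpleGraph V) : V → V → ℕ → Finset V → Prop
  | nil (x : V) : PS G x x 0 {x}
  | cons {x y z : V} {n : ℕ} {S : Finset V} : G.Adj x y → PS G y z n S → x ∉ S →
      PS G x z (n + 1) (insert x S)

variable {G : SimpleGraph V}

lemma PS.left_mem {x y : V} {n : ℕ} {S : Finset V} (h : PS G x y n S) : x ∈ S := by
  cases h <;> simp

lemma PS.right_mem {x y : V} {n : ℕ} {S : Finset V} (h : PS G x y n S) : y ∈ S := by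
  induction h with
  | nil => simp
  | cons _ _ _ ih => exact Finset.mem_insert_of_mem ih

lemma PS.card {x y : V} {n : ℕ} {S : Finset V} (h : PS G x y n S) : #S = n + 1 := by
  induction h with
  | nil => simp
  | cons _ _ hx ih => rw [Finset.card_insert_of_notMem hx, ih]

lemma PS.trans {x y z : V} {n n' : ℕ} {S S' : Finset V} (h : PS G x y n S) (h' : PS G y z n' S')
    (hd : ∀ v ∈ S, v ∈ S' → v = y) : PS G x z (n + n') (S ∪ S') := by
  induction h with
  | nil x =>
    have : ({x} : Finset V) ∪ S' = S' := by
      rw [Finset.union_eq_right, Finset.singleton_subset_iff]; exact h'.left_mem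
    rw [this, zero_add]; exact h'
  | @cons x y' z' n S hadj hp hx ih =>
    rw [Finset.insert_union, show n + 1 + n' = n + n' + 1 by ring]
    refine PS.cons hadj (ih h' (fun v hv hv' => hd v (Finset.mem_insert_of_mem hv) hv')) ?_
    rw [Finset.mem_union]
    rintro (h | h)
    · exact hx h
    · have := hd x (Finset.mem_insert_self _ _) h
      exact hx (this ▸ hp.right_mem)

lemma PS.reverse {x y : V} {n : ℕ} {S : Finset V} (h : PS G x y n S) : PS G y x n S := by
  induction h with
  | nil x => exact PS.nil x
  | @cons x y' z' n S hadj hp hx ih =>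
    have h1 : PS G y' x 1 (insert y' {x}) := PS.cons hadj.symm (PS.nil x) (by simpa using hadj.ne')
    have := ih.trans h1 (by
      intro v hv hv'
      rw [Finset.mem_insert, Finset.mem_singleton] at hv'
      rcases hv' with h | h
      · exact h
      · exact absurd (h ▸ hv) hx)
    convert this using 1
    ext v
    have := hp.left_mem
    simp only [Finset.mem_insert, Finset.mem_union, Finset.mem_singleton]
    constructor
    · rintro (h | h) <;> simp [h]
    · rintro (h | h | h) <;> simp [h]
      right; exact this

lemma PS.suffix {x y z : V} {n : ℕ} {S : Finset V} (h : PS G x y n S) (hz : z ∈ S) :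
    ∃ n' ≤ n, ∃ S' ⊆ S, PS G z y n' S' := by
  induction h with
  | nil x =>
    rw [Finset.mem_singleton] at hz
    exact ⟨0, le_refl _, {x}, subset_refl _, hz ▸ PS.nil z⟩
  | @cons x y' z' n S hadj hp hx ih =>
    rw [Finset.mem_insert] at hz
    rcases hz with rfl | hz
    · exact ⟨_, le_refl _, _, subset_refl _, PS.cons hadj hp hx⟩
    · obtain ⟨n', h1, S', h2, h3⟩ := ih hz
      exact ⟨n', by omega, S', h2.trans (Finset.subset_insert _ _), h3⟩

lemma PS.join {x y z : V} {n n' : ℕ} {S S' : Finset V} (h : PS G x y n S) (h' : PS G y z n' S') :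
    ∃ n'' ≤ n + n', ∃ S'' ⊆ S ∪ S', PS G x z n'' S'' := by
  induction h with
  | nil x => exact ⟨n', by omega, S', Finset.subset_union_right, h'⟩
  | @cons x y' z' n S hadj hp hx ih =>
    obtain ⟨n'', h1, S'', h2, h3⟩ := ih h'
    by_cases hxS : x ∈ S''
    · obtain ⟨m, h4, T, h5, h6⟩ := h3.suffix hxS
      refine ⟨m, by omega, T, h5.trans (h2.trans ?_), h6⟩
      exact Finset.union_subset_union_left (Finset.subset_insert _ _)
    · refine ⟨n'' + 1, by omega, insert x S'', ?_, PS.cons hadj h3 hxS⟩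
      rw [Finset.insert_union]
      exact Finset.insert_subset_insert _ h2

lemma PS.parity {col : V → Bool} (hb : ∀ x y, G.Adj x y → col x ≠ col y)
    {x y : V} {n : ℕ} {S : Finset V} (h : PS G x y n S) : (col x = col y ↔ n % 2 = 0) := by
  induction h with
  | nil x => simp
  | @cons x y' z' n S hadj hp hx ih =>
    have := hb x y' hadj
    have e : (n + 1) % 2 = 0 ↔ ¬ (n % 2 = 0) := by omega
    rw [e, ← ih]
    revert this
    cases col x <;> cases col y' <;> cases col z' <;> simp

lemma PS.fn {x y : V} {n : ℕ} {S : Finset V} (h : PS G x y n S) :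
    ∃ p : ℕ → V, p 0 = x ∧ p n = y ∧ (∀ s < n, G.Adj (p s) (p (s + 1))) ∧
      (∀ s ≤ n, ∀ s' ≤ n, p s = p s' → s = s') ∧ ∀ s ≤ n, p s ∈ S := by
  induction h with
  | nil x => exact ⟨fun _ => x, rfl, rfl, by simp, by intros; omega, by simp⟩
  | @cons x y' z' n S hadj hp hx ih =>
    obtain ⟨p, h0, h1, h2, h3, h4⟩ := ih
    refine ⟨fun s => Nat.casesOn s x p, rfl, h1, ?_, ?_, ?_⟩
    · intro s hs
      cases s with
      | zero => simpa [h0] using hadj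
      | succ s => exact h2 s (by omega)
    · intro s hs s' hs' he
      cases s with
      | zero =>
        cases s' with
        | zero => rfl
        | succ s' =>
          have he' : x = p s' := he
          exact absurd (he' ▸ h4 s' (by omega)) hx
      | succ s =>
        cases s' with
        | zero =>
          have he' : p s = x := he
          exact absurd (he' ▸ h4 s (by omega)) hx
        | succ s' => rw [h3 s (by omega) s' (by omega) he]
    · intro s hs
      cases s with
      | zero => simp
      | succ s => exact Finset.mem_insert_of_mem (h4 s (by omega))

variable (G)
/-- layered growth -/
def lay (A : ℕ → Finset V) (y : V) : ℕ → Finset V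
  | 0 => {y}
  | i + 1 => lay A y i ∪ (A i).filter (fun v => ∃ u ∈ lay A y i, G.Adj u v)
/-- exact level -/
def isLev (A : ℕ → Finset V) (y v : V) (i : ℕ) : Prop := v ∈ lay G A y i ∧ ∀ j < i, v ∉ lay G A y j
variable {G}
variable {A : ℕ → Finset V} {y : V}

lemma lay_succ_subset (i : ℕ) : lay G A y i ⊆ lay G A y (i + 1) := Finset.subset_union_left

lemma lay_mono {i j : ℕ} (h : i ≤ j) : lay G A y i ⊆ lay G A y j :=
  monotone_nat_of_le_succ (f := lay G A y) (fun i => lay_succ_subset i) h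

lemma mem_lay_succ {i : ℕ} {v : V} : v ∈ lay G A y (i + 1) ↔
    v ∈ lay G A y i ∨ (v ∈ A i ∧ ∃ u ∈ lay G A y i, G.Adj u v) := by
  rw [lay, Finset.mem_union, Finset.mem_filter]

lemma self_mem_lay (i : ℕ) : y ∈ lay G A y i := lay_mono (Nat.zero_le i) (by simp [lay])

lemma exists_isLev {v : V} {i : ℕ} (h : v ∈ lay G A y i) : ∃ j ≤ i, isLev G A y v j := by
  have hex : ∃ j, v ∈ lay G A y j := ⟨i, h⟩
  exact ⟨Nat.find hex, Nat.find_min' hex h, Nat.find_spec hex, fun j hj => Nat.find_min hex hj⟩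

lemma isLev_unique {v : V} {i j : ℕ} (h : isLev G A y v i) (h' : isLev G A y v j) : i = j := by
  by_contra hne
  rcases Nat.lt_or_gt_of_ne hne with hlt | hlt
  · exact h'.2 i hlt h.1
  · exact h.2 j hlt h'.1

lemma isLev_le {v : V} {i j : ℕ} (h : isLev G A y v i) (h' : v ∈ lay G A y j) : i ≤ j := by
  by_contra hlt
  exact h.2 j (by omega) h'

lemma isLev_zero {v : V} (h : isLev G A y v 0) : v = y := by
  have := h.1; simpa [lay] using this

lemma isLev_self : isLev G A y y 0 := ⟨self_mem_lay 0, by simp⟩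

lemma isLev_succ {v : V} {i : ℕ} (h : isLev G A y v (i + 1)) :
    v ∈ A i ∧ ∃ u ∈ lay G A y i, G.Adj u v := by
  rcases mem_lay_succ.1 h.1 with h' | h'
  · exact absurd h' (h.2 i (by omega))
  · exact h'

lemma lay_path (hA : Antitone A) (hw : V → ℝ) (g : ℕ → ℝ) (hg : ∀ i, ∀ v ∈ A i, hw v ≤ g i)
    (r : ℕ) : ∀ v, isLev G A y v r → ∃ S, PS G v y r S ∧ (∀ u ∈ S, ∃ i ≤ r, isLev G A y u i) ∧
      (∀ i, #(S.filter (fun u => ∃ q, isLev G A y u q ∧ r ≤ q + i)) ≤ i + 1) ∧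
      ∑ u ∈ S.erase y, hw u ≤ ∑ i ∈ range r, g i ∧
      (∀ u ∈ S, isLev G A y u r → u = v) := by
  induction r with
  | zero =>
    intro v hv
    have := isLev_zero hv
    subst this
    refine ⟨{v}, PS.nil v, ?_, ?_, by simp, by simp⟩
    · intro u hu
      rw [Finset.mem_singleton] at hu
      exact ⟨0, le_refl _, hu ▸ hv⟩
    · intro i
      refine le_trans (Finset.card_filter_le _ _) (by simp)
  | succ r ih =>
    intro v hv
    obtain ⟨hvA, u, hu, huv⟩ := isLev_succ hv
    have hur : isLev G A y u r := by
      refine ⟨hu, fun j hj huj => ?_⟩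
      refine hv.2 (j + 1) (by omega) ?_
      exact mem_lay_succ.2 (Or.inr ⟨hA hj.le hvA, u, huj, huv⟩)
    obtain ⟨S, h1, h2, h3, h4, h5⟩ := ih u hur
    have hvS : v ∉ S := by
      intro h
      obtain ⟨i, hi, hi'⟩ := h2 v h
      have := isLev_unique hi' hv
      omega
    have hvy : v ≠ y := by
      rintro rfl
      have := isLev_unique hv isLev_self
      omega
    refine ⟨insert v S, PS.cons huv.symm h1 hvS, ?_, ?_, ?_, ?_⟩
    · intro z hz
      rw [Finset.mem_insert] at hz
      rcases hz with rfl | hz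
      · exact ⟨r + 1, le_refl _, hv⟩
      · obtain ⟨i, hi, hi'⟩ := h2 z hz
        exact ⟨i, by omega, hi'⟩
    · intro i
      rcases i with _ | i
      · have : (insert v S).filter (fun u => ∃ q, isLev G A y u q ∧ r + 1 ≤ q + 0) ⊆ {v} := by
          intro z hz
          rw [Finset.mem_filter, Finset.mem_insert] at hz
          obtain ⟨hz, q, hq, hq'⟩ := hz
          rcases hz with rfl | hz
          · simp
          · obtain ⟨i, hi, hi'⟩ := h2 z hz
            have := isLev_unique hi' hq
            omega
        simpa using Finset.card_le_card this
      · have : (insert v S).filter (fun u => ∃ q, isLev G A y u q ∧ r + 1 ≤ q + (i + 1)) ⊆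
            insert v (S.filter (fun u => ∃ q, isLev G A y u q ∧ r ≤ q + i)) := by
          intro z hz
          rw [Finset.mem_filter, Finset.mem_insert] at hz
          rw [Finset.mem_insert, Finset.mem_filter]
          obtain ⟨hz, q, hq, hq'⟩ := hz
          rcases hz with rfl | hz
          · simp
          · exact Or.inr ⟨hz, q, hq, by omega⟩
        refine (Finset.card_le_card this).trans ((Finset.card_insert_le _ _).trans ?_)
        have := h3 i
        omega
    · rw [Finset.erase_insert_of_ne hvy, Finset.sum_insert (by simp [hvS]), Finset.sum_range_succ]
      have := hg r v hvA
      linarith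
    · intro z hz hz'
      rw [Finset.mem_insert] at hz
      rcases hz with rfl | hz
      · rfl
      · obtain ⟨i, hi, hi'⟩ := h2 z hz
        have := isLev_unique hi' hz'
        omega

/-- transferring reachability -/
lemma lay_transfer (C : Finset V) (hC : ∀ i, C ⊆ A i) (h : V) (hh : h ∈ C) (i : ℕ) :
    ∀ (x : V) (j : ℕ), x ∈ lay G (fun _ => C) h i → x ∈ lay G A y j → h ∈ lay G A y (j + i) := by
  induction i with
  | zero =>
    intro x j hx hxj
    have : x = h := by simpa [lay] using hx
    exact this ▸ hxj
  | succ i ih =>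
    intro x j hx hxj
    rcases mem_lay_succ.1 hx with hx | ⟨hx, u, hu, hux⟩
    · exact lay_mono (by omega) (ih x j hx hxj)
    · have huC : u ∈ C := by
        obtain ⟨q, hq, hq'⟩ := exists_isLev hu
        rcases q with _ | q
        · exact (isLev_zero hq') ▸ hh
        · exact (isLev_succ hq').1
      have : u ∈ lay G A y (j + 1) := mem_lay_succ.2 (Or.inr ⟨hC j huC, x, hxj, hux.symm⟩)
      have := ih u (j + 1) hu this
      rwa [show j + 1 + i = j + (i + 1) by ring] at this

end PSsec
end BTK
end Part7

noncomputable section Part8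
open Finset
namespace BTK
open Classical
set_option linter.unusedSectionVars false

section Conn
variable {V : Type} [Fintype V] {G : SimpleGraph V}

lemma two_down (K : Finset V) (lev : V → ℕ)
    (hlev : ∀ u ∈ K, ∀ v ∈ K, G.Adj u v → lev u = lev v + 1 ∨ lev v = lev u + 1)
    (hK : 2 * #K < ee G K K) :
    ∃ u ∈ K, ∃ h ∈ K, ∃ h' ∈ K, h ≠ h' ∧ G.Adj u h ∧ G.Adj u h' ∧ lev u = lev h + 1 ∧
      lev u = lev h' + 1 := by
  set dn : V → ℕ := fun u => #(K.filter (fun v => G.Adj u v ∧ lev u = lev v + 1)) with hdn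
  have h1 : ee G K K ≤ ∑ u ∈ K, dn u + ∑ u ∈ K, dn u := by
    have e1 : ∑ u ∈ K, dn u = ∑ u ∈ K, #(K.filter (fun v => G.Adj u v ∧ lev v = lev u + 1)) := by
      simp only [hdn, Finset.card_filter]
      rw [Finset.sum_comm]
      simp [G.adj_comm]
    conv_rhs => rw [e1]
    nth_rewrite 1 [← e1]
    unfold ee
    rw [← Finset.sum_add_distrib]
    refine Finset.sum_le_sum fun u hu => ?_
    refine le_trans (Finset.card_le_card ?_) (Finset.card_union_le _ _)
    intro v hv
    obtain ⟨hv, huv⟩ := mem_nb.1 hv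
    rw [Finset.mem_union, Finset.mem_filter, Finset.mem_filter]
    rcases hlev u hu v hv huv with h | h
    · exact Or.inl ⟨hv, huv, h⟩
    · exact Or.inr ⟨hv, huv, h⟩
  have h2 : ∑ u ∈ K, 1 < ∑ u ∈ K, dn u := by simp; omega
  obtain ⟨u, hu, hu1⟩ := Finset.exists_lt_of_sum_lt h2
  obtain ⟨h, hh, h', hh', hne⟩ := Finset.one_lt_card.1 hu1
  rw [Finset.mem_filter] at hh hh'
  exact ⟨u, hu, h, hh.1, h', hh'.1, hne, hh.2.1, hh'.2.1, hh.2.2, hh'.2.2⟩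

lemma inter_of_card {X Y : Finset V} (hX : Fintype.card V < 2 * #X) (hY : Fintype.card V < 2 * #Y) :
    ∃ v, v ∈ X ∧ v ∈ Y := by
  by_contra h
  push Not at h
  have : Disjoint X Y := Finset.disjoint_left.2 h
  have := Finset.card_union_of_disjoint this
  have := Finset.card_le_univ (X ∪ Y)
  omega

lemma one_step {col : V → Bool} (hb : ∀ x y, G.Adj x y → col x ≠ col y) {A : ℕ → Finset V}
    (hA : Antitone A) (y : V) (m : ℕ) (hgrow : Fintype.card V < 2 * #(lay G A y m))
    (U : Finset V) (hyU : y ∈ U) (hUA : ∀ i, Uᶜ ⊆ A i) (K : Finset V) (hKU : K ⊆ Uᶜ)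
    (hK : 2 * #K < ee G K K)
    (hlive : ∀ h ∈ K, ∀ T : Finset V, #T ≤ 4 * m + 8 →
      (∀ i, #(T ∩ lay G (fun _ => Uᶜ) h i) ≤ 2 * i + 3) →
      Fintype.card V < 2 * #(lay G (fun _ => (U ∪ T.erase h)ᶜ) h m))
    (hw : V → ℝ) (g : ℕ → ℝ) (hg : ∀ i, ∀ v ∈ A i, hw v ≤ g i) (hg0 : ∀ i, 0 ≤ g i)
    (hwU : ∀ v, v ∉ U → hw v = 0) (c1 : ℝ) (hc1 : ∑ i ∈ range (2 * m), g i ≤ c1) :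
    ∃ h ∈ K, ∃ r, 1 ≤ r ∧ r ≤ 2 * m ∧ ∃ S1 S2, PS G h y r S1 ∧ PS G h y (r + 2) S2 ∧
      Fintype.card V < 2 * #(lay G (fun _ => (U ∪ (S1 ∪ S2).erase h)ᶜ) h m) ∧
      (∀ v ∈ S1 ∪ S2, v = y ∨ ∃ i, v ∈ A i) ∧ ∑ v ∈ S1.erase y, hw v ≤ c1 ∧
      ∑ v ∈ S2.erase y, hw v ≤ c1 ∧ #(S1 ∪ S2) ≤ 4 * m + 4 := by
  have hreach : ∀ h ∈ K, h ∈ lay G A y (2 * m) := by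
    intro h hh
    have h1 := hlive h hh ∅ (by simp) (by simp)
    simp only [Finset.erase_empty, Finset.union_empty] at h1
    obtain ⟨x, hx1, hx2⟩ := inter_of_card hgrow h1
    have := lay_transfer (A := A) (y := y) Uᶜ hUA h (hKU hh) m x m hx2 hx1
    rwa [two_mul]
  have hlevex : ∀ h : V, ∃ q, h ∈ K → q ≤ 2 * m ∧ isLev G A y h q := by
    intro h
    by_cases hh : h ∈ K
    · obtain ⟨q, hq⟩ := exists_isLev (hreach h hh)
      exact ⟨q, fun _ => hq⟩
    · exact ⟨0, fun h' => absurd h' hh⟩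
  choose lev hlev using hlevex
  have hpar : ∀ v r, isLev G A y v r → (col v = col y ↔ r % 2 = 0) := by
    intro v r hv
    obtain ⟨S, hS, -⟩ := lay_path hA hw g hg r v hv
    exact hS.parity hb
  have hedge : ∀ u ∈ K, ∀ v ∈ K, G.Adj u v → lev u ≤ lev v + 1 := by
    intro u hu v hv huv
    have h1 := (hlev v hv).2.1
    have h2 : u ∈ lay G A y (lev v + 1) :=
      mem_lay_succ.2 (Or.inr ⟨hUA _ (hKU hu), v, h1, huv.symm⟩)
    exact isLev_le (hlev u hu).2 h2
  obtain ⟨u, hu, h, hh, h', hh', hne, hadj, hadj', hl, hl'⟩ := two_down (G := G) K lev (by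
    intro u hu v hv huv
    have h1 := hedge u hu v hv huv
    have h2 := hedge v hv u hu huv.symm
    have h3 := hpar u _ (hlev u hu).2
    have h4 := hpar v _ (hlev v hv).2
    have h5 := hb u v huv
    have h6 : ¬ (lev u % 2 = 0 ↔ lev v % 2 = 0) := by
      rw [← h3, ← h4]
      revert h5
      cases col u <;> cases col v <;> cases col y <;> simp
    by_contra hc
    apply h6
    have : lev u = lev v := by omega
    rw [this]) hK
  set r := lev h with hr
  have hlh : isLev G A y h r := (hlev h hh).2
  have hlh' : isLev G A y h' r := by
    have := (hlev h' hh').2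
    rwa [show lev h' = r by omega] at this
  have hlu : isLev G A y u (r + 1) := by
    have := (hlev u hu).2
    rwa [hl] at this
  have hr1 : 1 ≤ r := by
    by_contra hc
    have h0 : r = 0 := by omega
    rw [h0] at hlh
    have := isLev_zero hlh
    have h2 := hKU hh
    rw [this, Finset.mem_compl] at h2
    exact h2 hyU
  have hr2 : r + 1 ≤ 2 * m := by
    have := (hlev u hu).1; omega
  obtain ⟨S1, p1, q1, t1, w1, z1⟩ := lay_path hA hw g hg r h hlh
  obtain ⟨S3, p3, q3, t3, w3, z3⟩ := lay_path hA hw g hg r h' hlh'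
  have huS3 : u ∉ S3 := by
    intro hc
    obtain ⟨i, hi, hi'⟩ := q3 u hc
    have := isLev_unique hi' hlu
    omega
  have hhS3 : h ∉ insert u S3 := by
    rw [Finset.mem_insert]
    rintro (hc | hc)
    · exact hadj.ne hc.symm
    · exact hne (z3 h hc hlh)
  have hyh : h ≠ y := by
    rintro rfl
    have := isLev_unique hlh isLev_self
    omega
  have hyu : u ≠ y := by
    rintro rfl
    have := isLev_unique hlu isLev_self
    omega
  set S2 := insert h (insert u S3) with hS2
  have p2 : PS G h y (r + 2) S2 := PS.cons hadj.symm (PS.cons hadj' p3 huS3) hhS3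
  have hcard : #(S1 ∪ S2) ≤ 4 * m + 4 := by
    have e1 := p1.card
    have e2 := p2.card
    have := Finset.card_union_le S1 S2
    omega
  have hsumr : ∑ i ∈ range r, g i ≤ c1 := by
    refine le_trans (Finset.sum_le_sum_of_subset_of_nonneg ?_ (fun i _ _ => hg0 i)) hc1
    intro i hi
    rw [Finset.mem_range] at hi ⊢; omega
  refine ⟨h, hh, r, hr1, by omega, S1, S2, p1, p2, ?_, ?_, ?_, ?_, hcard⟩
  · refine hlive h hh (S1 ∪ S2) (by omega) ?_
    intro i
    have hsub : (S1 ∪ S2) ∩ lay G (fun _ => Uᶜ) h i ⊆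
        S1.filter (fun v => ∃ q, isLev G A y v q ∧ r ≤ q + i) ∪
        (insert u (S3.filter (fun v => ∃ q, isLev G A y v q ∧ r ≤ q + i))) := by
      intro v hv
      rw [Finset.mem_inter] at hv
      have key : ∀ q, isLev G A y v q → r ≤ q + i := by
        intro q hq
        have := lay_transfer (A := A) (y := y) Uᶜ hUA h (hKU hh) i v q hv.2 hq.1
        exact isLev_le hlh this
      have hmem := hv.1
      rw [Finset.mem_union, hS2, Finset.mem_insert, Finset.mem_insert] at hmem
      rw [Finset.mem_union, Finset.mem_insert, Finset.mem_filter, Finset.mem_filter]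
      have c1 : v ∈ S1 → v ∈ S1 ∧ ∃ q, isLev G A y v q ∧ r ≤ q + i := by
        intro h1
        obtain ⟨q, -, hq⟩ := q1 v h1
        exact ⟨h1, q, hq, key q hq⟩
      rcases hmem with h1 | h1 | h1 | h1
      · exact Or.inl (c1 h1)
      · exact Or.inl (c1 (h1 ▸ p1.left_mem))
      · exact Or.inr (Or.inl h1)
      · obtain ⟨q, -, hq⟩ := q3 v h1
        exact Or.inr (Or.inr ⟨h1, q, hq, key q hq⟩)
    have := Finset.card_le_card hsub
    have e1 := Finset.card_union_le (S1.filter (fun v => ∃ q, isLev G A y v q ∧ r ≤ q + i))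
      (insert u (S3.filter (fun v => ∃ q, isLev G A y v q ∧ r ≤ q + i)))
    have e2 := Finset.card_insert_le u (S3.filter (fun v => ∃ q, isLev G A y v q ∧ r ≤ q + i))
    have := t1 i
    have := t3 i
    omega
  · have key : ∀ v q, isLev G A y v q → v = y ∨ ∃ i, v ∈ A i := by
      intro v q hq
      rcases q with _ | q
      · exact Or.inl (isLev_zero hq)
      · exact Or.inr ⟨q, (isLev_succ hq).1⟩
    intro v hv
    rw [Finset.mem_union, hS2, Finset.mem_insert, Finset.mem_insert] at hv
    rcases hv with h1 | h1 | h1 | h1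
    · obtain ⟨q, -, hq⟩ := q1 v h1; exact key v q hq
    · exact key v _ (h1 ▸ hlh)
    · exact key v _ (h1 ▸ hlu)
    · obtain ⟨q, -, hq⟩ := q3 v h1; exact key v q hq
  · linarith
  · have hh0 := hwU h (Finset.mem_compl.1 (hKU hh))
    have hu0 := hwU u (Finset.mem_compl.1 (hKU hu))
    rw [hS2, Finset.erase_insert_of_ne hyh, Finset.erase_insert_of_ne hyu,
      Finset.sum_insert, Finset.sum_insert, hh0, hu0]
    · linarith
    · simp [huS3]
    · rw [Finset.mem_insert, Finset.mem_erase]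
      rintro (hc | hc)
      · exact hhS3 (by simp [hc])
      · exact hhS3 (by simp [hc.2])

end Conn
end BTK
end Part8

noncomputable section Part9
open Finset
namespace BTK
open Classical
set_option linter.unusedSectionVars false

lemma sum_inv_sq (N : ℕ) : ∑ i ∈ range N, (1 / ((i : ℝ) + 1) ^ 2) ≤ 2 := by
  have : ∀ N : ℕ, ∑ i ∈ range N, (1 / ((i : ℝ) + 1) ^ 2) ≤ 2 - 1 / (N : ℝ) := by
    intro N
    induction N with
    | zero => simp
    | succ N ih =>
      rw [Finset.sum_range_succ]
      rcases Nat.eq_zero_or_pos N with h0 | h0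
      · subst h0; norm_num
      · have hN : (0 : ℝ) < N := by exact_mod_cast h0
        have : 1 / ((N : ℝ) + 1) ^ 2 ≤ 1 / N - 1 / (N + 1) := by
          rw [div_sub_div _ _ hN.ne' (by positivity), div_le_div_iff₀ (by positivity) (by positivity)]
          nlinarith
        push_cast
        linarith
  refine (this N).trans ?_
  have : (0 : ℝ) ≤ 1 / N := by positivity
  linarith

section Conn2
variable {V : Type} [Fintype V]

/-- thresholded allowed sets -/
def thrA (w : V → ℝ) (l : ℕ) (Z : Finset V) (i : ℕ) : Finset V :=
  univ.filter (fun v => w v ≤ max (1 / ((i : ℝ) + 1) ^ 2) (1 / (l : ℝ)) ∧ v ∉ Z)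

lemma thrA_anti (w : V → ℝ) (l : ℕ) (Z : Finset V) : Antitone (thrA w l Z) := by
  intro i j hij v hv
  simp only [thrA, Finset.mem_filter, Finset.mem_univ, true_and] at hv ⊢
  refine ⟨hv.1.trans (max_le_max ?_ le_rfl), hv.2⟩
  have : (i : ℝ) ≤ j := by exact_mod_cast hij
  gcongr

/-- heavy weight -/
def hvw (w : V → ℝ) (l : ℕ) (v : V) : ℝ := if 1 / (l : ℝ) < w v then w v else 0

lemma hvw_thr {w : V → ℝ} {l : ℕ} {Z : Finset V} {i : ℕ} {v : V} (h : v ∈ thrA w l Z i) :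
    hvw w l v ≤ 1 / ((i : ℝ) + 1) ^ 2 := by
  simp only [thrA, Finset.mem_filter, Finset.mem_univ, true_and] at h
  unfold hvw
  split_ifs with h1
  · rcases le_max_iff.1 h.1 with h2 | h2
    · exact h2
    · linarith
  · positivity

variable (G : SimpleGraph V)

/-- the state of the connection process -/
structure ST (w : V → ℝ) (l m : ℕ) (b : V) (Br Z0 U0 : Finset V) (A : ℕ → Finset V) (y : V)
    (Uc : Finset V) (L s : ℕ) (c : ℝ) (g : ℕ → ℝ) : Prop where
  anti : Antitone A
  grow : Fintype.card V < 2 * #(lay G A y m)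
  dis : ∀ i, ∀ v ∈ A i, v ∉ Uc ∧ v ∉ Z0 ∧ v ∉ Br
  sub : ∀ i, (insert y (U0 ∪ Uc))ᶜ ⊆ A i
  yU : y ∉ Uc
  yZ : y ∉ Z0
  yB : y ∈ Br → y = b
  UZ : ∀ v ∈ Uc, v ∉ Z0
  UB : ∀ v ∈ Uc, v ∈ Br → v = b
  Uk : #Uc ≤ (4 * m + 4) * s
  sL : s ≤ L
  Ls : L ≤ 2 * m * s
  g0 : ∀ i, 0 ≤ g i
  hg : ∀ i, ∀ v ∈ A i, hvw w l v ≤ g i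
  cg : c + ∑ i ∈ range (2 * m), g i ≤ 2
  path : ∀ j ≤ s, ∃ S ⊆ insert y Uc, PS G y b (L + 2 * j) S ∧ ∑ v ∈ S.erase b, hvw w l v ≤ c

variable {G}

lemma ST.step {col : V → Bool} (hb : ∀ x y, G.Adj x y → col x ≠ col y) {w : V → ℝ} (hw0 : ∀ v, 0 ≤ w v)
    {l m : ℕ} {b : V} {Br Z0 U0 : Finset V} (hBU : Br ⊆ U0) (hZU : Z0 ⊆ U0)
    (hWU : ∀ v, v ∉ U0 → w v ≤ 1 / (l : ℝ)) {u : ℕ}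
    (hiii : ∀ Uc : Finset V, #Uc ≤ u → ∃ K : Finset V, K ⊆ (U0 ∪ Uc)ᶜ ∧ 2 * #K < ee G K K ∧
      ∀ h ∈ K, ∀ T : Finset V, #T ≤ 4 * m + 8 →
      (∀ i, #(T ∩ lay G (fun _ => (U0 ∪ Uc)ᶜ) h i) ≤ 2 * i + 3) →
      Fintype.card V < 2 * #(lay G (fun _ => ((U0 ∪ Uc) ∪ T.erase h)ᶜ) h m))
    {A : ℕ → Finset V} {y : V} {Uc : Finset V} {L s : ℕ} {c : ℝ} {g : ℕ → ℝ}
    (hst : ST G w l m b Br Z0 U0 A y Uc L s c g) (hu : (4 * m + 4) * s + 1 ≤ u) :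
    ∃ A' y' Uc' r c', 1 ≤ r ∧ r ≤ 2 * m ∧
      ST G w l m b Br Z0 U0 A' y' Uc' (L + r) (s + 1) c' (fun _ => 0) := by
  have hcard : #(insert y Uc) ≤ u := by
    have := Finset.card_insert_le y Uc
    have := hst.Uk
    omega
  have hUeq : U0 ∪ insert y Uc = insert y (U0 ∪ Uc) := by
    rw [Finset.union_insert]
  have hh0 : ∀ v, 0 ≤ hvw w l v := by
    intro v; unfold hvw; split_ifs
    · exact hw0 v
    · exact le_rfl
  have hhU : ∀ v, v ∉ U0 → hvw w l v = 0 := by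
    intro v hv
    unfold hvw
    rw [if_neg (not_lt.2 (hWU v hv))]
  obtain ⟨K, hK1, hK2, hK3⟩ := hiii _ hcard
  rw [hUeq] at hK1 hK3
  obtain ⟨h, hhK, r, hr1, hr2, S1, S2, p1, p2, hlive, hSA, w1, w2, hSc⟩ :=
    one_step hb hst.anti y m hst.grow (insert y (U0 ∪ Uc)) (Finset.mem_insert_self _ _) hst.sub K hK1
    hK2 hK3 (hvw w l) g hst.hg hst.g0 (by
      intro v hv
      apply hhU
      intro hc
      exact hv (Finset.mem_insert_of_mem (Finset.mem_union_left _ hc)))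
    (∑ i ∈ range (2 * m), g i) le_rfl
  have hhU' := hK1 hhK
  rw [Finset.mem_compl, Finset.mem_insert, Finset.mem_union, not_or, not_or] at hhU'
  obtain ⟨hhy, hhU0, hhUc⟩ := hhU'
  have hyS : y ∈ (S1 ∪ S2).erase h :=
    Finset.mem_erase.2 ⟨fun hc => hhy hc.symm, Finset.mem_union_left _ p1.right_mem⟩
  set Uc' := Uc ∪ (S1 ∪ S2).erase h with hUc'
  have hUeq' : insert y (U0 ∪ Uc) ∪ (S1 ∪ S2).erase h = U0 ∪ Uc' := by
    rw [hUc', Finset.insert_union, ← Finset.union_assoc, Finset.insert_eq_of_mem]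
    exact Finset.mem_union_right _ hyS
  rw [hUeq'] at hlive
  have hmemUc : ∀ v ∈ Uc', v ∈ Uc ∨ v = y ∨ ∃ i, v ∈ A i := by
    intro v hv
    rcases Finset.mem_union.1 hv with hv | hv
    · exact Or.inl hv
    · exact Or.inr (hSA v (Finset.mem_of_mem_erase hv))
  have hcomb : ∀ (S S' : Finset V) (n n' : ℕ), S ⊆ S1 ∪ S2 → PS G h y n S →
      ∑ v ∈ S.erase y, hvw w l v ≤ ∑ i ∈ range (2 * m), g i → S' ⊆ insert y Uc → PS G y b n' S' →
      ∑ v ∈ S'.erase b, hvw w l v ≤ c →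
      ∃ S'' ⊆ insert h Uc', PS G h b (n + n') S'' ∧
        ∑ v ∈ S''.erase b, hvw w l v ≤ c + ∑ i ∈ range (2 * m), g i := by
    intro S S' n n' hS pS sS hS' pS' sS'
    refine ⟨S ∪ S', ?_, pS.trans pS' ?_, ?_⟩
    · intro v hv
      rw [Finset.mem_insert]
      by_cases hvh : v = h
      · exact Or.inl hvh
      · right
        rcases Finset.mem_union.1 hv with hv | hv
        · exact Finset.mem_union_right _ (Finset.mem_erase.2 ⟨hvh, hS hv⟩)
        · rcases Finset.mem_insert.1 (hS' hv) with hv | hv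
          · rw [hv]; exact Finset.mem_union_right _ hyS
          · exact Finset.mem_union_left _ hv
    · intro v hv hv'
      rcases hSA v (hS hv) with hv1 | ⟨i, hi⟩
      · exact hv1
      · rcases Finset.mem_insert.1 (hS' hv') with hv2 | hv2
        · exact hv2
        · exact absurd hv2 (hst.dis i v hi).1
    · have hsub : (S ∪ S').erase b ⊆ S.erase y ∪ S'.erase b := by
        intro v hv
        rw [Finset.mem_erase, Finset.mem_union] at hv
        rw [Finset.mem_union, Finset.mem_erase, Finset.mem_erase]
        by_cases hvy : v = y
        · right; exact ⟨hv.1, hvy ▸ pS'.left_mem⟩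
        · rcases hv.2 with h1 | h1
          · exact Or.inl ⟨hvy, h1⟩
          · exact Or.inr ⟨hv.1, h1⟩
      have e1 := Finset.sum_le_sum_of_subset_of_nonneg hsub (fun v _ _ => hh0 v)
      have e2 := Finset.sum_union_inter (s₁ := S.erase y) (s₂ := S'.erase b) (f := hvw w l)
      have e3 : 0 ≤ ∑ v ∈ S.erase y ∩ S'.erase b, hvw w l v := Finset.sum_nonneg fun v _ => hh0 v
      linarith
  refine ⟨fun _ => (U0 ∪ Uc')ᶜ, h, Uc', r, c + ∑ i ∈ range (2 * m), g i, hr1, hr2, ?_⟩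
  constructor
  · exact antitone_const
  · exact hlive
  · intro i v hv
    rw [Finset.mem_compl, Finset.mem_union, not_or] at hv
    exact ⟨hv.2, fun hc => hv.1 (hZU hc), fun hc => hv.1 (hBU hc)⟩
  · intro i
    exact Finset.compl_subset_compl.2 (Finset.subset_insert _ _)
  · intro hc
    rcases Finset.mem_union.1 hc with hc | hc
    · exact hhUc hc
    · exact (Finset.mem_erase.1 hc).1 rfl
  · exact fun hc => hhU0 (hZU hc)
  · exact fun hc => absurd (hBU hc) hhU0
  · intro v hv
    rcases hmemUc v hv with h1 | h1 | ⟨i, h1⟩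
    · exact hst.UZ v h1
    · rw [h1]; exact hst.yZ
    · exact (hst.dis i v h1).2.1
  · intro v hv hvB
    rcases hmemUc v hv with h1 | h1 | ⟨i, h1⟩
    · exact hst.UB v h1 hvB
    · rw [h1] at hvB ⊢; exact hst.yB hvB
    · exact absurd hvB (hst.dis i v h1).2.2
  · have e1 := Finset.card_union_le Uc ((S1 ∪ S2).erase h)
    have e2 := Finset.card_erase_le (s := S1 ∪ S2) (a := h)
    have e3 := hst.Uk
    rw [mul_add]
    rw [hUc']
    omega
  · have := hst.sL; omega
  · have := hst.Ls; rw [mul_add]; omega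
  · intro i; exact le_rfl
  · intro i v hv
    rw [Finset.mem_compl, Finset.mem_union, not_or] at hv
    exact (hhU v hv.1).le
  · simpa using hst.cg
  · intro j hj
    rcases Nat.lt_or_ge s j with hjs | hjs
    · obtain ⟨S', hS', pS', sS'⟩ := hst.path s le_rfl
      have := hcomb S2 S' _ _ Finset.subset_union_right p2 w2 hS' pS' sS'
      have hj' : j = s + 1 := by omega
      rw [hj', show L + r + 2 * (s + 1) = r + 2 + (L + 2 * s) by ring]
      exact this
    · obtain ⟨S', hS', pS', sS'⟩ := hst.path j hjs
      have := hcomb S1 S' _ _ Finset.subset_union_left p1 w1 hS' pS' sS'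
      rw [show L + r + 2 * j = r + (L + 2 * j) by ring]
      exact this

lemma ST.iter {col : V → Bool} (hb : ∀ x y, G.Adj x y → col x ≠ col y) {w : V → ℝ} (hw0 : ∀ v, 0 ≤ w v)
    {l m : ℕ} {b : V} {Br Z0 U0 : Finset V} (hBU : Br ⊆ U0) (hZU : Z0 ⊆ U0)
    (hWU : ∀ v, v ∉ U0 → w v ≤ 1 / (l : ℝ)) {u : ℕ} (hu : (4 * m + 4) * l + 1 ≤ u)
    (hiii : ∀ Uc : Finset V, #Uc ≤ u → ∃ K : Finset V, K ⊆ (U0 ∪ Uc)ᶜ ∧ 2 * #K < ee G K K ∧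
      ∀ h ∈ K, ∀ T : Finset V, #T ≤ 4 * m + 8 →
      (∀ i, #(T ∩ lay G (fun _ => (U0 ∪ Uc)ᶜ) h i) ≤ 2 * i + 3) →
      Fintype.card V < 2 * #(lay G (fun _ => ((U0 ∪ Uc) ∪ T.erase h)ᶜ) h m)) (N : ℕ) :
    ∀ {A : ℕ → Finset V} {y : V} {Uc : Finset V} {L s : ℕ} {c : ℝ} {g : ℕ → ℝ}
    (_ : ST G w l m b Br Z0 U0 A y Uc L s c g) (_ : L + 2 * m ≤ l) (_ : l - L ≤ N),
    ∃ A' y' Uc' L' s' c' g', L' + 2 * m ≤ l ∧ l < L' + 4 * m ∧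
      ST G w l m b Br Z0 U0 A' y' Uc' L' s' c' g' := by
  induction N with
  | zero =>
    intro A y Uc L s c g hst h1 h2
    have hm : 2 * m = 0 := by omega
    exfalso
    have hl : l = L := by omega
    have hus : (4 * m + 4) * s + 1 ≤ u := by
      have := hst.sL
      have : (4 * m + 4) * s ≤ (4 * m + 4) * l := Nat.mul_le_mul_left _ (by omega)
      omega
    obtain ⟨A', y', Uc', r, c', hr1, hr2, hst'⟩ := ST.step hb hw0 hBU hZU hWU hiii hst hus
    omega
  | succ N ih =>
    intro A y Uc L s c g hst h1 h2
    by_cases h3 : l < L + 4 * m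
    · exact ⟨A, y, Uc, L, s, c, g, h1, h3, hst⟩
    · have hus : (4 * m + 4) * s + 1 ≤ u := by
        have := hst.sL
        have : (4 * m + 4) * s ≤ (4 * m + 4) * l := Nat.mul_le_mul_left _ (by omega)
        omega
      obtain ⟨A', y', Uc', r, c', hr1, hr2, hst'⟩ := ST.step hb hw0 hBU hZU hWU hiii hst hus
      exact ih hst' (by omega) (by omega)

/-- Connect Lemma -/
lemma connect {col : V → Bool} (hb : ∀ x y, G.Adj x y → col x ≠ col y) {w : V → ℝ} (hw0 : ∀ v, 0 ≤ w v)
    {l m : ℕ} (hl : l = 4 * (m + 1) ^ 2) {a b : V} {Br Z0 U0 : Finset V} (hBU : Br ⊆ U0) (hZU : Z0 ⊆ U0)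
    (hWU : ∀ v, v ∉ U0 → w v ≤ 1 / (l : ℝ)) {u : ℕ} (hu : (4 * m + 4) * l + 1 ≤ u)
    (haB : a ∈ Br) (hbB : b ∈ Br) (hab : a ≠ b) (hcol : col a = col b) (hbZ : b ∉ Z0)
    (hi : Fintype.card V < 2 * #(lay G (thrA w l (Z0 ∪ Br)) b m))
    (hii : ∀ Uc : Finset V, #Uc ≤ u → (∀ v ∈ Uc, v ∉ Z0) →
      Fintype.card V < 2 * #(lay G (thrA w l (Uc ∪ Br)) a m))
    (hiii : ∀ Uc : Finset V, #Uc ≤ u → ∃ K : Finset V, K ⊆ (U0 ∪ Uc)ᶜ ∧ 2 * #K < ee G K K ∧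
      ∀ h ∈ K, ∀ T : Finset V, #T ≤ 4 * m + 8 →
      (∀ i, #(T ∩ lay G (fun _ => (U0 ∪ Uc)ᶜ) h i) ≤ 2 * i + 3) →
      Fintype.card V < 2 * #(lay G (fun _ => ((U0 ∪ Uc) ∪ T.erase h)ᶜ) h m)) :
    ∃ S, PS G a b l S ∧ (∀ v ∈ S, v ∈ Br → v = a ∨ v = b) ∧
      ∑ v ∈ (S.erase a).erase b, w v ≤ 8 := by
  have hh0 : ∀ v, 0 ≤ hvw w l v := by
    intro v; unfold hvw; split_ifs
    · exact hw0 v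
    · exact le_rfl
  have hmem : ∀ Z i v, v ∈ thrA w l Z i ↔ w v ≤ max (1 / ((i : ℝ) + 1) ^ 2) (1 / (l : ℝ)) ∧ v ∉ Z := by
    intro Z i v; simp [thrA]
  have st0 : ST G w l m b Br Z0 U0 (thrA w l (Z0 ∪ Br)) b ∅ 0 0 0 (fun i => 1 / ((i : ℝ) + 1) ^ 2) := by
    constructor
    · exact thrA_anti _ _ _
    · exact hi
    · intro i v hv
      rw [hmem, Finset.mem_union, not_or] at hv
      exact ⟨by simp, hv.2.1, hv.2.2⟩
    · intro i v hv
      rw [Finset.mem_compl, Finset.mem_insert, Finset.union_empty, not_or] at hv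
      rw [hmem, Finset.mem_union, not_or]
      exact ⟨(hWU v hv.2).trans (le_max_right _ _), fun hc => hv.2 (hZU hc), fun hc => hv.2 (hBU hc)⟩
    · simp
    · exact hbZ
    · exact fun _ => rfl
    · simp
    · simp
    · simp
    · simp
    · simp
    · intro i; positivity
    · intro i v hv; exact hvw_thr hv
    · rw [zero_add]; exact sum_inv_sq _
    · intro j hj
      refine ⟨{b}, by simp, ?_, by simp⟩
      rw [show 0 + 2 * j = 0 by omega]
      exact PS.nil b
  have hlm : l = 4 * m ^ 2 + 8 * m + 4 := by rw [hl]; ring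
  obtain ⟨A, y, Uc, L, s, c, g, hL1, hL2, hst⟩ := ST.iter hb hw0 hBU hZU hWU hu hiii l st0
    (by rw [hlm]; nlinarith [Nat.zero_le m]) (by omega)
  have hsm : 2 * m ≤ s := by
    by_contra hc
    push Not at hc
    have h1 := hst.Ls
    have h2 : 2 * m * s ≤ 2 * m * (2 * m) := Nat.mul_le_mul_left _ hc.le
    nlinarith
  have haUc : a ∉ Uc := fun hc => hab (hst.UB a hc haB)
  have hUcu : #Uc ≤ u := by
    have h1 := hst.Uk
    have h2 := hst.sL
    have : (4 * m + 4) * s ≤ (4 * m + 4) * l := Nat.mul_le_mul_left _ (by omega)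
    omega
  obtain ⟨x, hxa, hxy⟩ := inter_of_card (hii Uc hUcu hst.UZ) hst.grow
  obtain ⟨ra, hra, hla⟩ := exists_isLev hxa
  obtain ⟨ry, hry, hly⟩ := exists_isLev hxy
  obtain ⟨Sa, pa, qa, -, wa, -⟩ := lay_path (thrA_anti _ _ _) (hvw w l)
    (fun i => 1 / ((i : ℝ) + 1) ^ 2) (fun i v hv => hvw_thr hv) ra x hla
  obtain ⟨Sy, py, qy, -, wy, -⟩ := lay_path hst.anti (hvw w l) g hst.hg ry x hly
  obtain ⟨p, hp, S, hS, pS⟩ := pa.reverse.join py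
  have hSa : ∀ v ∈ Sa, v = a ∨ (v ∉ Uc ∧ v ∉ Br) := by
    intro v hv
    obtain ⟨i, -, hi⟩ := qa v hv
    rcases i with _ | i
    · exact Or.inl (isLev_zero hi)
    · right
      have := (isLev_succ hi).1
      rw [hmem, Finset.mem_union, not_or] at this
      exact this.2
  have hSy : ∀ v ∈ Sy, v = y ∨ (v ∉ Uc ∧ v ∉ Br) := by
    intro v hv
    obtain ⟨i, -, hi⟩ := qy v hv
    rcases i with _ | i
    · exact Or.inl (isLev_zero hi)
    · right
      have := hst.dis _ _ (isLev_succ hi).1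
      exact ⟨this.1, this.2.2⟩
  have hSS : ∀ v ∈ S, v ∉ Uc ∧ (v ∈ Br → v = a ∨ v = b) := by
    intro v hv
    rcases Finset.mem_union.1 (hS hv) with h1 | h1
    · rcases hSa v h1 with h2 | h2
      · rw [h2]; exact ⟨haUc, fun _ => Or.inl rfl⟩
      · exact ⟨h2.1, fun hc => absurd hc h2.2⟩
    · rcases hSy v h1 with h2 | h2
      · rw [h2]; exact ⟨hst.yU, fun hc => Or.inr (hst.yB hc)⟩
      · exact ⟨h2.1, fun hc => absurd hc h2.2⟩
  have hj : ∃ j, j ≤ s ∧ p + (L + 2 * j) = l := by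
    obtain ⟨S0, -, p0, -⟩ := hst.path 0 (Nat.zero_le _)
    have h1 := p0.parity hb
    have h2 := pS.parity hb
    rw [hcol] at h2
    have h3 : (p % 2 = 0 ↔ L % 2 = 0) := by
      rw [← h2]
      have : (L + 2 * 0) % 2 = L % 2 := by omega
      rw [this] at h1
      rw [← h1]
      exact eq_comm
    have h4 : l % 2 = 0 := by rw [hl]; omega
    refine ⟨(l - p - L) / 2, ?_, ?_⟩ <;> omega
  obtain ⟨j, hjs, hjl⟩ := hj
  obtain ⟨S', hS', pS', sS'⟩ := hst.path j hjs
  have pf := pS.trans pS' (by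
    intro v hv hv'
    rcases Finset.mem_insert.1 (hS' hv') with h1 | h1
    · exact h1
    · exact absurd h1 (hSS v hv).1)
  rw [hjl] at pf
  refine ⟨S ∪ S', pf, ?_, ?_⟩
  · intro v hv hvB
    rcases Finset.mem_union.1 hv with h1 | h1
    · exact (hSS v h1).2 hvB
    · rcases Finset.mem_insert.1 (hS' h1) with h1 | h1
      · rw [h1] at hvB ⊢; exact Or.inr (hst.yB hvB)
      · exact Or.inr (hst.UB v h1 hvB)
  · have hl0 : (0 : ℝ) < l := by
      have : 0 < l := by rw [hl]; positivity
      exact_mod_cast this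
    have hwle : ∀ v, w v ≤ hvw w l v + 1 / l := by
      intro v
      unfold hvw
      split_ifs with h1
      · have : (0 : ℝ) ≤ 1 / l := by positivity
        linarith
      · push Not at h1; linarith
    have e1 : ∑ v ∈ ((S ∪ S').erase a).erase b, w v ≤
        ∑ v ∈ ((S ∪ S').erase a).erase b, hvw w l v + #(((S ∪ S').erase a).erase b) * (1 / (l : ℝ)) := by
      rw [← nsmul_eq_mul, ← Finset.sum_const, ← Finset.sum_add_distrib]
      exact Finset.sum_le_sum fun v _ => hwle v
    have e2 : (#(((S ∪ S').erase a).erase b) : ℝ) * (1 / (l : ℝ)) ≤ 2 := by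
      have h1 : #(((S ∪ S').erase a).erase b) ≤ l + 1 := by
        rw [← pf.card]
        exact Finset.card_le_card ((Finset.erase_subset _ _).trans (Finset.erase_subset _ _))
      have h2 : (#(((S ∪ S').erase a).erase b) : ℝ) ≤ l + 1 := by exact_mod_cast h1
      have h3 : (1 : ℝ) ≤ l := by exact_mod_cast hl0
      rw [mul_one_div, div_le_iff₀ hl0]
      linarith
    have hsub : ((S ∪ S').erase a).erase b ⊆ (Sa.erase a ∪ Sy.erase y) ∪ S'.erase b := by
      intro v hv
      simp only [Finset.mem_erase, Finset.mem_union] at hv ⊢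
      obtain ⟨hvb, hva, hv⟩ := hv
      by_cases hvy : v = y
      · right; exact ⟨hvb, hvy ▸ pS'.left_mem⟩
      · rcases hv with h1 | h1
        · rcases Finset.mem_union.1 (hS h1) with h2 | h2
          · exact Or.inl (Or.inl ⟨hva, h2⟩)
          · exact Or.inl (Or.inr ⟨hvy, h2⟩)
        · exact Or.inr ⟨hvb, h1⟩
    have f1 := Finset.sum_le_sum_of_subset_of_nonneg hsub (fun v _ _ => hh0 v)
    have f2 := Finset.sum_union_inter (s₁ := Sa.erase a ∪ Sy.erase y) (s₂ := S'.erase b) (f := hvw w l)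
    have f3 := Finset.sum_union_inter (s₁ := Sa.erase a) (s₂ := Sy.erase y) (f := hvw w l)
    have f4 : 0 ≤ ∑ v ∈ (Sa.erase a ∪ Sy.erase y) ∩ S'.erase b, hvw w l v :=
      Finset.sum_nonneg fun v _ => hh0 v
    have f5 : 0 ≤ ∑ v ∈ Sa.erase a ∩ Sy.erase y, hvw w l v :=
      Finset.sum_nonneg fun v _ => hh0 v
    have f6 := sum_inv_sq ra
    have f7 : ∑ i ∈ range ry, g i ≤ ∑ i ∈ range (2 * m), g i := by
      refine Finset.sum_le_sum_of_subset_of_nonneg ?_ (fun i _ _ => hst.g0 i)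
      intro i hi
      rw [Finset.mem_range] at hi ⊢; omega
    have f8 := hst.cg
    linarith
end Conn2
end BTK
end Part9

noncomputable section Part10
open Finset
namespace BTK
open Classical
set_option linter.unusedSectionVars false

section Growth

lemma Lg_pow {t x : ℝ} (ht : 0 < t) (hx : t / 1600 ≤ x) (p : ℕ) :
    Lg t x ^ p ≤ p.factorial * 4803 * (x / t) := by
  have hx0 : 0 ≤ x := le_trans (by positivity) hx
  have hL := one_le_Lg ht hx0
  have h1 := Real.pow_div_factorial_le_exp (Lg t x) (by linarith) p
  have hf : (0 : ℝ) < p.factorial := by exact_mod_cast p.factorial_pos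
  rw [div_le_iff₀ hf] at h1
  have h2 : Real.exp (Lg t x) ≤ 3 * (1 + x / t) := by
    unfold Lg
    have h0 : 0 < 1 + x / t := by positivity
    rw [Real.exp_add, Real.exp_log h0]
    have := Real.exp_one_lt_d9
    gcongr
    linarith
  have h3 : (1 : ℝ) ≤ 1600 * (x / t) := by
    rw [← mul_div_assoc, le_div_iff₀ ht]; linarith
  have h4 : Real.exp (Lg t x) ≤ 4803 * (x / t) := by linarith
  calc Lg t x ^ p ≤ Real.exp (Lg t x) * p.factorial := h1
    _ ≤ 4803 * (x / t) * p.factorial := by gcongr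
    _ = _ := by ring

lemma Lg_step {t x x' : ℝ} (ht : 0 < t) (hx : t / 1600 ≤ x) (hx' : x * (1 + eps t x / 2) ≤ x') :
    1 + 1000000 * Lg t x ^ 3 ≤ 1000000 * Lg t x' ^ 3 := by
  have hx0 : 0 < x := lt_of_lt_of_le (by positivity) hx
  have hL := one_le_Lg ht hx0.le
  have he := eps_pos ht hx0.le
  have he2 := eps_le ht hx0.le
  have hx'0 : 0 < x' := lt_of_lt_of_le (by positivity) hx'
  set e := eps t x with hee
  have key : Lg t x + e / 6404 ≤ Lg t x' := by
    unfold Lg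
    have h1 : 0 < 1 + x / t := by positivity
    have h2 : (1 + x / t) * (1 + e / 3202) ≤ 1 + x' / t := by
      have hy : 1 / 1600 ≤ x / t := by rw [le_div_iff₀ ht]; linarith
      have hy' : x / t * (1 + e / 2) ≤ x' / t := by
        rw [div_mul_eq_mul_div]; gcongr
      set Y := x / t
      nlinarith
    have h3 : e / 6404 ≤ Real.log (1 + e / 3202) := by
      have := Real.one_sub_inv_le_log_of_pos (x := 1 + e / 3202) (by positivity)
      refine le_trans ?_ this
      rw [le_sub_iff_add_le, ← le_sub_iff_add_le', inv_le_iff_one_le_mul₀ (by positivity)]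
      nlinarith
    have h4 := Real.log_le_log (by positivity) h2
    rw [Real.log_mul h1.ne' (by positivity)] at h4
    linarith
  have heL : e * Lg t x ^ 2 = 1 / 200 := by
    rw [hee]; unfold eps
    have : Lg t x ≠ 0 := by linarith
    field_simp
  set L := Lg t x
  set L' := Lg t x'
  have h5 : (L + e / 6404) ^ 3 ≤ L' ^ 3 := by gcongr
  have h6 : L ^ 3 + 3 * (e * L ^ 2) / 6404 ≤ (L + e / 6404) ^ 3 := by
    have : (L + e / 6404) ^ 3 = L ^ 3 + 3 * (e * L ^ 2) / 6404 + (3 * L * (e / 6404) ^ 2 + (e / 6404) ^ 3) := by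
      ring
    rw [this]
    have : 0 ≤ (3 * L * (e / 6404) ^ 2 + (e / 6404) ^ 3) := by positivity
    linarith
  rw [heL] at h6
  linarith

variable {V : Type} [Fintype V] {G : SimpleGraph V}

/-- vertices lost at step `i` -/
def lost (G : SimpleGraph V) (A : ℕ → Finset V) (y : V) (i : ℕ) : Finset V :=
  univ.filter (fun v => v ∉ A i ∧ v ∉ lay G A y i ∧ ∃ u ∈ lay G A y i, G.Adj u v)

lemma mem_lost {A : ℕ → Finset V} {y : V} {i : ℕ} {v : V} :
    v ∈ lost G A y i ↔ v ∉ A i ∧ v ∉ lay G A y i ∧ ∃ u ∈ lay G A y i, G.Adj u v := by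
  simp [lost]

/-- outer neighbourhood -/
def onb (G : SimpleGraph V) (X : Finset V) : Finset V :=
  univ.filter (fun v => v ∉ X ∧ ∃ u ∈ X, G.Adj u v)

lemma ee_onb (X : Finset V) : ee G X (X ∪ onb G X)ᶜ = 0 := by
  unfold ee
  apply Finset.sum_eq_zero
  intro a ha
  rw [Finset.card_eq_zero, Finset.eq_empty_iff_forall_notMem]
  intro v hv
  obtain ⟨h1, h2⟩ := mem_nb.1 hv
  rw [Finset.mem_compl, Finset.mem_union, not_or] at h1
  apply h1.2
  simp only [onb, Finset.mem_filter, Finset.mem_univ, true_and]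
  exact ⟨h1.1, a, ha, h2⟩

lemma onb_lay (A : ℕ → Finset V) (y : V) (i : ℕ) :
    #(lay G A y i) + #(onb G (lay G A y i)) ≤ #(lay G A y (i + 1)) + #(lost G A y i) := by
  have h1 : Disjoint (lay G A y i) (onb G (lay G A y i)) := by
    rw [Finset.disjoint_left]
    intro v hv hv'
    simp only [onb, Finset.mem_filter, Finset.mem_univ, true_and] at hv'
    exact hv'.1 hv
  rw [← Finset.card_union_of_disjoint h1]
  refine le_trans (Finset.card_le_card ?_) (Finset.card_union_le _ _)
  intro v hv
  rw [Finset.mem_union, mem_lay_succ, mem_lost]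
  rw [Finset.mem_union] at hv
  simp only [onb, Finset.mem_filter, Finset.mem_univ, true_and] at hv
  by_cases hv1 : v ∈ lay G A y i
  · exact Or.inl (Or.inl hv1)
  · by_cases hv2 : v ∈ A i
    · rcases hv with hv | hv
      · exact absurd hv hv1
      · exact Or.inl (Or.inr ⟨hv2, hv.2⟩)
    · rcases hv with hv | hv
      · exact absurd hv hv1
      · exact Or.inr ⟨hv2, hv1, hv.2⟩

lemma RE.onb_gt {t : ℝ} {col : V → Bool} (h : RE G t col) (ht : 0 < t) {X : Finset V} (hX : X.Nonempty)
    (hXn : (#X : ℝ) ≤ 3 / 5 * Fintype.card V) : eps t #X * #X < #(onb G X) := by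
  by_contra hc
  push Not at hc
  have h1 := h.exp X (onb G X) hX hXn hc
  rw [ee_onb] at h1
  have h2 := eps_pos ht (Nat.cast_nonneg (#X))
  have h3 : (0 : ℝ) < #X := by exact_mod_cast hX.card_pos
  have : 0 < eps t #X * t * #X := by positivity
  push_cast at h1
  linarith

lemma RE.onb_one {t : ℝ} {col : V → Bool} (h : RE G t col) (ht : 4 ≤ t) (y : V) :
    t / 800 ≤ #(onb G {y}) := by
  have h1 := h.exp {y} ∅ (by simp) (by
    have := h.big
    simp only [Finset.card_singleton, Nat.cast_one]
    linarith) (by simpa using (eps_pos (by linarith) (by norm_num)).le)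
  simp only [Finset.card_singleton, Nat.cast_one, mul_one, Finset.union_empty] at h1
  have h2 : (1 : ℝ) / 800 ≤ eps t 1 := by
    unfold eps
    have h3 := one_le_Lg (t := t) (x := 1) (by linarith) (by norm_num)
    have h4 : Lg t 1 ≤ 2 := by
      unfold Lg
      have := Real.log_le_sub_one_of_pos (x := 1 + 1 / t) (by positivity)
      have : 1 / t ≤ 1 := by rw [div_le_iff₀ (by linarith)]; linarith
      linarith
    apply one_div_le_one_div_of_le (by positivity)
    nlinarith
  have h3 : ee G {y} {y}ᶜ = #(onb G {y}) := by
    unfold ee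
    rw [Finset.sum_singleton]
    congr 1
    ext v
    simp [mem_nb, onb]
  rw [h3] at h1
  have : (1 : ℝ) / 800 * t ≤ eps t 1 * t := by gcongr
  linarith

lemma RE.card_pos {t : ℝ} {col : V → Bool} (h : RE G t col) (ht : 4 ≤ t) : (0 : ℝ) < Fintype.card V := by
  have := h.big
  linarith

lemma growth {t : ℝ} {col : V → Bool} (h : RE G t col) (ht : 4 ≤ t) (A : ℕ → Finset V) (y : V)
    (h0 : (#(lost G A y 0) : ℝ) ≤ t / 1600)
    (h1 : ∀ i : ℕ, 1 ≤ i → t / 1600 ≤ #(lay G A y i) → (#(lay G A y i) : ℝ) ≤ 3 / 5 * Fintype.card V →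
      (i : ℝ) ≤ 1 + 1000000 * Lg t #(lay G A y i) ^ 3 →
      (#(lost G A y i) : ℝ) ≤ eps t #(lay G A y i) / 2 * #(lay G A y i))
    (m : ℕ) (hm : 1 + 1000000 * Lg t (Fintype.card V) ^ 3 < m) :
    Fintype.card V < 2 * #(lay G A y m) := by
  have ht0 : 0 < t := by linarith
  have hx1 : t / 1600 ≤ #(lay G A y 1) := by
    have e1 := onb_lay (G := G) A y 0
    have e2 : lay G A y 0 = {y} := rfl
    rw [e2] at e1
    have e3 := h.onb_one ht y
    have e4 : ((#({y} : Finset V) : ℝ)) + #(onb G {y}) ≤ #(lay G A y (0 + 1)) + #(lost G A y 0) := by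
      exact_mod_cast e1
    simp only [zero_add] at e4
    have : (0 : ℝ) ≤ #({y} : Finset V) := by positivity
    linarith
  have hxi : ∀ i : ℕ, 1 ≤ i → t / 1600 ≤ #(lay G A y i) := by
    intro i hi
    refine hx1.trans ?_
    exact_mod_cast Finset.card_le_card (lay_mono (G := G) (A := A) (y := y) hi)
  have key : ∀ i : ℕ, 1 ≤ i → (3 / 5 * Fintype.card V < (#(lay G A y i) : ℝ)) ∨
      (i : ℝ) ≤ 1 + 1000000 * Lg t #(lay G A y i) ^ 3 := by
    intro i hi
    induction i, hi using Nat.le_induction with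
    | base =>
      right
      have := one_le_Lg ht0 (Nat.cast_nonneg (#(lay G A y 1)))
      push_cast
      have : 0 ≤ Lg t #(lay G A y 1) ^ 3 := by positivity
      linarith
    | succ i hi ih =>
      have hmono : (#(lay G A y i) : ℝ) ≤ #(lay G A y (i + 1)) := by
        exact_mod_cast Finset.card_le_card (lay_succ_subset (G := G) (A := A) (y := y) i)
      by_cases hbig : 3 / 5 * (Fintype.card V : ℝ) < (#(lay G A y i) : ℝ)
      · left; linarith
      · push Not at hbig
        have hi2 : (i : ℝ) ≤ 1 + 1000000 * Lg t #(lay G A y i) ^ 3 := by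
          rcases ih with ih | ih
          · linarith
          · exact ih
        right
        have e1 := h1 i hi (hxi i hi) hbig hi2
        have e2 : ((#(lay G A y i) : ℝ)) + #(onb G (lay G A y i)) ≤
            #(lay G A y (i + 1)) + #(lost G A y i) := by
          exact_mod_cast onb_lay (G := G) A y i
        have e3 := h.onb_gt ht0 ⟨y, self_mem_lay i⟩ hbig
        have e4 := Lg_step (x' := #(lay G A y (i + 1))) ht0 (hxi i hi) (by nlinarith)
        push_cast
        linarith
  by_contra hc
  push Not at hc
  have hn := h.card_pos ht
  have hc' : 2 * (#(lay G A y m) : ℝ) ≤ Fintype.card V := by exact_mod_cast hc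
  have hL1 := one_le_Lg ht0 (Nat.cast_nonneg (Fintype.card V))
  have hm1 : 1 ≤ m := by
    have : (1 : ℝ) < m := by
      refine lt_of_le_of_lt ?_ hm
      have : 0 ≤ Lg t (Fintype.card V) ^ 3 := by positivity
      linarith
    exact_mod_cast this.le
  rcases key m hm1 with hk | hk
  · linarith
  · have : Lg t #(lay G A y m) ≤ Lg t (Fintype.card V) :=
      Lg_mono ht0 (Nat.cast_nonneg _) (by exact_mod_cast Finset.card_le_univ _)
    have h2 := one_le_Lg ht0 (Nat.cast_nonneg (#(lay G A y m)))
    have : Lg t #(lay G A y m) ^ 3 ≤ Lg t (Fintype.card V) ^ 3 := by gcongr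
    linarith

/-- Chebyshev-like count -/
lemma heavy_count {w : V → ℝ} {B r : ℝ} (hr : 0 < r) (hB : ∑ v, w v ^ 2 ≤ B) :
    (#(univ.filter (fun v => 1 / r < w v)) : ℝ) ≤ B * r ^ 2 := by
  have h1 : ∑ v ∈ univ.filter (fun v => 1 / r < w v), (1 / r) ^ 2 ≤ ∑ v, w v ^ 2 := by
    refine le_trans (Finset.sum_le_sum (g := fun v => w v ^ 2) ?_)
      (Finset.sum_le_sum_of_subset_of_nonneg (Finset.filter_subset _ _) (fun v _ _ => sq_nonneg _))
    intro v hv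
    rw [Finset.mem_filter] at hv
    have : 0 < 1 / r := by positivity
    have := hv.2
    gcongr
  rw [Finset.sum_const, nsmul_eq_mul] at h1
  have h2 := h1.trans hB
  rw [div_pow, one_pow, mul_one_div, div_le_iff₀ (by positivity)] at h2
  exact h2

end Growth
end BTK
end Part10

noncomputable section Part11
open Finset
namespace BTK
open Classical
set_option linter.unusedSectionVars false

section GrowthThr
variable {V : Type} [Fintype V] {G : SimpleGraph V}

/-- forbidden vertices met at step `i` -/
def zl (G : SimpleGraph V) (A : ℕ → Finset V) (Z : Finset V) (y : V) (i : ℕ) : Finset V :=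
  Z.filter (fun v => v ∉ lay G A y i ∧ ∃ u ∈ lay G A y i, G.Adj u v)

lemma heavy_arith {t x i : ℝ} (ht : 0 < t) (hi0 : 0 ≤ i) (hx : t / 1600 ≤ x)
    (hi : i ≤ 1 + 1000000 * Lg t x ^ 3) :
    1 / 10 ^ 50 * t * ((i + 1) ^ 2) ^ 2 ≤ eps t x / 4 * x := by
  have hx0 : 0 < x := lt_of_lt_of_le (by positivity) hx
  have hL := one_le_Lg ht hx0.le
  have h14 := Lg_pow ht hx 14
  set L := Lg t x with hLd
  have h1 : i + 1 ≤ 1000002 * L ^ 3 := by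
    have : 1 ≤ L ^ 3 := one_le_pow₀ hL
    linarith
  have h2 : ((i + 1) ^ 2) ^ 2 ≤ ((1000002 * L ^ 3) ^ 2) ^ 2 := by gcongr
  have h3 : eps t x = 1 / (200 * L ^ 2) := rfl
  rw [h3]
  have h4 : 1 / (200 * L ^ 2) / 4 * x = x / (800 * L ^ 2) := by
    field_simp; norm_num
  rw [h4, le_div_iff₀ (by positivity)]
  have h5 : 1 / 10 ^ 50 * t * ((i + 1) ^ 2) ^ 2 * (800 * L ^ 2) ≤
      1 / 10 ^ 50 * t * ((1000002 * L ^ 3) ^ 2) ^ 2 * (800 * L ^ 2) := by gcongr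
  refine h5.trans ?_
  have h6 : 1 / 10 ^ 50 * t * ((1000002 * L ^ 3) ^ 2) ^ 2 * (800 * L ^ 2) =
    (1 / 10 ^ 50 * 1000002 ^ 4 * 800) * t * L ^ 14 := by ring
  rw [h6]
  have h7 : (1 / 10 ^ 50 * 1000002 ^ 4 * 800) * t * L ^ 14 ≤
    (1 / 10 ^ 50 * 1000002 ^ 4 * 800) * t * ((14 : ℕ).factorial * 4803 * (x / t)) := by gcongr
  refine h7.trans ?_
  have h8 : (1 / 10 ^ 50 * 1000002 ^ 4 * 800) * t * ((14 : ℕ).factorial * 4803 * (x / t)) =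
    (1 / 10 ^ 50 * 1000002 ^ 4 * 800 * ((14 : ℕ).factorial * 4803)) * x := by
    field_simp
  rw [h8]
  have h9 : (1 / 10 ^ 50 * 1000002 ^ 4 * 800 * (((14 : ℕ).factorial : ℝ) * 4803)) ≤ 1 := by
    norm_num [Nat.factorial]
  nlinarith

lemma growth_thr {t : ℝ} {col : V → Bool} (h : RE G t col) (ht : 4 ≤ t) (w : V → ℝ) (l : ℕ)
    (hw : ∑ v, w v ^ 2 ≤ 1 / 10 ^ 50 * t) (Z : Finset V) (y : V)
    (h0 : (#(zl G (thrA w l Z) Z y 0) : ℝ) ≤ t / 3200)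
    (h1 : ∀ i : ℕ, 1 ≤ i → t / 1600 ≤ #(lay G (thrA w l Z) y i) →
      (#(lay G (thrA w l Z) y i) : ℝ) ≤ 3 / 5 * Fintype.card V →
      (i : ℝ) ≤ 1 + 1000000 * Lg t #(lay G (thrA w l Z) y i) ^ 3 →
      (#(zl G (thrA w l Z) Z y i) : ℝ) ≤ eps t #(lay G (thrA w l Z) y i) / 4 * #(lay G (thrA w l Z) y i))
    (m : ℕ) (hm : 1 + 1000000 * Lg t (Fintype.card V) ^ 3 < m) :
    Fintype.card V < 2 * #(lay G (thrA w l Z) y m) := by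
  have hl : ∀ i, (#(lost G (thrA w l Z) y i) : ℝ) ≤
      1 / 10 ^ 50 * t * (((i : ℝ) + 1) ^ 2) ^ 2 + #(zl G (thrA w l Z) Z y i) := by
    intro i
    have e1 := heavy_count (w := w) (r := ((i : ℝ) + 1) ^ 2) (by positivity) hw
    have e2 : #(lost G (thrA w l Z) y i) ≤ #(univ.filter (fun v => 1 / ((i : ℝ) + 1) ^ 2 < w v)) +
        #(zl G (thrA w l Z) Z y i) := by
      refine le_trans (Finset.card_le_card ?_) (Finset.card_union_le _ _)
      intro v hv
      rw [mem_lost] at hv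
      rw [Finset.mem_union]
      by_cases hvZ : v ∈ Z
      · right
        exact Finset.mem_filter.2 ⟨hvZ, hv.2⟩
      · left
        rw [Finset.mem_filter]
        refine ⟨Finset.mem_univ _, ?_⟩
        by_contra hc
        push Not at hc
        apply hv.1
        simp only [thrA, Finset.mem_filter, Finset.mem_univ, true_and]
        exact ⟨hc.trans (le_max_left _ _), hvZ⟩
    have e3 : (#(lost G (thrA w l Z) y i) : ℝ) ≤ #(univ.filter (fun v => 1 / ((i : ℝ) + 1) ^ 2 < w v)) +
        #(zl G (thrA w l Z) Z y i) := by exact_mod_cast e2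
    linarith
  have ht0 : 0 < t := by linarith
  refine growth h ht _ y ?_ ?_ m hm
  · have := hl 0
    norm_num at this h0 ⊢
    linarith
  · intro i hi hx hx2 hi2
    have e1 := hl i
    have e2 := h1 i hi hx hx2 hi2
    have e3 := heavy_arith ht0 (Nat.cast_nonneg i) hx hi2
    linarith

/-- number of rounds -/
def mm (t n : ℝ) : ℕ := ⌊1000000 * Lg t n ^ 3⌋₊ + 2

lemma mm_gt {t n : ℝ} : 1 + 1000000 * Lg t n ^ 3 < mm t n := by
  unfold mm
  have := Nat.lt_floor_add_one (1000000 * Lg t n ^ 3)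
  push_cast
  linarith

lemma mm_le {t n : ℝ} (ht : 0 < t) (hn : 0 ≤ n) : (mm t n : ℝ) ≤ 1000002 * Lg t n ^ 3 := by
  have hL := one_le_Lg ht hn
  unfold mm
  have := Nat.floor_le (a := 1000000 * Lg t n ^ 3) (by positivity)
  push_cast
  have : 1 ≤ Lg t n ^ 3 := one_le_pow₀ hL
  linarith

/-- path length -/
def ll (t n : ℝ) : ℕ := 4 * (mm t n + 1) ^ 2
/-- blocked set size -/
def uu (t n : ℝ) : ℕ := (4 * mm t n + 4) * ll t n + 1

lemma ll_le {t n : ℝ} (ht : 0 < t) (hn : 0 ≤ n) : (ll t n : ℝ) ≤ 5 * 10 ^ 12 * Lg t n ^ 6 := by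
  have hL := one_le_Lg ht hn
  have hm := mm_le ht hn
  unfold ll
  push_cast
  have h3 : 1 ≤ Lg t n ^ 3 := one_le_pow₀ hL
  have h1 : (mm t n : ℝ) + 1 ≤ 1000003 * Lg t n ^ 3 := by linarith
  have h2 : ((mm t n : ℝ) + 1) ^ 2 ≤ (1000003 * Lg t n ^ 3) ^ 2 := by gcongr
  have : (1000003 * Lg t n ^ 3) ^ 2 = 1000003 ^ 2 * Lg t n ^ 6 := by ring
  have h6 : 0 ≤ Lg t n ^ 6 := by positivity
  nlinarith

lemma uu_le {t n : ℝ} (ht : 0 < t) (hn : 0 ≤ n) : (uu t n : ℝ) + 4 * mm t n + 9 ≤ 3 * 10 ^ 19 * Lg t n ^ 9 := by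
  have hL := one_le_Lg ht hn
  have hm := mm_le ht hn
  have hll := ll_le ht hn
  unfold uu
  push_cast
  have h3 : 1 ≤ Lg t n ^ 3 := one_le_pow₀ hL
  have h9 : Lg t n ^ 3 ≤ Lg t n ^ 9 := pow_le_pow_right₀ hL (by norm_num)
  have h1 : 4 * (mm t n : ℝ) + 4 ≤ 4000012 * Lg t n ^ 3 := by linarith
  have h2 : (4 * (mm t n : ℝ) + 4) * ll t n ≤ (4000012 * Lg t n ^ 3) * (5 * 10 ^ 12 * Lg t n ^ 6) := by gcongr
  have : (4000012 * Lg t n ^ 3) * (5 * 10 ^ 12 * Lg t n ^ 6) = 4000012 * (5 * 10 ^ 12) * Lg t n ^ 9 := by ring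
  rw [this] at h2
  linarith

end GrowthThr
end BTK
end Part11

noncomputable section Part12
open Finset
namespace BTK
open Classical
set_option linter.unusedSectionVars false

section Dense
variable {V : Type} [Fintype V] {G : SimpleGraph V}

lemma robust {t : ℝ} {col : V → Bool} (h : RE G t col) (ht : 4 ≤ t) (Wp : Finset V)
    (hW : 20 * (#Wp : ℝ) ≤ eps t (Fintype.card V) * Fintype.card V) :
    ∃ Y : Finset V, (#Y : ℝ) ≤ Fintype.card V / 10 ∧
      ∀ X : Finset V, X ⊆ (Wp ∪ Y)ᶜ → X.Nonempty → (#X : ℝ) ≤ Fintype.card V / 2 → ∀ S : Finset V,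
        (#S : ℝ) ≤ eps t (Fintype.card V) / 2 * #X →
        eps t (Fintype.card V) / 2 * t * #X < ee G X ((Wp ∪ Y) ∪ (X ∪ S))ᶜ := by
  have ht0 : 0 < t := by linarith
  have hn := h.card_pos ht
  set n : ℝ := ((Fintype.card V : ℕ) : ℝ) with hnd
  have hl := eps_pos ht0 hn.le
  set lam := eps t n with hlam
  let P : Finset V → Prop := fun Y => Y ⊆ Wpᶜ ∧ (#Y : ℝ) ≤ 3 / 5 * n ∧ ∃ S : Finset V,
    (#S : ℝ) ≤ lam / 2 * #Y ∧ (ee G Y (Wp ∪ Y ∪ S)ᶜ : ℝ) ≤ lam / 2 * t * #Y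
  have hP0 : (univ.filter P).Nonempty := by
    refine ⟨∅, Finset.mem_filter.2 ⟨Finset.mem_univ _, by simp, by simp; positivity, ∅, by simp, ?_⟩⟩
    simp [ee_empty_left]
  obtain ⟨Y, hY, hmax⟩ := Finset.exists_max_image _ (fun Y => #Y) hP0
  obtain ⟨-, hY1, hY2, S, hS1, hS2⟩ := Finset.mem_filter.1 hY
  have hY10 : (#Y : ℝ) ≤ n / 10 := by
    rcases Y.eq_empty_or_nonempty with h0 | h0
    · rw [h0]; simp; positivity
    · have hYpos : (0 : ℝ) < #Y := by exact_mod_cast h0.card_pos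
      have he : lam ≤ eps t #Y := eps_anti ht0 (Nat.cast_nonneg _) (by
        rw [hnd]; exact_mod_cast Finset.card_le_univ _)
      have h1 : eps t #Y * #Y < #(S ∪ Wp) := by
        by_contra hc
        push Not at hc
        have h2 := h.exp Y (S ∪ Wp) h0 hY2 hc
        have e : Y ∪ (S ∪ Wp) = Wp ∪ Y ∪ S := by
          ext v; simp only [Finset.mem_union]; tauto
        rw [e] at h2
        have h3 : lam * t * #Y ≤ eps t #Y * t * #Y := by gcongr
        have h4 : 0 < lam * t * #Y := by positivity
        linarith
      have h2 : (#(S ∪ Wp) : ℝ) ≤ #S + #Wp := by exact_mod_cast Finset.card_union_le _ _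
      have h3 : lam * #Y ≤ eps t #Y * #Y := by gcongr
      have h4 : lam * (10 * #Y) < lam * n := by linarith
      have := lt_of_mul_lt_mul_left h4 hl.le
      linarith
  refine ⟨Y, hY10, ?_⟩
  intro X hX hX0 hXn S' hS'
  by_contra hc
  push Not at hc
  have hdis : Disjoint Y X := by
    rw [Finset.disjoint_left]
    intro v hv hv'
    have := hX hv'
    rw [Finset.mem_compl, Finset.mem_union, not_or] at this
    exact this.2 hv
  have hcard := Finset.card_union_of_disjoint hdis
  have hcard' : (#(Y ∪ X) : ℝ) = #Y + #X := by exact_mod_cast hcard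
  have hPn : P (Y ∪ X) := by
    refine ⟨?_, ?_, S ∪ S', ?_, ?_⟩
    · apply Finset.union_subset hY1
      intro v hv
      have := hX hv
      rw [Finset.mem_compl, Finset.mem_union, not_or] at this
      exact Finset.mem_compl.2 this.1
    · rw [hcard']; linarith
    · have : (#(S ∪ S') : ℝ) ≤ #S + #S' := by exact_mod_cast Finset.card_union_le _ _
      rw [hcard']; linarith
    · have e1 : ee G (Y ∪ X) (Wp ∪ (Y ∪ X) ∪ (S ∪ S'))ᶜ ≤
          ee G Y (Wp ∪ Y ∪ S)ᶜ + ee G X ((Wp ∪ Y) ∪ (X ∪ S'))ᶜ := by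
        refine (ee_union_left_le _ _ _).trans (Nat.add_le_add (ee_mono (subset_refl _) ?_)
          (ee_mono (subset_refl _) ?_))
        · apply Finset.compl_subset_compl.2
          intro v; simp only [Finset.mem_union]; tauto
        · apply Finset.compl_subset_compl.2
          intro v; simp only [Finset.mem_union]; tauto
      have e2 : (ee G (Y ∪ X) (Wp ∪ (Y ∪ X) ∪ (S ∪ S'))ᶜ : ℝ) ≤
          ee G Y (Wp ∪ Y ∪ S)ᶜ + ee G X ((Wp ∪ Y) ∪ (X ∪ S'))ᶜ := by exact_mod_cast e1
      rw [hcard']; linarith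
  have := hmax _ (Finset.mem_filter.2 ⟨Finset.mem_univ _, hPn⟩)
  have := hX0.card_pos
  omega

lemma dense_arith {t n : ℝ} (ht : 0 < t) (hn : 0 ≤ n) (N : ℕ) (hN : 1000000 * Lg t n ^ 3 < N) :
    n < eps t n * t / 4 * (1 + eps t n / 4) ^ N := by
  have hL := one_le_Lg ht hn
  have he := eps_pos ht hn
  have he2 := eps_le ht hn
  have h1 : Real.exp (625 * Lg t n) ≤ (1 + eps t n / 4) ^ N := by
    have h2 : eps t n / 8 ≤ Real.log (1 + eps t n / 4) := by
      have := Real.one_sub_inv_le_log_of_pos (x := 1 + eps t n / 4) (by positivity)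
      refine le_trans ?_ this
      rw [le_sub_iff_add_le, ← le_sub_iff_add_le', inv_le_iff_one_le_mul₀ (by positivity)]
      nlinarith
    have h3 : 625 * Lg t n ≤ N * Real.log (1 + eps t n / 4) := by
      have e : eps t n * (200 * Lg t n ^ 2) = 1 := by
        unfold eps
        have : Lg t n ≠ 0 := by linarith
        field_simp
      have : (N : ℝ) * (eps t n / 8) ≤ N * Real.log (1 + eps t n / 4) := by gcongr
      refine le_trans ?_ this
      have : 1000000 * Lg t n ^ 3 * (eps t n / 8) ≤ N * (eps t n / 8) := by gcongr
      refine le_trans (le_of_eq ?_) this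
      have : 1000000 * Lg t n ^ 3 * (eps t n / 8) = 625 * Lg t n * (eps t n * (200 * Lg t n ^ 2)) := by ring
      rw [this, e]; ring
    calc Real.exp (625 * Lg t n) ≤ Real.exp (N * Real.log (1 + eps t n / 4)) := Real.exp_le_exp.2 h3
      _ = (1 + eps t n / 4) ^ N := by
        rw [← Real.log_pow, Real.exp_log (by positivity)]
  have h2 : Real.exp (625 * Lg t n) = Real.exp (624 * Lg t n) * Real.exp (Lg t n) := by
    rw [← Real.exp_add]; ring_nf
  have h3 : 800 * Lg t n ^ 2 ≤ Real.exp (624 * Lg t n) := by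
    have := Real.pow_div_factorial_le_exp (624 * Lg t n) (by linarith) 2
    norm_num at this
    nlinarith
  have h4 : n / t < Real.exp (Lg t n) := by
    unfold Lg
    have : 0 < 1 + n / t := by positivity
    rw [Real.exp_add, Real.exp_log this]
    have := Real.add_one_le_exp (1 : ℝ)
    nlinarith
  have h5 : 800 * Lg t n ^ 2 * (n / t) < Real.exp (624 * Lg t n) * Real.exp (Lg t n) := by
    have a1 : 0 < 800 * Lg t n ^ 2 := by positivity
    have a2 : 0 < Real.exp (Lg t n) := Real.exp_pos _
    calc 800 * Lg t n ^ 2 * (n / t) < 800 * Lg t n ^ 2 * Real.exp (Lg t n) := by gcongr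
      _ ≤ _ := by gcongr
  rw [← h2] at h5
  have h6 := lt_of_lt_of_le h5 h1
  have h7 : eps t n * t / 4 * (800 * Lg t n ^ 2 * (n / t)) = n := by
    unfold eps
    have : Lg t n ≠ 0 := by linarith
    field_simp
    norm_num
  calc n = eps t n * t / 4 * (800 * Lg t n ^ 2 * (n / t)) := h7.symm
    _ < _ := by gcongr

lemma dense_grow {t lam n : ℝ} (ht : 0 < t) (hn0 : 1 < n) (hlam0 : 0 < lam) (hlam1 : lam ≤ 1 / 200)
    (hn : n = Fintype.card V) (U1 : Finset V)
    (hexp : ∀ X : Finset V, X ⊆ U1ᶜ → X.Nonempty → (#X : ℝ) ≤ n / 2 → ∀ S : Finset V,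
        (#S : ℝ) ≤ lam / 2 * #X → lam / 2 * t * #X < ee G X (U1 ∪ (X ∪ S))ᶜ)
    (hn1 : 2 ≤ n) (Q : Finset V) (hQ : (#Q : ℝ) ≤ lam ^ 2 * t / 32) (h : V) (hh : h ∉ U1) (N : ℕ)
    (hN : n < lam * t / 4 * (1 + lam / 4) ^ N) :
    Fintype.card V < 2 * #(lay G (fun _ => (U1 ∪ Q)ᶜ) h (N + 1)) := by
  set A : ℕ → Finset V := fun _ => (U1 ∪ Q)ᶜ with hA
  have hlayU : ∀ i, lay G A h i ⊆ U1ᶜ := by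
    intro i
    induction i with
    | zero => intro v hv; simp only [lay, Finset.mem_singleton] at hv; rw [hv]; simpa using hh
    | succ i ih =>
      intro v hv
      rcases mem_lay_succ.1 hv with h1 | h1
      · exact ih h1
      · have := h1.1
        simp only [hA, Finset.mem_compl, Finset.mem_union, not_or] at this
        exact Finset.mem_compl.2 this.1
  have hsucc : ∀ i, ∀ S : Finset V, S = (onb G (lay G A h i)) \ U1 →
      #(lay G A h i) + #S ≤ #(lay G A h (i + 1)) + #Q := by
    rintro i S rfl
    have h1 : Disjoint (lay G A h i) ((onb G (lay G A h i)) \ U1) := by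
      rw [Finset.disjoint_left]
      intro v hv hv'
      simp only [onb, Finset.mem_sdiff, Finset.mem_filter, Finset.mem_univ, true_and] at hv'
      exact hv'.1.1 hv
    rw [← Finset.card_union_of_disjoint h1]
    refine le_trans (Finset.card_le_card ?_) (Finset.card_union_le _ _)
    intro v hv
    rw [Finset.mem_union, mem_lay_succ]
    rw [Finset.mem_union] at hv
    simp only [onb, Finset.mem_sdiff, Finset.mem_filter, Finset.mem_univ, true_and] at hv
    by_cases hvQ : v ∈ Q
    · exact Or.inr hvQ
    · rcases hv with hv | hv
      · exact Or.inl (Or.inl hv)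
      · left; right
        refine ⟨?_, hv.1.2⟩
        simp only [hA, Finset.mem_compl, Finset.mem_union, not_or]
        exact ⟨hv.2, hvQ⟩
  have hzero : ∀ X : Finset V, ee G X (U1 ∪ (X ∪ (onb G X) \ U1))ᶜ = 0 := by
    intro X
    unfold ee
    apply Finset.sum_eq_zero
    intro a ha
    rw [Finset.card_eq_zero, Finset.eq_empty_iff_forall_notMem]
    intro v hv
    obtain ⟨h1, h2⟩ := mem_nb.1 hv
    simp only [Finset.mem_compl, Finset.mem_union, not_or, Finset.mem_sdiff, not_and, not_not] at h1
    apply h1.1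
    apply h1.2.2
    simp only [onb, Finset.mem_filter, Finset.mem_univ, true_and]
    exact ⟨h1.2.1, a, ha, h2⟩
  have hmulneg : ∀ X : Finset V, X.Nonempty → 0 < lam / 2 * t * #X := by
    intro X hX
    have : (0 : ℝ) < #X := by exact_mod_cast hX.card_pos
    positivity
  have hx1 : lam * t / 4 ≤ #(lay G A h 1) := by
    have h1 := hexp {h} (by simpa using hh) (by simp) (by simp; linarith) ∅ (by simp; positivity)
    simp only [Finset.card_singleton, Nat.cast_one, mul_one, Finset.union_empty] at h1
    have h2 : ee G {h} (U1 ∪ {h})ᶜ = #((onb G (lay G A h 0)) \ U1) := by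
      unfold ee
      rw [Finset.sum_singleton]
      congr 1
      ext v
      simp [mem_nb, onb, lay]
      tauto
    have h3 := hsucc 0 _ rfl
    have h4 : (#(lay G A h 0) : ℝ) + #((onb G (lay G A h 0)) \ U1) ≤ #(lay G A h (0 + 1)) + #Q := by
      exact_mod_cast h3
    rw [h2] at h1
    simp only [zero_add] at h4
    have h5 : (0 : ℝ) ≤ #(lay G A h 0) := by positivity
    have h6 : lam ^ 2 * t / 32 ≤ lam * t / 4 := by
      have : lam * (lam * t) ≤ 1 * (lam * t) := by gcongr; linarith
      nlinarith
    linarith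
  by_contra hc
  push Not at hc
  have hc' : ∀ i ≤ N + 1, (#(lay G A h i) : ℝ) ≤ n / 2 := by
    intro i hi
    have e1 : #(lay G A h i) ≤ #(lay G A h (N + 1)) := Finset.card_le_card (lay_mono hi)
    have e2 : 2 * #(lay G A h i) ≤ Fintype.card V := by omega
    have : 2 * (#(lay G A h i) : ℝ) ≤ Fintype.card V := by exact_mod_cast e2
    rw [hn]; linarith
  have key : ∀ i ≤ N, lam * t / 4 * (1 + lam / 4) ^ i ≤ #(lay G A h (i + 1)) := by
    intro i
    induction i with
    | zero => intro _; simpa using hx1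
    | succ i ih =>
      intro hi
      have h1 := ih (by omega)
      have hne : (lay G A h (i + 1)).Nonempty := ⟨h, self_mem_lay _⟩
      have h2 : lam / 2 * #(lay G A h (i + 1)) < #((onb G (lay G A h (i + 1))) \ U1) := by
        by_contra hc2
        push Not at hc2
        have h3 := hexp _ (hlayU (i + 1)) hne (hc' _ (by omega)) _ hc2
        rw [hzero] at h3
        have := hmulneg _ hne
        push_cast at h3
        linarith
      have h4 : (#(lay G A h (i + 1)) : ℝ) + #((onb G (lay G A h (i + 1))) \ U1) ≤
          #(lay G A h (i + 1 + 1)) + #Q := by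
        exact_mod_cast hsucc (i + 1) _ rfl
      have h5 : lam * t / 4 ≤ #(lay G A h (i + 1)) := hx1.trans (by
        exact_mod_cast Finset.card_le_card (lay_mono (G := G) (A := A) (y := h) (by omega)))
      have h6 : (#Q : ℝ) ≤ lam / 4 * #(lay G A h (i + 1)) := by
        refine hQ.trans ?_
        have : lam / 4 * (lam * t / 4) ≤ lam / 4 * #(lay G A h (i + 1)) := by gcongr
        have h7 : 0 ≤ lam ^ 2 * t := by positivity
        nlinarith
      rw [pow_succ]
      have : lam * t / 4 * (1 + lam / 4) ^ i * (1 + lam / 4) ≤ #(lay G A h (i + 1)) * (1 + lam / 4) := by gcongr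
      linarith
  have := key N le_rfl
  have := hc' (N + 1) le_rfl
  linarith

end Dense
end BTK
end Part12

noncomputable section Part13
open Finset
namespace BTK
open Classical
set_option linter.unusedSectionVars false

section DenseC
variable {V : Type} [Fintype V] {G : SimpleGraph V}

lemma eps_mul_ge {t x : ℝ} (ht : 0 < t) (hx : t / 1600 ≤ x) : t / 10 ^ 7 ≤ eps t x / 4 * x := by
  have hx0 : 0 < x := lt_of_lt_of_le (by positivity) hx
  have hL := one_le_Lg ht hx0.le
  have h2 := Lg_pow ht hx 2
  norm_num at h2
  have h4 : eps t x / 4 * x = x / (800 * Lg t x ^ 2) := by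
    unfold eps; field_simp; norm_num
  rw [h4, le_div_iff₀ (by positivity)]
  have : t / 10 ^ 7 * (800 * Lg t x ^ 2) ≤ t / 10 ^ 7 * (800 * (2 * 4803 * (x / t))) := by
    gcongr; linarith
  refine this.trans ?_
  have : t / 10 ^ 7 * (800 * (2 * 4803 * (x / t))) = (800 * (2 * 4803) / 10 ^ 7) * x := by
    field_simp
  rw [this]
  nlinarith

/-- heavy vertices are few -/
lemma heavy_small {t n : ℝ} {W B l : ℝ} (ht : 0 < t) (hn : t / 2 ≤ n) (hl0 : 0 ≤ l) (hl : l ≤ 5 * 10 ^ 12 * Lg t n ^ 6)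
    (hW : W ≤ 1 / 10 ^ 50 * t * l ^ 2) (hB : B ≤ t / 10 ^ 9) :
    20 * (W + B) ≤ eps t n * n := by
  have hx0 : 0 < n := lt_of_lt_of_le (by positivity) hn
  have hL := one_le_Lg ht hx0.le
  have hx : t / 1600 ≤ n := by linarith
  have h2 := Lg_pow ht hx 2
  have h14 := Lg_pow ht hx 14
  set L := Lg t n with hLd
  have h4 : eps t n * n = n / (200 * L ^ 2) := by
    unfold eps; rw [← hLd]; field_simp
  rw [h4, le_div_iff₀ (by positivity)]
  have e1 : W * L ^ 2 ≤ n / 10000 := by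
    have : W ≤ 1 / 10 ^ 50 * t * (5 * 10 ^ 12 * L ^ 6) ^ 2 := hW.trans (by gcongr)
    calc W * L ^ 2 ≤ 1 / 10 ^ 50 * t * (5 * 10 ^ 12 * L ^ 6) ^ 2 * L ^ 2 := by gcongr
      _ = 1 / 10 ^ 50 * 25 * 10 ^ 24 * t * L ^ 14 := by ring
      _ ≤ 1 / 10 ^ 50 * 25 * 10 ^ 24 * t * ((14 : ℕ).factorial * 4803 * (n / t)) := by gcongr
      _ = 1 / 10 ^ 50 * 25 * 10 ^ 24 * ((14 : ℕ).factorial * 4803) * n := by field_simp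
      _ ≤ n / 10000 := by
        rw [div_eq_mul_inv n, mul_comm n]
        refine mul_le_mul_of_nonneg_right ?_ hx0.le
        norm_num [Nat.factorial]
  have e2 : B * L ^ 2 ≤ n / 10000 := by
    calc B * L ^ 2 ≤ t / 10 ^ 9 * ((2 : ℕ).factorial * 4803 * (n / t)) := by gcongr
      _ = 1 / 10 ^ 9 * ((2 : ℕ).factorial * 4803) * n := by field_simp
      _ ≤ n / 10000 := by
        rw [div_eq_mul_inv n, mul_comm n]
        refine mul_le_mul_of_nonneg_right ?_ hx0.le
        norm_num [Nat.factorial]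
  have : 20 * (W + B) * (200 * L ^ 2) = 4000 * (W * L ^ 2) + 4000 * (B * L ^ 2) := by ring
  rw [this]
  linarith

lemma dense_u {t n : ℝ} (ht : 0 < t) (hn : 0 ≤ n) (hd : 10 ^ 27 * Lg t n ^ 13 ≤ t) :
    3 * 10 ^ 19 * Lg t n ^ 9 ≤ t / 10 ^ 7 - t / 10 ^ 9 ∧
    3 * 10 ^ 19 * Lg t n ^ 9 ≤ eps t n ^ 2 * t / 32 ∧ 100 ≤ eps t n * t ∧ 10 ^ 27 ≤ t := by
  have hL := one_le_Lg ht hn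
  have h9 : Lg t n ^ 9 ≤ Lg t n ^ 13 := pow_le_pow_right₀ hL (by norm_num)
  have h2 : Lg t n ^ 2 ≤ Lg t n ^ 13 := pow_le_pow_right₀ hL (by norm_num)
  have h1 : 1 ≤ Lg t n ^ 13 := one_le_pow₀ hL
  refine ⟨by linarith, ?_, ?_, by linarith⟩
  · have : eps t n ^ 2 * t / 32 = t / (1280000 * Lg t n ^ 4) := by
      unfold eps; field_simp; norm_num
    rw [this, le_div_iff₀ (by positivity)]
    have : 3 * 10 ^ 19 * Lg t n ^ 9 * (1280000 * Lg t n ^ 4) = 3 * 10 ^ 19 * 1280000 * Lg t n ^ 13 := by ring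
    rw [this]; linarith
  · have : eps t n * t = t / (200 * Lg t n ^ 2) := by
      unfold eps; field_simp
    rw [this, le_div_iff₀ (by positivity)]
    linarith

lemma dense_connect {t : ℝ} {col : V → Bool} (h : RE G t col) (ht : 4 ≤ t)
    (hd : 10 ^ 27 * Lg t (Fintype.card V) ^ 13 ≤ t) {w : V → ℝ} (hw0 : ∀ v, 0 ≤ w v)
    (hw : ∑ v, w v ^ 2 ≤ 1 / 10 ^ 50 * t) (Br : Finset V) (hBr : (#Br : ℝ) ≤ t / 10 ^ 9)
    {a b : V} (ha : a ∈ Br) (hb : b ∈ Br) (hab : a ≠ b) (hcol : col a = col b) :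
    ∃ S, PS G a b (ll t (Fintype.card V)) S ∧ (∀ v ∈ S, v ∈ Br → v = a ∨ v = b) ∧
      ∑ v ∈ (S.erase a).erase b, w v ≤ 8 := by
  have ht0 : 0 < t := by linarith
  have hn := h.card_pos ht
  have hbig := h.big
  obtain ⟨du1, du2, du3, du4⟩ := dense_u ht0 hn.le hd
  have huu := uu_le ht0 hn.le
  have hll := ll_le ht0 hn.le
  have hmm0 : (0 : ℝ) ≤ mm t (Fintype.card V) := Nat.cast_nonneg _
  have hl0 : 0 < ll t (Fintype.card V) := by unfold ll; positivity
  set l := ll t (Fintype.card V) with hl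
  set m := mm t (Fintype.card V) with hm
  set u := uu t (Fintype.card V) with hu
  have hlam := eps_pos ht0 hn.le
  have hlam2 := eps_le ht0 hn.le
  set W := univ.filter (fun v => 1 / (l : ℝ) < w v) with hW
  have hWc := heavy_count (w := w) (r := (l : ℝ)) (by exact_mod_cast hl0) hw
  have hWp : 20 * (#(W ∪ Br) : ℝ) ≤ eps t (Fintype.card V) * Fintype.card V := by
    have e1 : (#(W ∪ Br) : ℝ) ≤ #W + #Br := by exact_mod_cast Finset.card_union_le _ _
    have e2 := heavy_small (W := #W) (B := #Br) (l := l) ht0 hbig (Nat.cast_nonneg _) hll hWc hBr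
    linarith
  obtain ⟨Y, hY, hexp⟩ := robust h ht (W ∪ Br) hWp
  have hthr : ∀ (Z : Finset V) (y : V), (#Z : ℝ) ≤ t / 10 ^ 7 →
      Fintype.card V < 2 * #(lay G (thrA w l Z) y m) := by
    intro Z y hZ
    have hz : ∀ i, (#(zl G (thrA w l Z) Z y i) : ℝ) ≤ #Z := by
      intro i
      exact_mod_cast Finset.card_le_card (Finset.filter_subset _ _)
    refine growth_thr h ht w l hw Z y ?_ ?_ m mm_gt
    · have := hz 0; linarith
    · intro i _ hx _ _
      have := hz i
      have := eps_mul_ge ht0 hx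
      linarith
  refine connect (m := m) (u := u) (Z0 := ∅) (U0 := (W ∪ Br) ∪ Y) h.bip hw0 rfl ?_ (by simp) ?_ le_rfl ha hb hab hcol (by simp) ?_ ?_ ?_
  · intro v hv
    exact Finset.mem_union_left _ (Finset.mem_union_right _ hv)
  · intro v hv
    by_contra hc
    push Not at hc
    apply hv
    exact Finset.mem_union_left _ (Finset.mem_union_left _ (Finset.mem_filter.2 ⟨Finset.mem_univ _, hc⟩))
  · apply hthr
    rw [Finset.empty_union]; linarith
  · intro Uc hUc _
    apply hthr
    have e1 : (#(Uc ∪ Br) : ℝ) ≤ #Uc + #Br := by exact_mod_cast Finset.card_union_le _ _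
    have e2 : (#Uc : ℝ) ≤ u := by exact_mod_cast hUc
    linarith
  · intro Uc hUc
    have hUc' : (#Uc : ℝ) ≤ u := by exact_mod_cast hUc
    refine ⟨((W ∪ Br) ∪ Y ∪ Uc)ᶜ, subset_refl _, ?_, ?_⟩
    · set U1 := (W ∪ Br) ∪ Y with hU1
      set K := (U1 ∪ Uc)ᶜ with hK
      have hdeg : ∀ v ∈ K, (3 : ℝ) ≤ #(nb G K v) := by
        intro v hv
        rw [hK, Finset.mem_compl, Finset.mem_union, not_or] at hv
        have e1 := hexp {v} (by simpa using hv.1) (by simp) (by simp; linarith) ∅ (by simp; positivity)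
        simp only [Finset.card_singleton, Nat.cast_one, mul_one, Finset.union_empty] at e1
        have e2 : ee G {v} (U1 ∪ {v})ᶜ ≤ #(nb G K v) + #Uc := by
          unfold ee
          rw [Finset.sum_singleton]
          refine le_trans (Finset.card_le_card ?_) (Finset.card_union_le _ _)
          intro x hx
          rw [Finset.mem_union]
          rw [mem_nb, Finset.mem_compl, Finset.mem_union, not_or] at hx
          by_cases hxU : x ∈ Uc
          · exact Or.inr hxU
          · left
            rw [mem_nb, hK, Finset.mem_compl, Finset.mem_union, not_or]
            exact ⟨⟨hx.1.1, hxU⟩, hx.2⟩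
        have e3 : (ee G {v} (U1 ∪ {v})ᶜ : ℝ) ≤ #(nb G K v) + #Uc := by exact_mod_cast e2
        have e4 : eps t (Fintype.card V) ^ 2 * t / 32 ≤ eps t (Fintype.card V) * t / 32 := by
          have : eps t (Fintype.card V) * (eps t (Fintype.card V) * t) ≤ 1 * (eps t (Fintype.card V) * t) := by
            gcongr; linarith
          rw [pow_two]; linarith
        linarith
      have hKpos : (0 : ℝ) < #K := by
        have e1 : #K + #(U1 ∪ Uc) = Fintype.card V := by
          rw [hK, Finset.card_compl]
          have := Finset.card_le_univ (U1 ∪ Uc)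
          omega
        have e2 : (#K : ℝ) + #(U1 ∪ Uc) = Fintype.card V := by exact_mod_cast e1
        have e3 : (#(U1 ∪ Uc) : ℝ) ≤ #(W ∪ Br) + #Y + #Uc := by
          have a1 := Finset.card_union_le U1 Uc
          have a2 := Finset.card_union_le (W ∪ Br) Y
          rw [← hU1] at a2
          exact_mod_cast (by omega : #(U1 ∪ Uc) ≤ #(W ∪ Br) + #Y + #Uc)
        have e4 : eps t (Fintype.card V) * Fintype.card V ≤ 1 / 200 * Fintype.card V := by gcongr
        linarith
      have e := mul_le_ee hdeg
      have : (2 * #K : ℝ) < ee G K K := by linarith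
      exact_mod_cast this
    · intro x hx T hT _
      rw [Finset.mem_compl, Finset.mem_union, not_or] at hx
      rw [Finset.union_assoc ((W ∪ Br) ∪ Y)]
      have hm1 : m = ⌊1000000 * Lg t (Fintype.card V) ^ 3⌋₊ + 1 + 1 := rfl
      have hN := dense_arith ht0 hn.le (⌊1000000 * Lg t (Fintype.card V) ^ 3⌋₊ + 1) (by
        push_cast; exact Nat.lt_floor_add_one _)
      rw [hm1]
      refine dense_grow ht0 (by linarith) hlam hlam2 rfl _ hexp (by linarith) _ ?_ x ?_ _ hN
      · have e1 : (#(Uc ∪ T.erase x) : ℝ) ≤ u + (4 * m + 8) := by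
          have a1 := Finset.card_union_le Uc (T.erase x)
          have a2 := Finset.card_erase_le (s := T) (a := x)
          exact_mod_cast (by omega : #(Uc ∪ T.erase x) ≤ u + (4 * m + 8))
        linarith
      · exact hx.1
end DenseC
end BTK
end Part13

noncomputable section Part14
open Finset
namespace BTK
open Classical
set_option linter.unusedSectionVars false

section Balls
variable {V : Type} [Fintype V] {G : SimpleGraph V}

/-- within distance `r` -/
def wi (G : SimpleGraph V) (r : ℕ) (u v : V) : Prop := ∃ p : G.Walk u v, p.length ≤ r

lemma wi.symm {r : ℕ} {u v : V} (h : wi G r u v) : wi G r v u := by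
  obtain ⟨p, hp⟩ := h
  exact ⟨p.reverse, by simpa using hp⟩

lemma wi.trans {r s : ℕ} {u v x : V} (h : wi G r u v) (h' : wi G s v x) : wi G (r + s) u x := by
  obtain ⟨p, hp⟩ := h
  obtain ⟨q, hq⟩ := h'
  exact ⟨p.append q, by rw [SimpleGraph.Walk.length_append]; omega⟩

lemma wi.mono {r s : ℕ} {u v : V} (h : wi G r u v) (hrs : r ≤ s) : wi G s u v := by
  obtain ⟨p, hp⟩ := h
  exact ⟨p, hp.trans hrs⟩

lemma wi.refl (r : ℕ) (u : V) : wi G r u u := ⟨SimpleGraph.Walk.nil, by simp⟩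

lemma wi.adj {u v : V} (h : G.Adj u v) : wi G 1 u v := ⟨SimpleGraph.Walk.cons h SimpleGraph.Walk.nil, by simp⟩

/-- ball around a set -/
def bl (G : SimpleGraph V) (r : ℕ) (X : Finset V) : Finset V := univ.filter (fun v => ∃ x ∈ X, wi G r x v)

lemma mem_bl {r : ℕ} {X : Finset V} {v : V} : v ∈ bl G r X ↔ ∃ x ∈ X, wi G r x v := by simp [bl]

lemma bl_card {D : ℝ} (hD : ∀ v, (#(nb G univ v) : ℝ) ≤ D) (X : Finset V) (r : ℕ) :
    (#(bl G r X) : ℝ) ≤ #X * (1 + D) ^ r := by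
  induction r with
  | zero =>
    rw [pow_zero, mul_one]
    have : bl G 0 X ⊆ X := by
      intro v hv
      obtain ⟨x, hx, p, hp⟩ := mem_bl.1 hv
      have : p.length = 0 := by omega
      rw [← SimpleGraph.Walk.eq_of_length_eq_zero this]; exact hx
    exact_mod_cast Finset.card_le_card this
  | succ r ih =>
    have hsub : bl G (r + 1) X ⊆ bl G r X ∪ (bl G r X).biUnion (fun v => nb G univ v) := by
      intro v hv
      obtain ⟨x, hx, p, hp⟩ := mem_bl.1 hv
      have hq : p.reverse.length ≤ r + 1 := by simpa using hp
      generalize p.reverse = q at hq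
      cases q with
      | nil => exact Finset.mem_union_left _ (mem_bl.2 ⟨_, hx, wi.refl _ _⟩)
      | @cons _ v' _ hadj q' =>
        apply Finset.mem_union_right
        rw [Finset.mem_biUnion]
        refine ⟨v', mem_bl.2 ⟨x, hx, wi.symm ⟨q', ?_⟩⟩, mem_nb.2 ⟨Finset.mem_univ _, hadj.symm⟩⟩
        rw [SimpleGraph.Walk.length_cons] at hq
        omega
    have h1 : #(bl G (r + 1) X) ≤ #(bl G r X) + ∑ v ∈ bl G r X, #(nb G univ v) :=
      (Finset.card_le_card hsub).trans ((Finset.card_union_le _ _).trans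
        (Nat.add_le_add_left Finset.card_biUnion_le _))
    have h2 : (#(bl G (r + 1) X) : ℝ) ≤ #(bl G r X) + ∑ v ∈ bl G r X, (#(nb G univ v) : ℝ) := by
      exact_mod_cast h1
    have h3 : ∑ v ∈ bl G r X, (#(nb G univ v) : ℝ) ≤ #(bl G r X) * D := by
      calc _ ≤ ∑ v ∈ bl G r X, D := Finset.sum_le_sum fun v _ => hD v
        _ = _ := by simp
    rcases isEmpty_or_nonempty V with hV | ⟨⟨v0⟩⟩
    · have : X = ∅ := Finset.eq_empty_of_isEmpty _
      have h5 : bl G (r + 1) X = ∅ := Finset.eq_empty_of_isEmpty _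
      rw [h5, this]; simp
    · have hD0 : 0 ≤ D := le_trans (Nat.cast_nonneg _) (hD v0)
      rw [pow_succ, ← mul_assoc]
      have : (#(bl G r X) : ℝ) * (1 + D) ≤ #X * (1 + D) ^ r * (1 + D) := by gcongr
      linarith

lemma lay_wi {A : ℕ → Finset V} {y : V} (i : ℕ) : ∀ v ∈ lay G A y i, wi G i y v := by
  induction i with
  | zero => intro v hv; simp only [lay, Finset.mem_singleton] at hv; rw [hv]; exact wi.refl _ _
  | succ i ih =>
    intro v hv
    rcases mem_lay_succ.1 hv with h | ⟨-, u, hu, huv⟩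
    · exact (ih v h).mono (by omega)
    · exact (ih u hu).trans (wi.adj huv)

lemma lay_mono_A {A A' : ℕ → Finset V} (h : ∀ i, A i ⊆ A' i) (y : V) (i : ℕ) :
    lay G A y i ⊆ lay G A' y i := by
  induction i with
  | zero => exact subset_refl _
  | succ i ih =>
    intro v hv
    rcases mem_lay_succ.1 hv with h1 | ⟨h0, u, hu, huv⟩
    · exact lay_succ_subset _ (ih h1)
    · exact mem_lay_succ.2 (Or.inr ⟨h i h0, u, ih hu, huv⟩)

end Balls

section Num

lemma Lg_exp {t x : ℝ} (ht : 0 < t) (hx : 0 ≤ x) : x = t * (Real.exp (Lg t x - 1) - 1) := by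
  have : 0 < 1 + x / t := by positivity
  unfold Lg
  rw [add_sub_cancel_left, Real.exp_log this]
  field_simp
  ring

lemma exp_half {t x : ℝ} (ht : 1 ≤ t) (hx : 0 ≤ x) (hL : 100 ≤ Lg t x) :
    Real.exp (Lg t x / 2) ≤ eps t x / 4 * x := by
  have ht0 : 0 < t := by linarith
  have h4 : eps t x / 4 * x = x / (800 * Lg t x ^ 2) := by
    unfold eps; field_simp; norm_num; ring
  rw [h4, le_div_iff₀ (by positivity)]
  have hx2 := Lg_exp ht0 hx
  set L := Lg t x
  have h1 : Real.exp (L - 1) - 1 ≤ x := by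
    rw [hx2]
    have : 0 ≤ Real.exp (L - 1) - 1 := by
      have := Real.add_one_le_exp (L - 1); linarith
    nlinarith
  refine le_trans ?_ h1
  have h2 : Real.exp (L - 1) = Real.exp (L / 2) * Real.exp (L / 2 - 1) := by
    rw [← Real.exp_add]; ring_nf
  have h3 : 800 * L ^ 2 + 1 ≤ Real.exp (L / 2 - 1) := by
    have a1 := Real.pow_div_factorial_le_exp (L / 2 - 1) (by linarith) 6
    have a2 : (0.49 * L) ^ 6 ≤ (L / 2 - 1) ^ 6 := by
      apply pow_le_pow_left₀ (by positivity); linarith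
    norm_num [Nat.factorial] at a1
    have a3 : (100 : ℝ) ^ 4 ≤ L ^ 4 := by gcongr
    have a4 : L ^ 6 = L ^ 4 * L ^ 2 := by ring
    have a5 : (0.49 * L) ^ 6 = 0.49 ^ 6 * (L ^ 4 * L ^ 2) := by ring
    have a6 : (100 : ℝ) ^ 4 * L ^ 2 ≤ L ^ 4 * L ^ 2 := by gcongr
    have a7 : (1 : ℝ) ≤ L ^ 2 := by nlinarith
    rw [a5] at a2
    norm_num at a2
    linarith
  have h5 : 1 ≤ Real.exp (L / 2) := Real.one_le_exp (by linarith)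
  rw [h2]
  nlinarith [Real.exp_pos (L / 2)]

/-- lower bound on the growth at radius `q^3` -/
lemma radius_big {t x : ℝ} {q i : ℕ} (ht : 1 ≤ t) (hx : 0 ≤ x) (hq : 12700 ≤ q) (hqi : q ^ 3 ≤ i)
    (hi : (i : ℝ) ≤ 1 + 1000000 * Lg t x ^ 3) : Real.exp (q / 254) ≤ eps t x / 4 * x := by
  have ht0 : 0 < t := by linarith
  have hL1 := one_le_Lg ht0 hx
  have h1 : (q : ℝ) ^ 3 ≤ i := by exact_mod_cast hqi
  have hq' : (12700 : ℝ) ≤ q := by exact_mod_cast hq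
  have h2 : (q : ℝ) / 127 ≤ Lg t x := by
    by_contra hc
    push Not at hc
    have h3 : Lg t x ^ 3 < (q / 127 : ℝ) ^ 3 := by gcongr
    have h4 : (q / 127 : ℝ) ^ 3 = q ^ 3 / 2048383 := by rw [div_pow]; norm_num
    rw [h4] at h3
    have h5 : (12700 : ℝ) ^ 3 ≤ q ^ 3 := by gcongr
    linarith
  have := exp_half ht hx (by linarith)
  refine le_trans (Real.exp_le_exp.2 ?_) this
  linarith

end Num
end BTK
end Part14

noncomputable section Part15
open Finset
namespace BTK
open Classical
set_option linter.unusedSectionVars false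

/-- numeric package of the sparse regime -/
structure SN (t n : ℝ) (z : ℕ) : Prop where
  t0 : 10 ^ 15 ≤ t
  zb : 12700 ≤ z
  dg : 1 + 1600 * t ^ 2 ≤ Real.exp z
  uk : (uu t n : ℝ) + 4 * mm t n + 9 ≤ Real.exp z
  hv : 1 / 10 ^ 50 * t * (ll t n : ℝ) ^ 2 ≤ Real.exp z
  tb : t ≤ Real.exp z
  nb : Real.exp ((z : ℝ) ^ 40 - 2) ≤ n

lemma exists_SN : ∃ t0 : ℝ, 10 ^ 15 ≤ t0 ∧ ∀ t n : ℝ, t0 ≤ t → t / 2 ≤ n → t < 10 ^ 27 * Lg t n ^ 13 →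
    ∃ z, SN t n z := by
  have hlo := (Real.isLittleO_pow_exp_atTop (n := 1040)).def (c := 1 / (10 ^ 58 * 2 ^ 1040)) (by positivity)
  have hlo' := tendsto_natCast_atTop_atTop (R := ℝ) |>.eventually hlo
  obtain ⟨z0, hz0⟩ := Filter.eventually_atTop.1 hlo'
  set z1 := max z0 12700 with hz1
  refine ⟨max (10 ^ 15) (10 ^ 27 * ((z1 : ℝ) ^ 40) ^ 13), le_max_left _ _, ?_⟩
  intro t n ht hn hsp
  have ht15 : 10 ^ 15 ≤ t := (le_max_left _ _).trans ht
  have htz := (le_max_right _ _).trans ht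
  have ht0 : 0 < t := by linarith
  have hn0 : 0 ≤ n := by linarith
  have hL := one_le_Lg ht0 hn0
  have hLz : (z1 : ℝ) ^ 40 < Lg t n := by
    by_contra hc
    push Not at hc
    have : Lg t n ^ 13 ≤ ((z1 : ℝ) ^ 40) ^ 13 := by gcongr
    linarith
  have hll := ll_le ht0 hn0
  have huu := uu_le ht0 hn0
  have hne := Lg_exp ht0 hn0
  set L := Lg t n with hLd
  set z := ⌊L ^ (1 / 40 : ℝ)⌋₊ with hz
  have hzle : (z : ℝ) ^ 40 ≤ L := by
    have h1 : (z : ℝ) ≤ L ^ (1 / 40 : ℝ) := Nat.floor_le (by positivity)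
    calc (z : ℝ) ^ 40 ≤ (L ^ (1 / 40 : ℝ)) ^ 40 := by gcongr
      _ = L := by
        rw [← Real.rpow_natCast, ← Real.rpow_mul (by linarith)]; norm_num
  have hzlt : L < ((z : ℝ) + 1) ^ 40 := by
    have h1 : L ^ (1 / 40 : ℝ) < (z : ℝ) + 1 := Nat.lt_floor_add_one _
    calc L = (L ^ (1 / 40 : ℝ)) ^ 40 := by
          rw [← Real.rpow_natCast, ← Real.rpow_mul (by linarith)]; norm_num
      _ < ((z : ℝ) + 1) ^ 40 := by gcongr
  have hzz1 : z1 ≤ z := by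
    by_contra hc
    push Not at hc
    have : (z : ℝ) + 1 ≤ z1 := by exact_mod_cast hc
    have : ((z : ℝ) + 1) ^ 40 ≤ (z1 : ℝ) ^ 40 := by gcongr
    linarith
  have hzb : 12700 ≤ z := (le_max_right _ _).trans hzz1
  have hzr : (12700 : ℝ) ≤ z := by exact_mod_cast hzb
  have hexp : 10 ^ 58 * 2 ^ 1040 * (z : ℝ) ^ 1040 ≤ Real.exp z := by
    have h1 := hz0 z ((le_max_left _ _).trans hzz1)
    rw [Real.norm_of_nonneg (by positivity), Real.norm_of_nonneg (Real.exp_pos _).le, one_div,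
      ← div_eq_inv_mul, le_div_iff₀ (by positivity)] at h1
    linarith
  have hL26 : 10 ^ 58 * L ^ 26 ≤ Real.exp z := by
    refine le_trans ?_ hexp
    have h1 : L ≤ (2 * (z : ℝ)) ^ 40 := hzlt.le.trans (by gcongr; linarith)
    have h2 : L ^ 26 ≤ ((2 * (z : ℝ)) ^ 40) ^ 26 := by gcongr
    have h3 : ((2 * (z : ℝ)) ^ 40) ^ 26 = 2 ^ 1040 * (z : ℝ) ^ 1040 := by
      rw [← pow_mul, mul_pow]
    rw [h3] at h2
    calc 10 ^ 58 * L ^ 26 ≤ 10 ^ 58 * (2 ^ 1040 * (z : ℝ) ^ 1040) := by gcongr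
      _ = _ := by rw [mul_assoc]
  have p1 : 1 ≤ L ^ 26 := one_le_pow₀ hL
  have p9 : L ^ 9 ≤ L ^ 26 := pow_le_pow_right₀ hL (by norm_num)
  have p13 : L ^ 13 ≤ L ^ 26 := pow_le_pow_right₀ hL (by norm_num)
  have p25 : L ^ 25 ≤ L ^ 26 := pow_le_pow_right₀ hL (by norm_num)
  refine ⟨z, ht15, hzb, ?_, ?_, ?_, ?_, ?_⟩
  · have h1 : t ^ 2 ≤ (10 ^ 27 * L ^ 13) ^ 2 := by gcongr
    have h2 : (10 ^ 27 * L ^ 13) ^ 2 = 10 ^ 54 * L ^ 26 := by ring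
    rw [h2] at h1
    linarith
  · linarith
  · have h1 : 1 / 10 ^ 50 * t * (ll t n : ℝ) ^ 2 ≤
        1 / 10 ^ 50 * (10 ^ 27 * L ^ 13) * (5 * 10 ^ 12 * L ^ 6) ^ 2 := by gcongr
    have h2 : 1 / 10 ^ 50 * (10 ^ 27 * L ^ 13) * (5 * 10 ^ 12 * L ^ 6) ^ 2 = 250 * L ^ 25 := by
      ring
    linarith
  · linarith
  · have h1 : Real.exp ((z : ℝ) ^ 40 - 2) ≤ Real.exp (L - 2) := Real.exp_le_exp.2 (by linarith)
    refine h1.trans ?_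
    have hL2 : 2 ≤ L := by
      have : (2 : ℝ) ^ 40 ≤ (z : ℝ) ^ 40 := by gcongr; linarith
      linarith
    have h2 : Real.exp (L - 1) = Real.exp (L - 2) * Real.exp 1 := by
      rw [← Real.exp_add]; ring_nf
    have h3 := Real.add_one_le_exp (1 : ℝ)
    have h4 := Real.one_le_exp (x := L - 2) (by linarith)
    have h5 : 2 * Real.exp (L - 2) ≤ Real.exp (L - 1) := by
      rw [h2]; nlinarith
    rw [hne]
    have h6 : Real.exp (L - 2) ≤ Real.exp (L - 1) - 1 := by linarith
    refine h6.trans ?_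
    nlinarith

lemma SN.arith {t n : ℝ} {z : ℕ} (h : SN t n z) :
    2 * Real.exp z ≤ Real.exp ((z ^ 2 : ℕ) / 254) ∧
    (4 * Real.exp z + Real.exp z ^ (z ^ 6)) ≤ Real.exp ((z ^ 10 : ℕ) / 254) ∧
    (4 * Real.exp z + Real.exp z ^ (z ^ 6)) * Real.exp z ^ (z ^ 30 + 1) < n ∧
    2 * (Real.exp z * Real.exp z ^ (2 * z ^ 30 + 2)) < n := by
  have hz : (12700 : ℝ) ≤ z := by exact_mod_cast h.zb
  have e2 : (2 : ℝ) ≤ Real.exp 1 := by have := Real.add_one_le_exp (1 : ℝ); linarith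
  have e8 : (8 : ℝ) ≤ Real.exp 3 := by
    have : Real.exp 3 = Real.exp 1 ^ 3 := by rw [← Real.exp_nat_mul]; norm_num
    rw [this]
    calc (8 : ℝ) = 2 ^ 3 := by norm_num
      _ ≤ _ := by gcongr
  have pw : ∀ k : ℕ, Real.exp z ^ k = Real.exp (k * z) := by
    intro k; rw [← Real.exp_nat_mul]
  have z1 : (1 : ℝ) ≤ z := by linarith
  have m7 : (z : ℝ) ≤ z ^ 7 := by
    calc (z : ℝ) = z ^ 1 := by ring
      _ ≤ z ^ 7 := pow_le_pow_right₀ z1 (by norm_num)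
  have hb : 4 * Real.exp z + Real.exp z ^ (z ^ 6) ≤ Real.exp ((z : ℝ) ^ 7 + 3) := by
    rw [pw]
    have h1 : Real.exp z ≤ Real.exp ((z : ℝ) ^ 7) := Real.exp_le_exp.2 m7
    have h2 : ((z ^ 6 : ℕ) : ℝ) * z = (z : ℝ) ^ 7 := by push_cast; ring
    rw [h2, Real.exp_add]
    have := Real.exp_pos ((z : ℝ) ^ 7)
    nlinarith
  have p31 : (z : ℝ) ^ 7 ≤ z ^ 31 := pow_le_pow_right₀ z1 (by norm_num)
  have p31' : (z : ℝ) ≤ z ^ 31 := m7.trans p31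
  have p40 : 12700 * (z : ℝ) ^ 31 ≤ z ^ 40 := by
    have a1 : (z : ℝ) ^ 40 = z ^ 8 * z * z ^ 31 := by ring
    have a2 : (1 : ℝ) ≤ z ^ 8 := one_le_pow₀ z1
    rw [a1]
    have a3 : 0 ≤ (z : ℝ) ^ 31 := by positivity
    have a4 : 12700 ≤ (z : ℝ) ^ 8 * z := by nlinarith
    nlinarith
  refine ⟨?_, ?_, ?_, ?_⟩
  · calc 2 * Real.exp z ≤ Real.exp 1 * Real.exp z := by gcongr
      _ = Real.exp (1 + z) := by rw [Real.exp_add]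
      _ ≤ _ := by
        apply Real.exp_le_exp.2
        push_cast
        nlinarith
  · refine hb.trans (Real.exp_le_exp.2 ?_)
    push_cast
    have a1 : (z : ℝ) ^ 10 = z ^ 2 * z * z ^ 7 := by ring
    have a2 : (1 : ℝ) ≤ z ^ 2 := one_le_pow₀ z1
    rw [a1]
    have a3 : 0 ≤ (z : ℝ) ^ 7 := by positivity
    have a4 : 12700 ≤ (z : ℝ) ^ 2 * z := by nlinarith
    have a5 : 12700 * (z : ℝ) ^ 7 ≤ z ^ 2 * z * z ^ 7 := by nlinarith
    linarith
  · refine lt_of_lt_of_le ?_ h.nb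
    calc _ ≤ Real.exp ((z : ℝ) ^ 7 + 3) * Real.exp z ^ (z ^ 30 + 1) := by gcongr
      _ = Real.exp ((z : ℝ) ^ 7 + 3 + ((z ^ 30 + 1 : ℕ) : ℝ) * z) := by rw [pw, ← Real.exp_add]
      _ < _ := by
        apply Real.exp_lt_exp.2
        push_cast
        have : ((z : ℝ) ^ 30 + 1) * z = z ^ 31 + z := by ring
        rw [this]
        linarith
  · refine lt_of_lt_of_le ?_ h.nb
    calc _ ≤ Real.exp 1 * (Real.exp z * Real.exp z ^ (2 * z ^ 30 + 2)) := by gcongr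
      _ = Real.exp (1 + (z + ((2 * z ^ 30 + 2 : ℕ) : ℝ) * z)) := by rw [pw, ← Real.exp_add, ← Real.exp_add]
      _ < _ := by
        apply Real.exp_lt_exp.2
        push_cast
        have : (2 * (z : ℝ) ^ 30 + 2) * z = 2 * z ^ 31 + 2 * z := by ring
        rw [this]
        linarith

lemma small_loss {t x i : ℝ} (ht : 10 ^ 15 ≤ t) (hx : t / 1600 ≤ x)
    (hi : i ≤ 1 + 1000000 * Lg t x ^ 3) : 2 * i + 5 ≤ eps t x / 2 * x := by
  have ht0 : 0 < t := by linarith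
  have hx0 : 0 < x := lt_of_lt_of_le (by positivity) hx
  have hL := one_le_Lg ht0 hx0.le
  have h5 := Lg_pow ht0 hx 5
  set L := Lg t x with hLd
  have h4 : eps t x / 2 * x = x / (400 * L ^ 2) := by
    unfold eps; rw [← hLd]; field_simp; norm_num
  rw [h4, le_div_iff₀ (by positivity)]
  have h3 : 1 ≤ L ^ 3 := one_le_pow₀ hL
  have a1 : 2 * i + 5 ≤ 2000007 * L ^ 3 := by linarith
  calc (2 * i + 5) * (400 * L ^ 2) ≤ 2000007 * L ^ 3 * (400 * L ^ 2) := by gcongr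
    _ = 2000007 * 400 * L ^ 5 := by ring
    _ ≤ 2000007 * 400 * ((5 : ℕ).factorial * 4803 * (x / t)) := by gcongr
    _ ≤ x := by
      rw [← mul_div_assoc, ← mul_div_assoc, div_le_iff₀ ht0]
      norm_num [Nat.factorial]
      nlinarith
end BTK
end Part15

noncomputable section Part16
open Finset
namespace BTK
open Classical
set_option linter.unusedSectionVars false

section SparseC
variable {V : Type} [Fintype V] {G : SimpleGraph V}

lemma zl_empty {A : ℕ → Finset V} {Z : Finset V} {y : V} {i : ℕ}
    (hZ : ∀ v ∈ Z, v ≠ y → ¬ wi G (i + 1) y v) : (#(zl G A Z y i) : ℝ) = 0 := by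
  have : zl G A Z y i = ∅ := by
    rw [Finset.eq_empty_iff_forall_notMem]
    intro v hv
    obtain ⟨h1, h2, u, hu, huv⟩ := Finset.mem_filter.1 hv
    refine hZ v h1 ?_ ((lay_wi i u hu).trans (wi.adj huv))
    rintro rfl
    exact h2 (lay_mono (Nat.zero_le i) (by simp [lay]))
  rw [this]; simp

set_option maxHeartbeats 3000000 in
lemma sparse_connect {t : ℝ} {z : ℕ} {col : V → Bool} (h : RE G t col) (sn : SN t (Fintype.card V) z)
    {w : V → ℝ} (hw0 : ∀ v, 0 ≤ w v)
    (hw : ∑ v, w v ^ 2 ≤ 1 / 10 ^ 50 * t) (Br : Finset V) (hBr : (#Br : ℝ) ≤ t / 10 ^ 9)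
    (hsep : ∀ x ∈ Br, ∀ y ∈ Br, x ≠ y → ¬ wi G (2 * z ^ 30 + 2) x y)
    {a b : V} (ha : a ∈ Br) (hb : b ∈ Br) (hab : a ≠ b) (hcol : col a = col b) :
    ∃ S, PS G a b (ll t (Fintype.card V)) S ∧ (∀ v ∈ S, v ∈ Br → v = a ∨ v = b) ∧
      ∑ v ∈ (S.erase a).erase b, w v ≤ 8 := by
  have t15 := sn.t0
  have ht : 4 ≤ t := by linarith
  have ht0 : 0 < t := by linarith
  have hn := h.card_pos ht
  have hbig := h.big
  obtain ⟨ar1, ar2, ar3, ar4⟩ := sn.arith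
  have huk := sn.uk
  have hhv := sn.hv
  have hdg := sn.dg
  have htb := sn.tb
  have hzb := sn.zb
  have hz1 : 1 ≤ z := by omega
  have hmm0 : (0 : ℝ) ≤ mm t (Fintype.card V) := Nat.cast_nonneg _
  have hl0 : 0 < ll t (Fintype.card V) := by unfold ll; positivity
  set l := ll t (Fintype.card V) with hl
  set m := mm t (Fintype.card V) with hm
  set u := uu t (Fintype.card V) with hu
  set X := Real.exp z with hX
  have hX0 : 0 < X := Real.exp_pos _
  have hmu : (0 : ℝ) ≤ u := Nat.cast_nonneg _
  have p6 : 1 ≤ z ^ 6 := Nat.one_le_pow _ _ hz1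
  have p630 : z ^ 6 ≤ z ^ 30 := Nat.pow_le_pow_right hz1 (by norm_num)
  have hz2 : 12700 ≤ z ^ 2 := by nlinarith
  have hz10 : 12700 ≤ z ^ 10 := hz2.trans (Nat.pow_le_pow_right hz1 (by norm_num))
  have hball : ∀ (Y : Finset V) (r : ℕ), (#(bl G r Y) : ℝ) ≤ #Y * X ^ r := by
    intro Y r
    refine (bl_card h.deg Y r).trans ?_
    gcongr
  set W := univ.filter (fun v => 1 / (l : ℝ) < w v) with hW
  have hWc : (#W : ℝ) ≤ X :=
    (heavy_count (w := w) (r := (l : ℝ)) (by exact_mod_cast hl0) hw).trans hhv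
  set Z0 := bl G (z ^ 6) {a} with hZ0
  have hZc : (#Z0 : ℝ) ≤ X ^ (z ^ 6) := by
    have := hball {a} (z ^ 6)
    simpa using this
  have hBc : (#Br : ℝ) ≤ X := by linarith
  have hZmem : ∀ v, v ∈ Z0 → wi G (z ^ 6) a v := by
    intro v hv
    obtain ⟨x, hx, hxv⟩ := mem_bl.1 hv
    rw [Finset.mem_singleton] at hx
    rwa [hx] at hxv
  have hbZ : b ∉ Z0 := by
    intro hc
    exact hsep a ha b hb hab ((hZmem b hc).mono (by omega))
  set U0 := (W ∪ Br) ∪ Z0 with hU0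
  have hU0c : (#U0 : ℝ) ≤ 2 * X + X ^ (z ^ 6) := by
    have e1 : #U0 ≤ #W + #Br + #Z0 :=
      (Finset.card_union_le _ _).trans (Nat.add_le_add_right (Finset.card_union_le _ _) _)
    have e2 : (#U0 : ℝ) ≤ #W + #Br + #Z0 := by exact_mod_cast e1
    linarith
  refine connect (m := m) (u := u) (Z0 := Z0) (U0 := U0) h.bip hw0 rfl ?_ ?_ ?_ le_rfl ha hb hab hcol hbZ ?_ ?_ ?_
  · intro v hv
    exact Finset.mem_union_left _ (Finset.mem_union_right _ hv)
  · exact Finset.subset_union_right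
  · intro v hv
    by_contra hc
    push Not at hc
    apply hv
    exact Finset.mem_union_left _ (Finset.mem_union_left _ (Finset.mem_filter.2 ⟨Finset.mem_univ _, hc⟩))
  · have hemp : ∀ i, i + 1 ≤ z ^ 30 → (#(zl G (thrA w l (Z0 ∪ Br)) (Z0 ∪ Br) b i) : ℝ) = 0 := by
      intro i hi
      apply zl_empty
      intro v hv hvb hwi
      rcases Finset.mem_union.1 hv with hv | hv
      · exact hsep a ha b hb hab (((hZmem v hv).trans hwi.symm).mono (by omega))
      · exact hsep b hb v hv (Ne.symm hvb) (hwi.mono (by omega))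
    refine growth_thr h ht w l hw (Z0 ∪ Br) b ?_ ?_ m mm_gt
    · rw [hemp 0 (by omega)]; positivity
    · intro i hi1 hx _ hi
      by_cases hii : i + 1 ≤ z ^ 30
      · rw [hemp i hii]
        have := eps_mul_ge ht0 hx
        have : 0 < t / 10 ^ 7 := by positivity
        linarith
      · have e1 := radius_big (q := z ^ 10) (i := i) (by linarith) (Nat.cast_nonneg _) hz10
          (by rw [← pow_mul]; norm_num; omega) hi
        have e2 : (#(zl G (thrA w l (Z0 ∪ Br)) (Z0 ∪ Br) b i) : ℝ) ≤ #Z0 + #Br := by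
          exact_mod_cast (Finset.card_le_card (Finset.filter_subset _ _)).trans (Finset.card_union_le _ _)
        linarith
  · intro Uc hUc hUZ
    have hUc' : (#Uc : ℝ) ≤ u := by exact_mod_cast hUc
    have hemp : ∀ i, i + 1 ≤ z ^ 6 → (#(zl G (thrA w l (Uc ∪ Br)) (Uc ∪ Br) a i) : ℝ) = 0 := by
      intro i hi
      apply zl_empty
      intro v hv hva hwi
      rcases Finset.mem_union.1 hv with hv | hv
      · exact hUZ v hv (mem_bl.2 ⟨a, by simp, hwi.mono hi⟩)
      · exact hsep a ha v hv (Ne.symm hva) (hwi.mono (by omega))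
    refine growth_thr h ht w l hw (Uc ∪ Br) a ?_ ?_ m mm_gt
    · rw [hemp 0 (by omega)]; positivity
    · intro i hi1 hx _ hi
      by_cases hii : i + 1 ≤ z ^ 6
      · rw [hemp i hii]
        have := eps_mul_ge ht0 hx
        have : 0 < t / 10 ^ 7 := by positivity
        linarith
      · have e1 := radius_big (q := z ^ 2) (i := i) (by linarith) (Nat.cast_nonneg _) hz2
          (by rw [← pow_mul]; norm_num; omega) hi
        have e2 : (#(zl G (thrA w l (Uc ∪ Br)) (Uc ∪ Br) a i) : ℝ) ≤ #Uc + #Br := by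
          exact_mod_cast (Finset.card_le_card (Finset.filter_subset _ _)).trans (Finset.card_union_le _ _)
        linarith
  · intro Uc hUc
    have hUc' : (#Uc : ℝ) ≤ u := by exact_mod_cast hUc
    set U := U0 ∪ Uc with hU
    have hUcard : (#U : ℝ) ≤ 2 * X + X ^ (z ^ 6) + u := by
      have e2 : (#U : ℝ) ≤ #U0 + #Uc := by exact_mod_cast Finset.card_union_le _ _
      linarith
    set K := (bl G (z ^ 30) U)ᶜ with hK
    refine ⟨K, ?_, ?_, ?_⟩
    · intro v hv
      rw [Finset.mem_compl] at hv ⊢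
      exact fun hc => hv (mem_bl.2 ⟨v, hc, wi.refl _ _⟩)
    · have hdl : ∀ v ∈ K, t / 800 ≤ #(nb G univ v) := by
        intro v _
        refine (h.onb_one ht v).trans ?_
        have : onb G {v} ⊆ nb G univ v := by
          intro x hx
          simp only [onb, Finset.mem_filter, Finset.mem_singleton, exists_eq_left] at hx
          exact mem_nb.2 ⟨Finset.mem_univ _, hx.2.2⟩
        exact_mod_cast Finset.card_le_card this
      have e1 := mul_le_ee hdl
      have e2 : ee G K univ ≤ ee G K K + ee G K Kᶜ := by
        have := ee_union_right_le (G := G) K K Kᶜ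
        rwa [Finset.union_compl] at this
      have e3 : (ee G Kᶜ K : ℝ) ≤ #Kᶜ * (1600 * t ^ 2) := by
        refine le_trans ?_ (ee_le_mul (A := Kᶜ) (B := univ) (fun v _ => h.deg v))
        exact_mod_cast ee_mono (subset_refl _) (Finset.subset_univ _)
      rw [ee_comm] at e3
      have e4 : (#Kᶜ : ℝ) ≤ #U * X ^ (z ^ 30) := by rw [hK, compl_compl]; exact hball _ _
      have e5 : (#Kᶜ : ℝ) * (1 + 1600 * t ^ 2) < Fintype.card V := by
        calc (#Kᶜ : ℝ) * (1 + 1600 * t ^ 2) ≤ #U * X ^ (z ^ 30) * X := by gcongr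
          _ = #U * X ^ (z ^ 30 + 1) := by rw [pow_succ]; ring
          _ ≤ (4 * X + X ^ (z ^ 6)) * X ^ (z ^ 30 + 1) := by gcongr; linarith
          _ < _ := ar3
      have e6 : (#K : ℝ) + #Kᶜ = Fintype.card V := by
        exact_mod_cast Finset.card_add_card_compl K
      have e7 : (ee G K univ : ℝ) ≤ ee G K K + ee G K Kᶜ := by exact_mod_cast e2
      have e8 : (0 : ℝ) ≤ #Kᶜ := Nat.cast_nonneg _
      have e9 : (#Kᶜ : ℝ) ≤ #Kᶜ * (1600 * t ^ 2) := by
        have h1 : (1 : ℝ) ≤ 1600 * t ^ 2 := by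
          have : (1 : ℝ) ≤ t ^ 2 := one_le_pow₀ (by linarith)
          linarith
        exact le_mul_of_one_le_right e8 h1
      have : (2 * #K : ℝ) < ee G K K := by
        have : (10 : ℝ) * #K ≤ #K * (t / 800) := by
          have : (0 : ℝ) ≤ #K := Nat.cast_nonneg _
          rw [mul_comm]
          exact mul_le_mul_of_nonneg_left (by linarith) this
        linarith
      exact_mod_cast this
    · intro y hy T hT hTl
      set A : ℕ → Finset V := fun _ => (U ∪ T.erase y)ᶜ with hA
      have hAs : ∀ i, A i ⊆ (fun _ : ℕ => Uᶜ) i := by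
        intro i v hv
        simp only [hA, Finset.mem_compl, Finset.mem_union, not_or] at hv ⊢
        exact hv.1
      have hT' : (#T : ℝ) ≤ 4 * m + 8 := by exact_mod_cast hT
      have hlost : ∀ i, i + 1 ≤ z ^ 30 → (#(lost G A y i) : ℝ) ≤ 2 * i + 5 := by
        intro i hi
        have hs : lost G A y i ⊆ T ∩ lay G (fun _ => Uᶜ) y (i + 1) := by
          intro v hv
          obtain ⟨h1, h2, x, hx, hxv⟩ := mem_lost.1 hv
          have hvU : v ∉ U := by
            intro hc
            rw [hK, Finset.mem_compl] at hy
            exact hy (mem_bl.2 ⟨v, hc, (((lay_wi i x hx).trans (wi.adj hxv)).mono hi).symm⟩)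
          simp only [hA, Finset.mem_compl, not_not, Finset.mem_union] at h1
          have hvT : v ∈ T := by
            rcases h1 with h1 | h1
            · exact absurd h1 hvU
            · exact Finset.mem_of_mem_erase h1
          rw [Finset.mem_inter]
          refine ⟨hvT, mem_lay_succ.2 (Or.inr ⟨by simpa using hvU, x, lay_mono_A hAs y i hx, hxv⟩)⟩
        have := (Finset.card_le_card hs).trans (hTl (i + 1))
        have h3 : (#(lost G A y i) : ℝ) ≤ 2 * ((i + 1 : ℕ) : ℝ) + 3 := by exact_mod_cast this
        push_cast at h3
        linarith
      refine growth h ht A y ?_ ?_ m mm_gt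
      · have := hlost 0 (by omega)
        push_cast at this
        linarith
      · intro i hi1 hx _ hi
        by_cases hii : i + 1 ≤ z ^ 30
        · exact (hlost i hii).trans (small_loss t15 hx hi)
        · have e1 := radius_big (q := z ^ 10) (i := i) (by linarith) (Nat.cast_nonneg _) hz10
            (by rw [← pow_mul]; norm_num; omega) hi
          have e2 : (#(lost G A y i) : ℝ) ≤ #U + #T := by
            have : lost G A y i ⊆ U ∪ T := by
              intro v hv
              obtain ⟨h1, -⟩ := mem_lost.1 hv
              simp only [hA, Finset.mem_compl, not_not, Finset.mem_union] at h1 ⊢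
              rcases h1 with h1 | h1
              · exact Or.inl h1
              · exact Or.inr (Finset.mem_of_mem_erase h1)
            exact_mod_cast (Finset.card_le_card this).trans (Finset.card_union_le _ _)
          have e3 := eps_mul_ge ht0 hx
          have : 0 < t / 10 ^ 7 := by positivity
          linarith
end SparseC
end BTK
end Part16

noncomputable section Part17
open Finset
namespace BTK
open Classical
set_option linter.unusedSectionVars false

section Fin
variable {V : Type} [Fintype V] {G : SimpleGraph V}

lemma assemble (Br : Finset V) (l k : ℕ) (hl : 0 < l) (hk : #Br = k) (B : ℝ) (hB : 0 < B)
    (hBk : 256 * (k : ℝ) ^ 2 ≤ B)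
    (hc : ∀ w : V → ℝ, (∀ v, 0 ≤ w v) → ∑ v, w v ^ 2 ≤ B → ∀ a ∈ Br, ∀ b ∈ Br, a ≠ b →
      ∃ S, PS G a b l S ∧ (∀ v ∈ S, v ∈ Br → v = a ∨ v = b) ∧ ∑ v ∈ (S.erase a).erase b, w v ≤ 8) :
    ∃ l, TKf G k l := by
  obtain ⟨r, rfl⟩ : ∃ r, l = r + 1 := ⟨l - 1, by omega⟩
  let e := Br.equivFin.symm
  subst hk
  let b : Fin #Br → V := fun i => (e i).1
  have hb : Function.Injective b := fun i j h => e.injective (Subtype.ext h)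
  have hbB : ∀ i, b i ∈ Br := fun i => (e i).2
  let E := {p : Fin #Br × Fin #Br // p.1 < p.2}
  have hE : (Fintype.card E : ℝ) ≤ (#Br : ℝ) ^ 2 := by
    have := Fintype.card_subtype_le (fun p : Fin #Br × Fin #Br => p.1 < p.2)
    rw [Fintype.card_prod, Fintype.card_fin, ← pow_two] at this
    exact_mod_cast this
  let F : E → Finset (Finset V) := fun p => univ.filter (fun I => ∃ S, PS G (b p.1.1) (b p.1.2) (r + 1) S ∧
    (∀ v ∈ S, v ∈ Br → v = b p.1.1 ∨ v = b p.1.2) ∧ I = (S.erase (b p.1.1)).erase (b p.1.2))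
  obtain ⟨f, hf, hdis⟩ := sel F B 8 hB (by norm_num) (by
    intro w hw0 hw p
    obtain ⟨S, h1, h2, h3⟩ := hc w hw0 hw _ (hbB p.1.1) _ (hbB p.1.2) (fun h => p.2.ne (hb h))
    exact ⟨_, Finset.mem_filter.2 ⟨Finset.mem_univ _, S, h1, h2, rfl⟩, h3⟩) (by linarith)
  have hf' : ∀ p : E, ∃ q : ℕ → V, q 0 = b p.1.1 ∧ q (r + 1) = b p.1.2 ∧
      (∀ s < r + 1, G.Adj (q s) (q (s + 1))) ∧
      (∀ s ≤ r + 1, ∀ s' ≤ r + 1, q s = q s' → s = s') ∧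
      ∀ s ≤ r + 1, s ≠ 0 → s ≠ r + 1 → q s ∈ f p ∧ q s ∉ Br := by
    intro p
    obtain ⟨-, S, h1, h2, h3⟩ := Finset.mem_filter.1 (hf p)
    obtain ⟨q, q0, q1, q2, q3, q4⟩ := h1.fn
    refine ⟨q, q0, q1, q2, q3, ?_⟩
    intro s hs hs0 hs1
    have n0 : q s ≠ b p.1.1 := fun h => hs0 (q3 s hs 0 (by omega) (h.trans q0.symm))
    have n1 : q s ≠ b p.1.2 := fun h => hs1 (q3 s hs _ le_rfl (h.trans q1.symm))
    refine ⟨?_, ?_⟩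
    · rw [h3]
      exact Finset.mem_erase.2 ⟨n1, Finset.mem_erase.2 ⟨n0, q4 s hs⟩⟩
    · intro hB'
      rcases h2 _ (q4 s hs) hB' with h | h
      · exact n0 h
      · exact n1 h
  choose q q0 q1 q2 q3 q4 using hf'
  refine ⟨r, b, hb, fun i j => if h : i < j then q ⟨(i, j), h⟩ else fun _ => b i, ?_, ?_⟩
  · intro i j hij
    simp only [dif_pos hij]
    refine ⟨q0 _, q1 _, fun s hs => q2 _ s (by omega), q3 _⟩
  · intro i j i' j' hij hij' hne s hs s' hs' heq
    simp only [dif_pos hij, dif_pos hij'] at heq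
    have hend : ∀ (p : E) (s : ℕ), (s = 0 ∨ s = r + 1) → q p s ∈ Br := by
      rintro p s (rfl | rfl)
      · rw [q0]; exact hbB _
      · rw [q1]; exact hbB _
    by_cases c1 : s = 0 ∨ s = r + 1
    · refine ⟨c1, ?_⟩
      by_contra c2
      push Not at c2
      have := (q4 ⟨(i', j'), hij'⟩ s' hs' c2.1 c2.2).2
      rw [← heq] at this
      exact this (hend _ _ c1)
    · exfalso
      have c1' := c1
      push Not at c1'
      have a1 := q4 ⟨(i, j), hij⟩ s hs c1'.1 c1'.2
      by_cases c2 : s' = 0 ∨ s' = r + 1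
      · rw [heq] at a1
        exact a1.2 (hend _ _ c2)
      · push Not at c2
        have a2 := q4 ⟨(i', j'), hij'⟩ s' hs' c2.1 c2.2
        have := hdis ⟨(i, j), hij⟩ ⟨(i', j'), hij'⟩ (fun h => hne (congrArg Subtype.val h))
        rw [heq] at a1
        exact Finset.disjoint_left.1 this a1.1 a2.1

lemma big_side (col : V → Bool) : ∃ S : Finset V, Fintype.card V ≤ 2 * #S ∧ ∀ x ∈ S, ∀ y ∈ S, col x = col y := by
  have h := Finset.card_filter_add_card_filter_not (s := (univ : Finset V)) (fun v => col v = true)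
  rw [Finset.card_univ] at h
  rcases le_total (#(univ.filter (fun v => col v = true))) (#(univ.filter (fun v => ¬ col v = true))) with h1 | h1
  · refine ⟨univ.filter (fun v => ¬ col v = true), by omega, fun x hx y hy => ?_⟩
    simp at hx hy; rw [hx, hy]
  · refine ⟨univ.filter (fun v => col v = true), by omega, fun x hx y hy => ?_⟩
    simp at hx hy; rw [hx, hy]

lemma sep_set {D : ℝ} (hD : ∀ v, (#(nb G univ v) : ℝ) ≤ D) (S : Finset V) (r k : ℕ)
    (hk : (k : ℝ) * (1 + D) ^ r < #S) (hD0 : 0 ≤ D) : ∀ j ≤ k, ∃ Br ⊆ S, #Br = j ∧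
      ∀ x ∈ Br, ∀ y ∈ Br, x ≠ y → ¬ wi G r x y := by
  intro j
  induction j with
  | zero => intro _; exact ⟨∅, by simp, by simp, by simp⟩
  | succ j ih =>
    intro hj
    obtain ⟨Br, h1, h2, h3⟩ := ih (by omega)
    have hlt : #(bl G r Br) < #S := by
      have e1 := bl_card hD Br r
      have e2 : (#Br : ℝ) * (1 + D) ^ r ≤ k * (1 + D) ^ r := by
        gcongr; omega
      have : (#(bl G r Br) : ℝ) < #S := by linarith
      exact_mod_cast this
    obtain ⟨x, hx, hxb⟩ := Finset.exists_mem_notMem_of_card_lt_card hlt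
    have hfar : ∀ y ∈ Br, ¬ wi G r y x := fun y hy hc => hxb (mem_bl.2 ⟨y, hy, hc⟩)
    refine ⟨insert x Br, Finset.insert_subset hx h1, ?_, ?_⟩
    · rw [Finset.card_insert_of_notMem (fun hc => hfar x hc (wi.refl _ _)), h2]
    · intro u hu v hv huv
      rcases Finset.mem_insert.1 hu with rfl | hu2 <;> rcases Finset.mem_insert.1 hv with rfl | hv2
      · exact absurd rfl huv
      · exact fun hc => hfar v hv2 hc.symm
      · exact hfar u hu2
      · exact h3 u hu2 v hv2 huv

lemma main_RE : ∃ t0 : ℝ, 10 ^ 15 ≤ t0 ∧ ∀ (V : Type) [Fintype V] (G : SimpleGraph V) (t : ℝ) (col : V → Bool) (k : ℕ),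
    RE G t col → t0 ≤ t → 256 * (k : ℝ) ^ 2 ≤ 1 / 10 ^ 50 * t → ∃ l, TKf G k l := by
  obtain ⟨t0, ht15, hSN⟩ := exists_SN
  refine ⟨t0, ht15, ?_⟩
  intro V _ G t col k h htt hk
  have ht : 4 ≤ t := by linarith
  have ht0 : 0 < t := by linarith
  have hkt : (k : ℝ) ≤ t / 10 ^ 9 := by
    have : (k : ℝ) ≤ (k : ℝ) ^ 2 := by exact_mod_cast Nat.le_self_pow (by norm_num) k
    linarith
  have hbig := h.big
  have hl0 : 0 < ll t (Fintype.card V) := by unfold ll; positivity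
  obtain ⟨S, hS, hScol⟩ := big_side col
  have hS' : (Fintype.card V : ℝ) ≤ 2 * #S := by exact_mod_cast hS
  by_cases hd : 10 ^ 27 * Lg t (Fintype.card V) ^ 13 ≤ t
  · have : k ≤ #S := by
      have : (k : ℝ) ≤ #S := by linarith
      exact_mod_cast this
    obtain ⟨Br, hBr, hBk⟩ := Finset.exists_subset_card_eq this
    refine assemble Br _ k hl0 hBk (1 / 10 ^ 50 * t) (by positivity) hk ?_
    intro w hw0 hw a ha b hb hab
    exact dense_connect h ht hd hw0 hw Br (by rw [hBk]; exact hkt) ha hb hab (hScol _ (hBr ha) _ (hBr hb))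
  · push Not at hd
    obtain ⟨z, sn⟩ := hSN t (Fintype.card V) htt hbig hd
    obtain ⟨-, -, -, ar4⟩ := sn.arith
    have hdg := sn.dg
    have htb := sn.tb
    obtain ⟨Br, hBr, hBk, hsep⟩ := sep_set h.deg S (2 * z ^ 30 + 2) k (by
      have : (k : ℝ) * (1 + 1600 * t ^ 2) ^ (2 * z ^ 30 + 2) ≤ Real.exp z * Real.exp z ^ (2 * z ^ 30 + 2) := by
        gcongr; linarith
      linarith) (by positivity) k le_rfl
    refine assemble Br _ k hl0 hBk (1 / 10 ^ 50 * t) (by positivity) hk ?_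
    intro w hw0 hw a ha b hb hab
    exact sparse_connect h sn hw0 hw Br (by rw [hBk]; exact hkt) hsep ha hb hab (hScol _ (hBr ha) _ (hBr hb))

lemma avg_ee (G : SimpleGraph V) {d : ℝ} (hd : 0 < d) (h : d ≤ avgDeg G) :
    Nonempty V ∧ d * Fintype.card V ≤ ee G univ univ := by
  have hne : Nonempty V := by
    by_contra hc
    rw [not_nonempty_iff] at hc
    unfold avgDeg at h
    simp at h
    linarith
  refine ⟨hne, ?_⟩
  unfold avgDeg at h
  rw [Nat.card_eq_fintype_card, le_div_iff₀ (by exact_mod_cast Fintype.card_pos),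
    finsum_eq_sum_of_fintype] at h
  refine h.trans (le_of_eq ?_)
  unfold ee
  push_cast
  refine Finset.sum_congr rfl fun v _ => ?_
  congr 1
  rw [Set.ncard_eq_toFinset_card']
  congr 1
  ext x
  simp [mem_nb]

end Fin

theorem final :
    ∃ c : Real, 0 < c ∧
      ∀ d : Real, 0 < d →
        ∀ (V : Type) [Fintype V] (G : SimpleGraph V), d ≤ avgDeg G →
          ∃ k : Nat, c * Real.sqrt d ≤ (k : Real) ∧ ∃ l : Nat, HasTK G k l := by
  obtain ⟨t0, ht0, hmain⟩ := main_RE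
  have ht0p : 0 < t0 := by linarith
  set c := min (1 / 10 ^ 27) (1 / Real.sqrt (4 * t0)) with hc
  have hcp : 0 < c := by
    have : 0 < Real.sqrt (4 * t0) := Real.sqrt_pos.2 (by positivity)
    rw [hc]; positivity
  refine ⟨c, hcp, ?_⟩
  intro d hd V _ G hG
  obtain ⟨hne, hE⟩ := avg_ee G hd hG
  by_cases h1 : c * Real.sqrt d ≤ 1
  · exact ⟨1, by simpa using h1, 0, (TKf.one G hne.some).hasTK⟩
  push Not at h1
  have hdt : 4 * t0 ≤ d := by
    by_contra hcon
    push Not at hcon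
    have a1 : Real.sqrt d ≤ Real.sqrt (4 * t0) := Real.sqrt_le_sqrt hcon.le
    have a2 : 0 < Real.sqrt (4 * t0) := Real.sqrt_pos.2 (by positivity)
    have a3 : c * Real.sqrt d ≤ 1 / Real.sqrt (4 * t0) * Real.sqrt (4 * t0) := by
      gcongr; exact min_le_right _ _
    rw [one_div, inv_mul_cancel₀ a2.ne'] at a3
    linarith
  set k := ⌈c * Real.sqrt d⌉₊ with hk
  refine ⟨k, Nat.le_ceil _, ?_⟩
  have hk2 : (k : ℝ) ≤ 2 * (c * Real.sqrt d) := by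
    have := Nat.ceil_lt_add_one (a := c * Real.sqrt d) (by positivity)
    linarith
  have hksq : (k : ℝ) ^ 2 ≤ 4 / 10 ^ 54 * d := by
    have hcc : c ≤ 1 / 10 ^ 27 := min_le_left _ _
    calc (k : ℝ) ^ 2 ≤ (2 * (1 / 10 ^ 27 * Real.sqrt d)) ^ 2 := by
          have : (k : ℝ) ≤ 2 * (1 / 10 ^ 27 * Real.sqrt d) := hk2.trans (by gcongr)
          gcongr
      _ = 4 / 10 ^ 54 * Real.sqrt d ^ 2 := by ring
      _ = _ := by rw [Real.sq_sqrt hd.le]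
  have hkk : (k : ℝ) ≤ (k : ℝ) ^ 2 := by exact_mod_cast Nat.le_self_pow (by norm_num) k
  suffices hs : ∃ l, TKf G k l by
    obtain ⟨l, hl⟩ := hs
    exact ⟨l, hl.hasTK⟩
  refine step0 d (by linarith) k (by linarith) ?_ _ V G rfl hne hE
  intro W _ H hW hHE hHd
  obtain ⟨col, H', hle, hbip, hee⟩ := bip H
  have hee' : (ee H univ univ : ℝ) ≤ 2 * ee H' univ univ := by exact_mod_cast hee
  have hdeg : ∀ v, (#(nb H' univ v) : ℝ) ≤ 1600 * (d / 4) ^ 2 := by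
    intro v
    have : nb H' univ v ⊆ nb H univ v := by
      intro x hx
      rw [mem_nb] at hx ⊢
      exact ⟨hx.1, hle hx.2⟩
    have e1 : (#(nb H' univ v) : ℝ) ≤ #(nb H univ v) := by exact_mod_cast Finset.card_le_card this
    have e2 := hHd v
    have e3 : 1600 * (d / 4) ^ 2 = 100 * d ^ 2 := by ring
    linarith
  obtain ⟨A, hA, hRE⟩ := propA H' (d / 4) (by positivity) col hbip hdeg (by linarith)
  obtain ⟨l, hl⟩ := hmain _ _ (d / 4) _ k hRE (by linarith) (by linarith)
  exact ⟨l, (hl.of_induce).map id Function.injective_id (fun x y hxy => hle hxy)⟩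

end BTK
end Part17

theorem statement_0 :
    ∃ c : Real, 0 < c ∧
      ∀ d : Real, 0 < d →
        ∀ (V : Type) [Fintype V] (G : SimpleGraph V), d ≤ avgDeg G →
          ∃ k : Nat, c * Real.sqrt d ≤ (k : Real) ∧ ∃ l : Nat, HasTK G k l := by
  exact BTK.final
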